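/- For all constants A ≥ 1 and c₀ > 0 there exist constants 0 < c ≤ C and an integer N₀ (depending only on A and c₀) such that for all integers S ≥ 2 and n with N₀ ≤ n ≤ S^A and n ≥ c₀·S/ln S, in the Poisson sampling model with sample size n: c·S/(n ln n) ≤ sup_{Q ∈ M_S} inf_{L̂} sup_{P ∈ M_S} E_P (L̂(X) − L_1(P,Q))² ≤ C·S/(n ln n), where the infimum is over all estimators L̂ : ℕ^S → ℝ (which may depend on Q). -/

import Mathlib

open scoped BigOperators ENNReal

/-- The Poisson(lam) probability mass function on the nonnegative integers. -/
noncomputable def poissonPMF (lam : ℝ) (k : ℕ) : ℝ :=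
  Real.exp (-lam) * lam ^ k / (Nat.factorial k)

/-- `P` is a probability vector on `{1,…,S}` (an element of `M_S`). -/
def IsDist {S : ℕ} (p : Fin S → ℝ) : Prop :=
  (∀ i, 0 ≤ p i) ∧ ∑ i, p i = 1

/-- Joint pmf of `S` independent coordinates `X_i ~ Poisson(n p_i)` (Poisson sampling model). -/
noncomputable def prodPMF {S : ℕ} (n : ℕ) (p : Fin S → ℝ) (x : Fin S → ℕ) : ℝ :=
  ∏ i, poissonPMF (n * p i) (x i)

/-- The `L₁` distance between two vectors. -/
noncomputable def L1dist {S : ℕ} (p q : Fin S → ℝ) : ℝ :=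
  ∑ i, |p i - q i|

/-- The mean squared error `E_P (est(X) - L)²` in the Poisson sampling model, valued in `ℝ≥0∞`. -/
noncomputable def risk {S : ℕ} (n : ℕ) (p : Fin S → ℝ) (L : ℝ) (est : (Fin S → ℕ) → ℝ) : ℝ≥0∞ :=
  ∑' x : Fin S → ℕ, ENNReal.ofReal (prodPMF n p x * (est x - L) ^ 2)

section PartU1

section MRU1
open MeasureTheory Finset

/-- coefficients of the Hermite type estimator -/
noncomputable def mrC (θ : ℝ) (i : ℕ) : ℝ := (-1) ^ i * θ ^ (2 * i) * (i.factorial : ℝ) / ((2 * i).factorial : ℝ)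

noncomputable def mrG (θ : ℝ) (k : ℕ) : ℝ := ∑ i ∈ range (k + 1), (k.choose i : ℝ) * mrC θ i

lemma mr_gauss_integrable (j : ℕ) :
    IntegrableOn (fun t : ℝ => t ^ (2 * j) * Real.exp (-t ^ 2)) (Set.Ioi 0) := by
  have h := integrableOn_rpow_mul_exp_neg_rpow (s := ((2 * j : ℕ) : ℝ)) (p := 2) (by
    have : (0:ℝ) ≤ ((2 * j : ℕ) : ℝ) := by positivity
    linarith) (by norm_num)
  refine h.congr_fun (fun t ht => ?_) measurableSet_Ioi
  simp only [Real.rpow_natCast]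
  norm_cast

noncomputable def mrI (j : ℕ) : ℝ := ∫ t in Set.Ioi (0:ℝ), t ^ (2 * j) * Real.exp (-t ^ 2)

lemma mrI_eq (j : ℕ) : mrI j = 1 / 2 * Real.Gamma (j + 1 / 2) := by
  have h := integral_rpow_mul_exp_neg_rpow (p := 2) (q := ((2 * j : ℕ) : ℝ)) (by norm_num) (by
    have : (0:ℝ) ≤ ((2 * j : ℕ) : ℝ) := by positivity
    linarith)
  rw [mrI]
  have e : ((((2 * j : ℕ) : ℝ)) + 1) / 2 = (j : ℝ) + 1 / 2 := by push_cast; ring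
  rw [e] at h
  rw [← h]
  refine setIntegral_congr_fun measurableSet_Ioi (fun t ht => ?_)
  simp only [Real.rpow_natCast]
  norm_cast

lemma mrI_pos (j : ℕ) : 0 < mrI j := by
  rw [mrI_eq]
  have : 0 < Real.Gamma (j + 1 / 2) := Real.Gamma_pos_of_pos (by positivity)
  positivity

lemma mrI_succ (j : ℕ) : mrI (j + 1) = (j + 1 / 2) * mrI j := by
  rw [mrI_eq, mrI_eq]
  have : ((j + 1 : ℕ) : ℝ) + 1 / 2 = ((j : ℝ) + 1 / 2) + 1 := by push_cast; ring
  rw [this, Real.Gamma_add_one (by positivity)]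
  ring

lemma mrI_closed (j : ℕ) : mrI j = ((2 * j).factorial : ℝ) / (4 ^ j * (j.factorial : ℝ)) * mrI 0 := by
  induction j with
  | zero => simp
  | succ j ih =>
    rw [mrI_succ, ih]
    have : 2 * (j + 1) = 2 * j + 1 + 1 := by ring
    rw [this, Nat.factorial_succ, Nat.factorial_succ, Nat.factorial_succ]
    have h1 : (j.factorial : ℝ) ≠ 0 := by positivity
    push_cast
    field_simp
    ring

lemma mr_re_pow (x t : ℝ) (k : ℕ) :
    (((t : ℂ) + x * Complex.I) ^ (2 * k)).re =
      ∑ j ∈ range (k + 1), (-1) ^ j * ((2 * k).choose (2 * j) : ℝ) * x ^ (2 * j) * t ^ (2 * (k - j)) := by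
  rw [add_comm, add_pow, Complex.re_sum]
  have hs : ∑ j ∈ range (k + 1), (-1) ^ j * ((2 * k).choose (2 * j) : ℝ) * x ^ (2 * j) * t ^ (2 * (k - j))
      = ∑ i ∈ (range (k+1)).image (fun j => 2 * j),
        (((x:ℂ) * Complex.I) ^ i * (t:ℂ) ^ (2 * k - i) * ((2 * k).choose i : ℂ)).re := by
    rw [sum_image (by intro a _ b _ h; simpa using h)]
    refine sum_congr rfl (fun j hj => ?_)
    have h2 : 2 * k - 2 * j = 2 * (k - j) := by omega
    rw [h2, mul_pow, pow_mul Complex.I, Complex.I_sq]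
    have : ((x:ℂ) ^ (2 * j) * (-1) ^ j * (t:ℂ) ^ (2 * (k - j)) * ((2 * k).choose (2 * j) : ℂ))
      = (((-1) ^ j * ((2 * k).choose (2 * j) : ℝ) * x ^ (2 * j) * t ^ (2 * (k - j)) : ℝ) : ℂ) := by
      push_cast; ring
    rw [this, Complex.ofReal_re]
  rw [hs]
  symm
  apply sum_subset
  · intro i hi
    simp only [mem_image, mem_range] at hi ⊢
    omega
  · intro i hi hni
    have hodd : Odd i := by
      by_contra h
      rw [Nat.not_odd_iff_even] at h
      obtain ⟨r, hr⟩ := h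
      apply hni
      simp only [mem_image, mem_range] at hi ⊢
      exact ⟨r, by omega, by omega⟩
    obtain ⟨r, hr⟩ := hodd
    rw [hr, mul_pow, pow_succ Complex.I, pow_mul Complex.I, Complex.I_sq]
    have : ((x:ℂ) ^ (2 * r + 1) * ((-1) ^ r * Complex.I) * (t:ℂ) ^ (2 * k - (2 * r + 1)) * ((2 * k).choose (2 * r + 1) : ℂ))
      = (((-1) ^ r * ((2 * k).choose (2 * r + 1) : ℝ) * x ^ (2 * r + 1) * t ^ (2 * k - (2 * r + 1)) : ℝ) : ℂ) * Complex.I := by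
      push_cast; ring
    rw [this]
    rw [Complex.mul_re, Complex.ofReal_im, Complex.I_re]; ring

lemma mr_re_pow_abs (x t : ℝ) (k : ℕ) :
    |∑ j ∈ range (k + 1), (-1) ^ j * ((2 * k).choose (2 * j) : ℝ) * x ^ (2 * j) * t ^ (2 * (k - j))|
      ≤ ∑ j ∈ range (k + 1), (k.choose j : ℝ) * x ^ (2 * j) * t ^ (2 * (k - j)) := by
  rw [← mr_re_pow]
  refine (Complex.abs_re_le_norm _).trans ?_
  rw [norm_pow, pow_mul, Complex.norm_add_mul_I, Real.sq_sqrt (by positivity), add_comm, add_pow]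
  apply le_of_eq
  refine sum_congr rfl (fun j hj => ?_)
  rw [← pow_mul, ← pow_mul]; ring

lemma mr_int_sum (c : ℕ → ℝ) (x : ℝ) (k : ℕ) :
    ∫ t in Set.Ioi (0:ℝ), (∑ j ∈ range (k + 1), c j * x ^ (2 * j) * t ^ (2 * (k - j))) * Real.exp (-t^2)
      = ∑ j ∈ range (k + 1), c j * x ^ (2 * j) * mrI (k - j) := by
  simp only [sum_mul]
  rw [integral_finsetSum]
  · refine sum_congr rfl (fun j hj => ?_)
    rw [mrI, ← integral_const_mul]
    congr 1; ext t; ring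
  · intro j hj
    have := (mr_gauss_integrable (k - j)).const_mul (c j * x ^ (2 * j))
    refine this.congr (Filter.Eventually.of_forall (fun t => ?_))
    simp only; ring

lemma mr_int_sum_integrable (c : ℕ → ℝ) (x : ℝ) (k : ℕ) :
    IntegrableOn (fun t => (∑ j ∈ range (k + 1), c j * x ^ (2 * j) * t ^ (2 * (k - j))) * Real.exp (-t^2)) (Set.Ioi (0:ℝ)) := by
  simp only [sum_mul]
  apply integrable_finsetSum
  intro j hj
  have := (mr_gauss_integrable (k - j)).const_mul (c j * x ^ (2 * j))
  refine this.congr (Filter.Eventually.of_forall (fun t => ?_))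
  simp only; ring

lemma mr_moment_ineq (x : ℝ) (k : ℕ) :
    |∑ j ∈ range (k + 1), ((-1) ^ j * ((2 * k).choose (2 * j) : ℝ)) * x ^ (2 * j) * mrI (k - j)|
      ≤ ∑ j ∈ range (k + 1), (k.choose j : ℝ) * x ^ (2 * j) * mrI (k - j) := by
  rw [← mr_int_sum, ← mr_int_sum, ← Real.norm_eq_abs]
  refine norm_integral_le_of_norm_le (mr_int_sum_integrable _ _ _) (Filter.Eventually.of_forall (fun t => ?_))
  rw [norm_mul, Real.norm_eq_abs, Real.norm_eq_abs, abs_of_pos (Real.exp_pos _)]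
  exact mul_le_mul_of_nonneg_right (mr_re_pow_abs x t k) (Real.exp_pos _).le

lemma mr_ratio (k j : ℕ) (hj : j ≤ k) :
    (k.choose j : ℝ) * mrI (k - j) ≤ 2 ^ j / (j.factorial : ℝ) * mrI k := by
  induction j with
  | zero => simp
  | succ j ih =>
    have ih := ih (by omega)
    obtain ⟨r, rfl⟩ : ∃ r, k = j + 1 + r := ⟨k - (j+1), by omega⟩
    have e1 : j + 1 + r - j = r + 1 := by omega
    have e2 : j + 1 + r - (j + 1) = r := by omega
    rw [e1, mrI_succ] at ih
    rw [e2]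
    have hc : ((j + 1 + r).choose (j + 1) : ℝ) * (j + 1) = ((j + 1 + r).choose j : ℝ) * (r + 1) := by
      have := Nat.choose_succ_right_eq (j + 1 + r) j
      rw [e1] at this
      exact_mod_cast this
    have hI := mrI_pos r
    have hc0 : (0:ℝ) ≤ ((j + 1 + r).choose j : ℝ) := by positivity
    have key : ((j + 1 + r).choose (j + 1) : ℝ) * mrI r * (j + 1) ≤ 2 * (((j + 1 + r).choose j : ℝ) * ((r + 1 / 2) * mrI r)) := by
      have : ((j + 1 + r).choose (j + 1) : ℝ) * mrI r * (j + 1) = ((j + 1 + r).choose j : ℝ) * (r + 1) * mrI r := by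
        rw [← hc]; ring
      rw [this]
      have hr : (0:ℝ) ≤ r := by positivity
      have : ((j + 1 + r).choose j : ℝ) * (r + 1) * mrI r ≤ ((j + 1 + r).choose j : ℝ) * (2 * r + 1) * mrI r := by
        gcongr; linarith
      linarith
    have hj1 : (0:ℝ) < j + 1 := by positivity
    have : ((j + 1 + r).choose (j + 1) : ℝ) * mrI r * (j + 1) ≤ 2 * (2 ^ j / (j.factorial : ℝ) * mrI (j + 1 + r)) := by
      linarith
    rw [Nat.factorial_succ]
    rw [← mul_le_mul_iff_of_pos_right hj1]
    refine this.trans (le_of_eq ?_)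
    have : (j.factorial : ℝ) ≠ 0 := by positivity
    push_cast
    field_simp
    ring

lemma mrG_bound (θ : ℝ) (k : ℕ) : |mrG θ k| ≤ Real.exp (θ ^ 2 / 2) := by
  have hG : mrG θ k * mrI k = ∑ j ∈ range (k + 1), ((-1) ^ j * ((2 * k).choose (2 * j) : ℝ)) * (θ/2) ^ (2 * j) * mrI (k - j) := by
    rw [mrG, sum_mul]
    refine sum_congr rfl (fun j hj => ?_)
    have hj : j ≤ k := by simpa [Nat.lt_succ_iff] using hj
    rw [mrI_closed k, mrI_closed (k - j), mrC, Nat.cast_choose ℝ hj, Nat.cast_choose ℝ (show 2 * j ≤ 2 * k by omega)]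
    have e : 2 * k - 2 * j = 2 * (k - j) := by omega
    rw [e]
    obtain ⟨r, rfl⟩ : ∃ r, k = j + r := ⟨k - j, by omega⟩
    have e2 : j + r - j = r := by omega
    rw [e2]
    have h1 : (j.factorial : ℝ) ≠ 0 := by positivity
    have h2 : (r.factorial : ℝ) ≠ 0 := by positivity
    have h3 : ((2*r).factorial : ℝ) ≠ 0 := by positivity
    have h4 : ((2*j).factorial : ℝ) ≠ 0 := by positivity
    have h5 : ((j+r).factorial : ℝ) ≠ 0 := by positivity
    rw [div_pow, pow_mul 2 2 j, pow_add]
    norm_num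
    field_simp
  have hI := mrI_pos k
  rw [← mul_le_mul_iff_of_pos_right hI]
  rw [← abs_of_pos hI, ← abs_mul, abs_of_pos hI, hG]
  refine (mr_moment_ineq _ _).trans ?_
  have h1 : ∑ j ∈ range (k + 1), (k.choose j : ℝ) * (θ/2) ^ (2 * j) * mrI (k - j)
      ≤ ∑ j ∈ range (k + 1), ((θ^2/2) ^ j / (j.factorial : ℝ)) * mrI k := by
    refine sum_le_sum (fun j hj => ?_)
    have hj : j ≤ k := by simpa [Nat.lt_succ_iff] using hj
    have := mr_ratio k j hj
    have hθ : (0:ℝ) ≤ (θ/2) ^ (2 * j) := by rw [pow_mul]; positivity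
    calc (k.choose j : ℝ) * (θ/2) ^ (2 * j) * mrI (k - j) = (θ/2) ^ (2 * j) * ((k.choose j : ℝ) * mrI (k - j)) := by ring
      _ ≤ (θ/2) ^ (2 * j) * (2 ^ j / (j.factorial : ℝ) * mrI k) := by gcongr
      _ = _ := by
        rw [pow_mul]
        have : (θ ^ 2 / 2) = (θ/2)^2 * 2 := by ring
        rw [this, mul_pow]; ring
  refine h1.trans ?_
  rw [← sum_mul]
  refine mul_le_mul_of_nonneg_right ?_ hI.le
  exact Real.sum_le_exp_of_nonneg (by positivity) _
end MRU1

end PartU1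

section PartU2

section MRU2
open MeasureTheory Finset

lemma mr_pois_nonneg {l : ℝ} (hl : 0 ≤ l) (k : ℕ) : 0 ≤ poissonPMF l k := by
  unfold poissonPMF; positivity

lemma mr_pois_gen (l z : ℝ) :
    HasSum (fun k => poissonPMF l k * z ^ k) (Real.exp (l * (z - 1))) := by
  have h := (NormedSpace.expSeries_div_hasSum_exp (l * z)).mul_left (Real.exp (-l))
  rw [← Real.exp_eq_exp_ℝ, ← Real.exp_add] at h
  have e : -l + l * z = l * (z - 1) := by ring
  rw [e] at h
  refine h.congr_fun ?_ |> fun h => h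
  intro k
  unfold poissonPMF
  rw [mul_pow]; ring

lemma mr_pois_sum (l : ℝ) : HasSum (poissonPMF l) 1 := by
  simpa using mr_pois_gen l 1

/-- binomial transform -/
lemma mr_pois_binom (l : ℝ) (a : ℕ → ℝ) (s : ℝ)
    (hs : HasSum (fun i => a i * l ^ i / (i.factorial : ℝ)) s)
    (ha : Summable (fun i => ‖a i * l ^ i / (i.factorial : ℝ)‖)) :
    HasSum (fun k => poissonPMF l k * ∑ i ∈ range (k + 1), (k.choose i : ℝ) * a i) s := by
  have h1 : Summable (fun k => ‖l ^ k / (k.factorial : ℝ)‖) :=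
    (NormedSpace.expSeries_div_summable l).norm
  have h := (hasSum_sum_range_mul_of_summable_norm ha h1).mul_left (Real.exp (-l))
  rw [hs.tsum_eq, (NormedSpace.expSeries_div_hasSum_exp l).tsum_eq, ← Real.exp_eq_exp_ℝ] at h
  have e : Real.exp (-l) * (s * Real.exp l) = s := by
    rw [mul_left_comm, ← Real.exp_add]; simp
  rw [e] at h
  refine h.congr_fun ?_ |> fun h => h
  intro k
  unfold poissonPMF
  rw [mul_sum, mul_sum]
  refine sum_congr rfl (fun i hi => ?_)
  have hi : i ≤ k := by simpa [Nat.lt_succ_iff] using hi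
  rw [Nat.cast_choose ℝ hi]
  have h1 : (i.factorial : ℝ) ≠ 0 := by positivity
  have h2 : (k.factorial : ℝ) ≠ 0 := by positivity
  have h3 : ((k-i).factorial : ℝ) ≠ 0 := by positivity
  have : l ^ k = l ^ i * l ^ (k - i) := by rw [← pow_add]; congr 1; omega
  rw [this]
  field_simp

noncomputable def mrg (θ : ℝ) (k : ℕ) : ℝ := ∑ i ∈ range k, (k.choose (i + 1) : ℝ) * mrC θ i

lemma mrg_succ (θ : ℝ) (k : ℕ) : mrg θ (k + 1) = mrg θ k + mrG θ k := by
  have h : mrg θ k = ∑ i ∈ range (k + 1), (k.choose (i + 1) : ℝ) * mrC θ i := by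
    rw [sum_range_succ]; simp [mrg]
  rw [h, mrg, mrG, ← sum_add_distrib]
  refine sum_congr rfl (fun i hi => ?_)
  rw [Nat.choose_succ_succ]; push_cast; ring

lemma mr_int_series (θ y : ℝ) (hy : 0 ≤ y) :
    HasSum (fun i => mrC θ i * (y ^ 2) ^ (i + 1) / ((i + 1).factorial : ℝ))
      (∫ u in (0:ℝ)..y, 2 * u * Real.cos (θ * u)) ∧
    Summable (fun i => ‖mrC θ i * (y ^ 2) ^ (i + 1) / ((i + 1).factorial : ℝ)‖) := by
  have hcosh := (Real.hasSum_cosh (θ * y)).summable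
  have e : ∀ i : ℕ, (∫ u in (0:ℝ)..y, 2 * u * ((-1) ^ i * (θ * u) ^ (2 * i) / ((2 * i).factorial : ℝ)))
      = mrC θ i * (y ^ 2) ^ (i + 1) / ((i + 1).factorial : ℝ) := by
    intro i
    have : ∀ u : ℝ, 2 * u * ((-1) ^ i * (θ * u) ^ (2 * i) / ((2 * i).factorial : ℝ)) =
      (2 * (-1) ^ i * θ ^ (2 * i) / ((2 * i).factorial : ℝ)) * u ^ (2 * i + 1) := by
      intro u; rw [mul_pow, pow_succ]; ring
    simp_rw [this]
    rw [intervalIntegral.integral_const_mul, integral_pow, mrC, Nat.factorial_succ]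
    have h1 : (i.factorial : ℝ) ≠ 0 := by positivity
    have h2 : ((2*i).factorial : ℝ) ≠ 0 := by positivity
    push_cast
    field_simp
    rw [zero_pow (by omega)]
    ring
  constructor
  · simp_rw [← e]
    apply intervalIntegral.hasSum_integral_of_dominated_convergence
      (fun i _ => 2 * y * ((θ * y) ^ (2 * i) / ((2 * i).factorial : ℝ)))
    · intro i
      exact (by fun_prop : Continuous fun u : ℝ => 2 * u * ((-1) ^ i * (θ * u) ^ (2 * i) / ((2 * i).factorial : ℝ))).aestronglyMeasurable
    · intro i
      refine Filter.Eventually.of_forall (fun u hu => ?_)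
      rw [Set.uIoc_of_le hy] at hu
      have hu0 : 0 ≤ u := hu.1.le
      have huy := hu.2
      rw [norm_mul, norm_div, norm_mul ((-1) ^ i), norm_pow (-1), norm_neg, norm_one, one_pow, one_mul, Real.norm_of_nonneg (by positivity : (0:ℝ) ≤ 2 * u),
        Real.norm_of_nonneg (by rw [pow_mul]; positivity), Real.norm_of_nonneg (by positivity)]
      have : (θ * u) ^ (2 * i) ≤ (θ * y) ^ (2 * i) := by
        rw [mul_pow, mul_pow]
        have : 0 ≤ θ ^ (2 * i) := by rw [pow_mul]; positivity
        gcongr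
      have h9 : 0 ≤ (θ * u) ^ (2 * i) := by rw [pow_mul]; positivity
      gcongr
    · exact Filter.Eventually.of_forall (fun u _ => hcosh.mul_left _)
    · exact intervalIntegrable_const
    · exact Filter.Eventually.of_forall (fun u _ => (Real.hasSum_cos (θ * u)).mul_left _)
  · refine Summable.of_nonneg_of_le (fun i => norm_nonneg _) (fun i => ?_) (hcosh.mul_left (y ^ 2))
    unfold mrC
    have h0 : 0 ≤ θ ^ (2 * i) := by rw [pow_mul]; positivity
    rw [norm_div, norm_mul, norm_div, norm_mul, norm_mul, norm_pow, norm_neg, norm_one, one_pow, one_mul,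
      Real.norm_of_nonneg h0, Real.norm_of_nonneg (by positivity), Real.norm_of_nonneg (by positivity),
      Real.norm_of_nonneg (by positivity), Real.norm_of_nonneg (by positivity), Nat.factorial_succ]
    have h1 : (0:ℝ) < (i.factorial : ℝ) := by positivity
    have h2 : (0:ℝ) < ((2*i).factorial : ℝ) := by positivity
    push_cast
    have : θ ^ (2 * i) * (i.factorial : ℝ) / ((2 * i).factorial : ℝ) * (y ^ 2) ^ (i + 1) / ((i + 1) * (i.factorial : ℝ))
      = (y ^ 2 * ((θ * y) ^ (2 * i) / ((2 * i).factorial : ℝ))) / (i + 1) := by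
      field_simp
      rw [mul_pow]; ring
    rw [this]
    apply div_le_self
    · have : 0 ≤ (θ * y) ^ (2 * i) := by rw [pow_mul]; positivity
      positivity
    · have : (0:ℝ) ≤ i := by positivity
      linarith

lemma mrg_mean (θ y : ℝ) (hy : 0 ≤ y) :
    HasSum (fun k => poissonPMF (y ^ 2) k * mrg θ k) (∫ u in (0:ℝ)..y, 2 * u * Real.cos (θ * u)) := by
  obtain ⟨h1, h2⟩ := mr_int_series θ y hy
  let a : ℕ → ℝ := fun i => if i = 0 then 0 else mrC θ (i - 1)
  have := mr_pois_binom (y ^ 2) a (∫ u in (0:ℝ)..y, 2 * u * Real.cos (θ * u))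
    (by
      rw [← hasSum_nat_add_iff' 1]
      simpa [a] using h1)
    (by
      rw [← summable_nat_add_iff 1]
      simpa [a] using h2)
  refine this.congr_fun ?_ |> fun h => h
  intro k
  congr 1
  rw [sum_range_succ', mrg]
  simp [a]

lemma mr_pois_mean (l : ℝ) : HasSum (fun k => poissonPMF l k * (k : ℝ)) l := by
  have := mr_pois_binom l (fun i => if i = 1 then 1 else 0) l
    (by
      convert hasSum_single (f := fun i : ℕ => (if i = 1 then (1:ℝ) else 0) * l ^ i / (i.factorial : ℝ)) 1 ?_ using 1
      · simp
      · intro i hi; simp [hi])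
    (by
      apply summable_of_ne_finset_zero (s := {1})
      intro i hi
      simp at hi
      simp [hi])
  refine this.congr_fun ?_ |> fun h => h
  intro k
  congr 1
  rcases k with _ | k
  · simp
  · simp

lemma mr_pois_sq (l : ℝ) : HasSum (fun k => poissonPMF l k * (k : ℝ) ^ 2) (l ^ 2 + l) := by
  have h2 := mr_pois_binom l (fun i => if i = 2 then 2 else 0) (l ^ 2)
    (by
      convert hasSum_single (f := fun i : ℕ => (if i = 2 then (2:ℝ) else 0) * l ^ i / (i.factorial : ℝ)) 2 ?_ using 1
      · simp
      · intro i hi; simp [hi])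
    (by
      apply summable_of_ne_finset_zero (s := {2})
      intro i hi
      simp at hi
      simp [hi])
  refine (h2.add (mr_pois_mean l)).congr_fun ?_ |> fun h => h
  intro k
  rw [← mul_add]
  congr 1
  have : ∀ k : ℕ, ∑ x ∈ range (k + 1), (k.choose x : ℝ) * (if x = 2 then 2 else 0) = (k:ℝ) * (k - 1) := by
    intro k
    simp only [mul_ite, mul_zero, sum_ite_eq', mem_range]
    split_ifs with h
    · rw [Nat.cast_choose_two]; ring
    · have : k = 0 ∨ k = 1 := by omega
      rcases this with rfl | rfl <;> simp
  rw [this]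
  ring

lemma mr_pois_var (l : ℝ) : HasSum (fun k => poissonPMF l k * ((k : ℝ) - l) ^ 2) l := by
  have h := ((mr_pois_sq l).sub ((mr_pois_mean l).mul_left (2 * l))).add ((mr_pois_sum l).mul_left (l ^ 2))
  have e : l ^ 2 + l - 2 * l * l + l ^ 2 * 1 = l := by ring
  rw [e] at h
  refine h.congr_fun ?_ |> fun h => h
  intro k
  ring
end MRU2

end PartU2

section PartU3

section MRU3
open MeasureTheory Finset

noncomputable def mrDc (M : ℕ) (t : ℝ) : ℝ := ∑ a ∈ range M, Real.cos (a * t)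
noncomputable def mrDs (M : ℕ) (t : ℝ) : ℝ := ∑ a ∈ range M, Real.sin (a * t)
noncomputable def mrD (M : ℕ) (t : ℝ) : ℝ := mrDc M t ^ 2 + mrDs M t ^ 2

lemma mrD_nonneg (M : ℕ) (t : ℝ) : 0 ≤ mrD M t := by unfold mrD; positivity

lemma mrDc_closed (M : ℕ) (t : ℝ) :
    mrDc M t * (2 * Real.sin (t/2)) = Real.sin ((M - 1/2) * t) + Real.sin (t/2) := by
  induction M with
  | zero =>
    have : ((0:ℕ) - 1/2 : ℝ) * t = -(t/2) := by push_cast; ring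
    rw [this, Real.sin_neg]; simp [mrDc]
  | succ M ih =>
    rw [mrDc, sum_range_succ, ← mrDc, add_mul, ih]
    have e1 : ((M + 1 : ℕ) - 1/2 : ℝ) * t = M * t + t/2 := by push_cast; ring
    have e2 : ((M : ℝ) - 1/2) * t = M * t - t/2 := by ring
    rw [e1, e2, Real.sin_add, Real.sin_sub]; ring

lemma mrDs_closed (M : ℕ) (t : ℝ) :
    mrDs M t * (2 * Real.sin (t/2)) = Real.cos (t/2) - Real.cos ((M - 1/2) * t) := by
  induction M with
  | zero =>
    have : ((0:ℕ) - 1/2 : ℝ) * t = -(t/2) := by push_cast; ring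
    rw [this, Real.cos_neg]; simp [mrDs]
  | succ M ih =>
    rw [mrDs, sum_range_succ, ← mrDs, add_mul, ih]
    have e1 : ((M + 1 : ℕ) - 1/2 : ℝ) * t = M * t + t/2 := by push_cast; ring
    have e2 : ((M : ℝ) - 1/2) * t = M * t - t/2 := by ring
    rw [e1, e2, Real.cos_add, Real.cos_sub]; ring

lemma mrD_closed (M : ℕ) (t : ℝ) : mrD M t * Real.sin (t/2) ^ 2 = Real.sin (M * t / 2) ^ 2 := by
  have h1 := mrDc_closed M t
  have h2 := mrDs_closed M t
  have h3 : 4 * (mrD M t * Real.sin (t/2) ^ 2) = (mrDc M t * (2 * Real.sin (t/2))) ^ 2 + (mrDs M t * (2 * Real.sin (t/2))) ^ 2 := by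
    unfold mrD; ring
  rw [h1, h2] at h3
  have h4 : Real.cos (M * t) = Real.cos ((M - 1/2) * t) * Real.cos (t/2) - Real.sin ((M - 1/2) * t) * Real.sin (t/2) := by
    rw [← Real.cos_add]; congr 1; ring
  have h5 : Real.cos (M * t) = 1 - 2 * Real.sin (M * t / 2) ^ 2 := by
    have : (M:ℝ) * t = 2 * (M * t / 2) := by ring
    rw [this, Real.cos_two_mul, Real.cos_sq']
    have : 2 * ((M:ℝ) * t / 2) / 2 = M * t / 2 := by ring
    rw [this]; ring
  have h6 := Real.sin_sq_add_cos_sq ((M - 1/2) * t)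
  have h7 := Real.sin_sq_add_cos_sq (t/2)
  nlinarith

lemma mrD_sum (M : ℕ) (t : ℝ) :
    mrD M t = ∑ p ∈ range M ×ˢ range M, Real.cos (((p.1:ℝ) - p.2) * t) := by
  rw [sum_product, mrD, sq, sq, mrDc, mrDs, sum_mul_sum, sum_mul_sum, ← sum_add_distrib]
  refine sum_congr rfl (fun a _ => ?_)
  rw [← sum_add_distrib]
  refine sum_congr rfl (fun b _ => ?_)
  rw [sub_mul, Real.cos_sub]

lemma mrD_sin_sum (M : ℕ) (t : ℝ) :
    ∑ p ∈ range M ×ˢ range M, Real.sin (((p.1:ℝ) - p.2) * t) = 0 := by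
  have h : ∑ p ∈ range M ×ˢ range M, Real.sin (((p.1:ℝ) - p.2) * t) =
    - ∑ p ∈ range M ×ˢ range M, Real.sin (((p.1:ℝ) - p.2) * t) := by
    conv_lhs => rw [sum_product_right]
    rw [sum_product, ← sum_neg_distrib]
    refine sum_congr rfl (fun a _ => ?_)
    rw [← sum_neg_distrib]
    refine sum_congr rfl (fun b _ => ?_)
    rw [← Real.sin_neg]; congr 1; ring
  linarith

def mrE (x : (ℕ × ℕ) × (ℕ × ℕ)) : ℤ := ((x.1.1 : ℤ) - x.1.2) + ((x.2.1 : ℤ) - x.2.2)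

def mrT (M : ℕ) : Finset ((ℕ × ℕ) × (ℕ × ℕ)) := (range M ×ˢ range M) ×ˢ (range M ×ˢ range M)

lemma mrJ_sum (M : ℕ) (t : ℝ) :
    mrD M t ^ 2 = ∑ x ∈ mrT M, Real.cos ((mrE x : ℝ) * t) := by
  have : ∀ x : (ℕ × ℕ) × (ℕ × ℕ), Real.cos ((mrE x : ℝ) * t) =
      Real.cos (((x.1.1:ℝ) - x.1.2) * t) * Real.cos (((x.2.1:ℝ) - x.2.2) * t)
      - Real.sin (((x.1.1:ℝ) - x.1.2) * t) * Real.sin (((x.2.1:ℝ) - x.2.2) * t) := by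
    intro x
    rw [← Real.cos_add]; congr 1; unfold mrE; push_cast; ring
  simp_rw [this]
  have hc : ∑ x ∈ mrT M, Real.cos (((x.1.1:ℝ) - x.1.2) * t) * Real.cos (((x.2.1:ℝ) - x.2.2) * t) = mrD M t * mrD M t := by
    rw [mrT, sum_product, mrD_sum, sum_mul_sum]
  have hs : ∑ x ∈ mrT M, Real.sin (((x.1.1:ℝ) - x.1.2) * t) * Real.sin (((x.2.1:ℝ) - x.2.2) * t) = 0 * 0 := by
    rw [mrT, sum_product, ← mrD_sin_sum M t, sum_mul_sum]
  rw [sum_sub_distrib, hc, hs]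
  ring

lemma mrE_bound {M : ℕ} {x} (hx : x ∈ mrT M) : |(mrE x : ℝ)| ≤ 2 * M := by
  simp only [mrT, mem_product, mem_range] at hx
  have : |mrE x| ≤ 2 * (M:ℤ) := by
    unfold mrE; rw [abs_le]; omega
  exact_mod_cast this

lemma mrD_le (M : ℕ) (t : ℝ) : mrD M t ≤ M ^ 2 := by
  rw [mrD_sum]
  refine (sum_le_sum (fun p _ => Real.cos_le_one _)).trans ?_
  simp [sq]

lemma mrD_continuous (M : ℕ) : Continuous (mrD M) := by
  unfold mrD mrDc mrDs; fun_prop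

lemma mrD_even (M : ℕ) (t : ℝ) : mrD M (-t) = mrD M t := by
  unfold mrD mrDc mrDs; simp

lemma mrD_bound (M : ℕ) {t : ℝ} (h0 : 0 < t) (h1 : t ≤ Real.pi) : mrD M t ≤ (Real.pi / t) ^ 2 := by
  have hc := mrD_closed M t
  have hs : t / Real.pi ≤ Real.sin (t/2) := by
    have := Real.mul_le_sin (x := t/2) (by positivity) (by linarith)
    refine le_trans (le_of_eq ?_) this
    field_simp
  have hp := Real.pi_pos
  have h2 : (t / Real.pi) ^ 2 ≤ Real.sin (t/2) ^ 2 := by gcongr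
  have h3 : mrD M t * (t / Real.pi) ^ 2 ≤ 1 := by
    calc mrD M t * (t / Real.pi) ^ 2 ≤ mrD M t * Real.sin (t/2) ^ 2 := by
          gcongr; exact mrD_nonneg _ _
      _ ≤ 1 := by rw [hc]; exact Real.sin_sq_le_one _
  have e : (Real.pi / t) ^ 2 = 1 / (t / Real.pi) ^ 2 := by field_simp
  rw [e, le_div_iff₀ (by positivity)]
  exact h3

lemma mrD_lower (M : ℕ) (hM : 1 ≤ M) {t : ℝ} (ht : |t| ≤ 1 / M) : (M / 2 : ℝ) ^ 2 ≤ mrD M t := by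
  have hM' : (0:ℝ) < M := by exact_mod_cast hM
  have : (M / 2 : ℝ) ≤ mrDc M t := by
    have : ∑ a ∈ range M, (1/2 : ℝ) ≤ mrDc M t := by
      refine sum_le_sum (fun a ha => ?_)
      have ha : (a:ℝ) ≤ M := by exact_mod_cast (mem_range.mp ha).le
      have h1 : |(a:ℝ) * t| ≤ 1 := by
        rw [abs_mul, abs_of_nonneg (by positivity : (0:ℝ) ≤ a)]
        calc (a:ℝ) * |t| ≤ M * (1 / M) := by gcongr
          _ = 1 := by field_simp
      have h2 := Real.one_sub_sq_div_two_le_cos (x := a * t)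
      have h3 : ((a:ℝ) * t) ^ 2 ≤ 1 := by rw [← sq_abs]; nlinarith [abs_nonneg ((a:ℝ) * t)]
      linarith
    simp at this
    linarith
  unfold mrD
  nlinarith [sq_nonneg (mrDs M t)]

noncomputable def mrGam (M : ℕ) : ℝ := ∫ t in (-Real.pi)..Real.pi, mrD M t ^ 2

lemma mrGam_lower (M : ℕ) (hM : 1 ≤ M) : (M:ℝ) ^ 3 / 8 ≤ mrGam M := by
  have hM' : (1:ℝ) ≤ M := by exact_mod_cast hM
  have hp : 1 / (M:ℝ) ≤ Real.pi := by
    have : 1 / (M:ℝ) ≤ 1 := by rw [div_le_one (by linarith)]; exact hM'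
    linarith [Real.pi_gt_three]
  have h0 : (0:ℝ) < 1 / M := by positivity
  have hintg : ∀ a b : ℝ, IntervalIntegrable (fun t => mrD M t ^ 2) volume a b :=
    fun a b => ((mrD_continuous M).pow 2).intervalIntegrable a b
  have h1 : ∫ t in (-(1/(M:ℝ)))..(1/M), mrD M t ^ 2 ≤ mrGam M := by
    apply intervalIntegral.integral_mono_interval (by linarith) (by linarith) hp
    · exact Filter.Eventually.of_forall (fun t => by simp only [Pi.zero_apply]; positivity)
    · exact hintg _ _
  refine le_trans ?_ h1
  have h2 : ∫ t in (-(1/(M:ℝ)))..(1/M), ((M / 2 : ℝ) ^ 2) ^ 2 ≤ ∫ t in (-(1/(M:ℝ)))..(1/M), mrD M t ^ 2 := by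
    apply intervalIntegral.integral_mono_on (by linarith) (by simp) (hintg _ _)
    intro t ht
    have : |t| ≤ 1 / M := abs_le.mpr ht
    have := mrD_lower M hM this
    gcongr
  refine le_trans (le_of_eq ?_) h2
  rw [intervalIntegral.integral_const]
  simp only [smul_eq_mul]
  field_simp
  norm_num
end MRU3

end PartU3

section PartU4

section MRU4
open MeasureTheory Finset

noncomputable def mrTl (M : ℕ) (x : ℝ) : ℝ := ∫ t in x..Real.pi, mrD M t ^ 2

lemma mrD2_int (M : ℕ) (a b : ℝ) : IntervalIntegrable (fun t => mrD M t ^ 2) volume a b :=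
  ((mrD_continuous M).pow 2).intervalIntegrable a b

lemma mrTl_refl (M : ℕ) (x : ℝ) : ∫ t in (-Real.pi)..(-x), mrD M t ^ 2 = mrTl M x := by
  rw [mrTl, ← intervalIntegral.integral_comp_neg]
  simp only [mrD_even]

lemma mrTl_anti (M : ℕ) {x y : ℝ} (h : x ≤ y) : mrTl M y ≤ mrTl M x := by
  have : mrTl M x = (∫ t in x..y, mrD M t ^ 2) + mrTl M y := by
    rw [mrTl, mrTl, intervalIntegral.integral_add_adjacent_intervals (mrD2_int _ _ _) (mrD2_int _ _ _)]
  rw [this]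
  have : 0 ≤ ∫ t in x..y, mrD M t ^ 2 :=
    intervalIntegral.integral_nonneg h (fun t _ => by positivity)
  linarith

lemma mrTl_nonneg (M : ℕ) {x : ℝ} (h : x ≤ Real.pi) : 0 ≤ mrTl M x :=
    intervalIntegral.integral_nonneg h (fun t _ => by positivity)

lemma mrTl_zero (M : ℕ) : 2 * mrTl M 0 = mrGam M := by
  have h := mrTl_refl M 0
  rw [mrGam, ← intervalIntegral.integral_add_adjacent_intervals (mrD2_int M _ 0) (mrD2_int M 0 _)]
  rw [neg_zero] at h
  rw [h, mrTl]; ring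

lemma mrTl_bound (M : ℕ) {x : ℝ} (h0 : 0 < x) (h1 : x ≤ Real.pi) : mrTl M x ≤ Real.pi ^ 4 / x ^ 3 := by
  have hnot : (0:ℝ) ∉ Set.uIcc x Real.pi := by
    rw [Set.uIcc_of_le h1]; intro h; exact absurd h.1 (by linarith)
  have hii : IntervalIntegrable (fun t : ℝ => t ^ (-4 : ℤ)) volume x Real.pi := 
    intervalIntegral.intervalIntegrable_zpow (Or.inr hnot)
  have h2 : mrTl M x ≤ ∫ t in x..Real.pi, Real.pi ^ 4 * t ^ (-4 : ℤ) := by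
    apply intervalIntegral.integral_mono_on h1 (mrD2_int _ _ _) (hii.const_mul _)
    intro t ht
    have ht0 : 0 < t := lt_of_lt_of_le h0 ht.1
    have := mrD_bound M ht0 ht.2
    calc mrD M t ^ 2 ≤ ((Real.pi / t) ^ 2) ^ 2 := by gcongr; exact mrD_nonneg _ _
      _ = Real.pi ^ 4 * t ^ (-4 : ℤ) := by
        rw [zpow_neg, show (4:ℤ) = ((4:ℕ):ℤ) from rfl, zpow_natCast]; field_simp
  refine h2.trans ?_
  rw [intervalIntegral.integral_const_mul, integral_zpow (Or.inr ⟨by norm_num, hnot⟩)]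
  have e : ((-4:ℤ) + 1) = -((3:ℕ):ℤ) := by norm_num
  rw [e, zpow_neg, zpow_neg, zpow_natCast, zpow_natCast, div_eq_mul_inv (Real.pi ^ 4)]
  apply mul_le_mul_of_nonneg_left _ (by positivity)
  push_cast
  have hp : 0 < Real.pi := Real.pi_pos
  have a1 : 0 < (Real.pi ^ 3)⁻¹ := by positivity
  have a2 : 0 < (x ^ 3)⁻¹ := by positivity
  rw [div_le_iff_of_neg (by norm_num)]
  linarith

lemma mrTl_kernel (M : ℕ) (hM : 1 ≤ M) {x : ℝ} (h0 : 0 ≤ x) (h1 : x ≤ Real.pi) :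
    2 * mrTl M x / mrGam M ≤ 32 * Real.pi ^ 4 * (1 + (M * x) ^ 2)⁻¹ := by
  have hM' : (1:ℝ) ≤ M := by exact_mod_cast hM
  have hG := mrGam_lower M hM
  have hG0 : 0 < mrGam M := lt_of_lt_of_le (by positivity) hG
  have hp : 1 ≤ Real.pi ^ 4 := one_le_pow₀ (by linarith [Real.pi_gt_three])
  by_cases hx : M * x ≤ 1
  · have : 2 * mrTl M x / mrGam M ≤ 1 := by
      rw [div_le_one hG0, ← mrTl_zero]
      linarith [mrTl_anti M h0]
    refine this.trans ?_
    rw [← div_eq_mul_inv, le_div_iff₀ (by positivity)]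
    have : (M * x) ^ 2 ≤ 1 := pow_le_one₀ (by positivity) hx
    linarith
  · push Not at hx
    have hx0 : 0 < x := by
      rcases h0.lt_or_eq with h | h
      · exact h
      · rw [← h] at hx; norm_num at hx
    have hb := mrTl_bound M hx0 h1
    set z := (M:ℝ) * x with hz
    have e1 : 2 * mrTl M x / mrGam M ≤ 2 * (Real.pi ^ 4 / x ^ 3) / ((M:ℝ) ^ 3 / 8) := by
      gcongr
    refine e1.trans ?_
    have e2 : 2 * (Real.pi ^ 4 / x ^ 3) / ((M:ℝ) ^ 3 / 8) = 16 * Real.pi ^ 4 / z ^ 3 := by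
      rw [hz]; field_simp; norm_num
    rw [e2, ← div_eq_mul_inv, div_le_div_iff₀ (by positivity) (by positivity)]
    have e3 : 1 + z ^ 2 ≤ 2 * z ^ 3 := by nlinarith [sq_nonneg z, sq_nonneg (z-1)]
    nlinarith

noncomputable def mrA (M : ℕ) (β : ℝ) (x : (ℕ × ℕ) × (ℕ × ℕ)) : ℝ :=
  (∫ s in (-β)..β, Real.cos ((mrE x : ℝ) * s)) / mrGam M

noncomputable def mrR (M : ℕ) (β φ : ℝ) : ℝ := ∑ x ∈ mrT M, mrA M β x * Real.cos ((mrE x : ℝ) * φ)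

lemma mr_cos_shift (e β φ : ℝ) :
    (∫ s in (-β)..β, Real.cos (e * s)) * Real.cos (e * φ) = ∫ t in (φ-β)..(φ+β), Real.cos (e * t) := by
  have h1 : ∫ t in (φ-β)..(φ+β), Real.cos (e * t) = ∫ s in (-β)..β, Real.cos (e * (φ + s)) := by
    rw [intervalIntegral.integral_comp_add_left (fun t => Real.cos (e * t))]
    congr 1
  have h2 : ∫ s in (-β)..β, Real.sin (e * s) = 0 := by
    have h := intervalIntegral.integral_comp_neg (a := -β) (b := β) (fun s => Real.sin (e * s))
    simp only [neg_neg, mul_neg, Real.sin_neg, intervalIntegral.integral_neg] at h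
    linarith
  rw [h1]
  have h3 : ∀ s, Real.cos (e * (φ + s)) = Real.cos (e * s) * Real.cos (e * φ) - Real.sin (e * s) * Real.sin (e * φ) := by
    intro s; rw [mul_add, Real.cos_add]; ring
  simp_rw [h3]
  rw [intervalIntegral.integral_sub, intervalIntegral.integral_mul_const, intervalIntegral.integral_mul_const, h2]
  · ring
  · apply Continuous.intervalIntegrable; fun_prop
  · apply Continuous.intervalIntegrable; fun_prop

lemma mrR_eq (M : ℕ) (β φ : ℝ) : mrR M β φ = (∫ t in (φ-β)..(φ+β), mrD M t ^ 2) / mrGam M := by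
  simp_rw [mrJ_sum]
  rw [intervalIntegral.integral_finsetSum, sum_div, mrR]
  · refine sum_congr rfl (fun x _ => ?_)
    rw [← mr_cos_shift, mrA]; ring
  · intro x _
    apply Continuous.intervalIntegrable; fun_prop

lemma mrR_lt (M : ℕ) (hM : 1 ≤ M) {β φ : ℝ} (hβ : 0 ≤ β) (hβ1 : β ≤ 1) (hφ : 0 ≤ φ) (h : φ ≤ β) :
    |mrR M β φ - 1| ≤ 32 * Real.pi ^ 4 * (1 + (M * (φ - β)) ^ 2)⁻¹ := by
  have hG := mrGam_lower M hM
  have hM' : (1:ℝ) ≤ M := by exact_mod_cast hM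
  have hG0 : 0 < mrGam M := lt_of_lt_of_le (by positivity) hG
  have hp := Real.pi_gt_three
  have h1 : mrGam M = mrTl M (β - φ) + (∫ t in (φ-β)..(φ+β), mrD M t ^ 2) + mrTl M (φ + β) := by
    rw [← mrTl_refl M (β - φ), neg_sub, intervalIntegral.integral_add_adjacent_intervals (mrD2_int _ _ _) (mrD2_int _ _ _), mrTl,
      intervalIntegral.integral_add_adjacent_intervals (mrD2_int _ _ _) (mrD2_int _ _ _), mrGam]
  have h2 : mrR M β φ - 1 = -((mrTl M (β - φ) + mrTl M (φ + β)) / mrGam M) := by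
    rw [mrR_eq]; field_simp; linarith
  have n1 := mrTl_nonneg M (x := β - φ) (by linarith)
  have n2 := mrTl_nonneg M (x := φ + β) (by linarith)
  have n3 := mrTl_anti M (x := β - φ) (y := φ + β) (by linarith)
  rw [h2, abs_neg, abs_of_nonneg (by positivity)]
  have := mrTl_kernel M hM (x := β - φ) (by linarith) (by linarith)
  have e : ((M:ℝ) * (φ - β)) ^ 2 = (M * (β - φ)) ^ 2 := by ring
  rw [e]
  refine le_trans ?_ this
  gcongr; linarith

lemma mrR_gt (M : ℕ) (hM : 1 ≤ M) {β φ : ℝ} (hβ : 0 ≤ β) (hφ1 : φ ≤ 1) (h : β ≤ φ) :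
    |mrR M β φ| ≤ 32 * Real.pi ^ 4 * (1 + (M * (φ - β)) ^ 2)⁻¹ := by
  have hG := mrGam_lower M hM
  have hM' : (1:ℝ) ≤ M := by exact_mod_cast hM
  have hG0 : 0 < mrGam M := lt_of_lt_of_le (by positivity) hG
  have hp := Real.pi_gt_three
  have h1 : mrTl M (φ - β) = (∫ t in (φ-β)..(φ+β), mrD M t ^ 2) + mrTl M (φ + β) := by
    rw [mrTl, mrTl,
      intervalIntegral.integral_add_adjacent_intervals (mrD2_int _ _ _) (mrD2_int _ _ _)]
  have n1 := mrTl_nonneg M (x := φ - β) (by linarith)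
  have n2 := mrTl_nonneg M (x := φ + β) (by linarith)
  have n3 : 0 ≤ ∫ t in (φ-β)..(φ+β), mrD M t ^ 2 :=
    intervalIntegral.integral_nonneg (by linarith) (fun t _ => by positivity)
  rw [mrR_eq, abs_of_nonneg (by positivity)]
  have := mrTl_kernel M hM (x := φ - β) (by linarith) (by linarith)
  refine le_trans ?_ this
  gcongr; linarith

lemma mr_arctan_bound (M : ℕ) (hM : 1 ≤ M) (β a b : ℝ) :
    ∫ u in a..b, (1 + (M * (u - β)) ^ 2)⁻¹ ≤ Real.pi / M := by
  have hM' : (0:ℝ) < M := by exact_mod_cast hM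
  have h1 := intervalIntegral.integral_comp_mul_sub (a := a) (b := b) (fun v => (1 + v ^ 2)⁻¹) hM'.ne' (M * β)
  have e : ∀ u, (M:ℝ) * (u - β) = M * u - M * β := fun u => by ring
  simp_rw [e]
  rw [h1, integral_inv_one_add_sq, smul_eq_mul, inv_mul_eq_div]
  gcongr
  have a1 := Real.arctan_lt_pi_div_two (M * b - M * β)
  have a2 := Real.neg_pi_div_two_lt_arctan (M * a - M * β)
  linarith

lemma mrR_continuous (M : ℕ) (β : ℝ) : Continuous (mrR M β) := by
  unfold mrR; fun_prop

lemma mr_weighted (M : ℕ) (hM : 1 ≤ M) (β a b y K : ℝ) (f : ℝ → ℝ) (hf : Continuous f) (ha : 0 ≤ a) (hab : a ≤ b) (hby : b ≤ y) (hK : 0 ≤ K)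
    (h : ∀ u, a ≤ u → u ≤ b → |f u| ≤ K * (1 + (M * (u - β)) ^ 2)⁻¹) :
    |∫ u in a..b, 2 * u * f u| ≤ 2 * y * K * (Real.pi / M) := by
  have hc : Continuous (fun u : ℝ => (1 + ((M:ℝ) * (u - β)) ^ 2)⁻¹) := by
    apply Continuous.inv₀ (by fun_prop)
    intro u; positivity
  have h1 : ‖∫ u in a..b, 2 * u * f u‖ ≤ ∫ u in a..b, 2 * y * K * (1 + (M * (u - β)) ^ 2)⁻¹ := by
    apply intervalIntegral.norm_integral_le_of_norm_le hab
    · refine Filter.Eventually.of_forall (fun u hu => ?_)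
      have hu0 : 0 ≤ u := ha.trans hu.1.le
      rw [Real.norm_eq_abs, abs_mul, abs_of_nonneg (by positivity : 0 ≤ 2 * u)]
      calc 2 * u * |f u| ≤ 2 * y * (K * (1 + (M * (u - β)) ^ 2)⁻¹) := by
            gcongr
            · linarith [hu.2]
            · linarith [hu.2]
            · exact h u hu.1.le hu.2
        _ = _ := by ring
    · apply Continuous.intervalIntegrable; fun_prop
  rw [intervalIntegral.integral_const_mul] at h1
  have hy : 0 ≤ y := by linarith
  refine h1.trans ?_
  gcongr
  exact mr_arctan_bound M hM β a b

lemma mr_step_int (M : ℕ) (hM : 1 ≤ M) {β y : ℝ} (hβ : 0 ≤ β) (hβ1 : β ≤ 1) (hy : 0 ≤ y) (hy1 : y ≤ 1) :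
    |(∫ u in (0:ℝ)..y, 2 * u * mrR M β u) - (min y β) ^ 2| ≤ 128 * Real.pi ^ 5 * y / M := by
  have hM' : (0:ℝ) < M := by exact_mod_cast hM
  have hR := mrR_continuous M β
  have hp := Real.pi_pos
  have hsq : ∀ z : ℝ, ∫ u in (0:ℝ)..z, 2 * u = z ^ 2 := by
    intro z
    rw [intervalIntegral.integral_const_mul, integral_id]; ring
  have hsub : ∀ z, (∫ u in (0:ℝ)..z, 2 * u * mrR M β u) - z ^ 2 = ∫ u in (0:ℝ)..z, 2 * u * (mrR M β u - 1) := by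
    intro z
    rw [← hsq z, ← intervalIntegral.integral_sub]
    · congr 1; ext u; ring
    · apply Continuous.intervalIntegrable; fun_prop
    · apply Continuous.intervalIntegrable; fun_prop
  have e : 128 * Real.pi ^ 5 * y / M = 2 * (2 * y * (32 * Real.pi ^ 4) * (Real.pi / M)) := by field_simp; ring
  have hpos : 0 ≤ 2 * y * (32 * Real.pi ^ 4) * (Real.pi / M) := by positivity
  rcases le_total y β with h | h
  · rw [min_eq_left h, hsub]
    have := mr_weighted M hM β 0 y y (32 * Real.pi ^ 4) (fun u => mrR M β u - 1) (by fun_prop) le_rfl hy le_rfl (by positivity)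
      (fun u h0 h1 => mrR_lt M hM hβ hβ1 h0 (h1.trans h))
    rw [e]; linarith
  · rw [min_eq_right h]
    have h1 := mr_weighted M hM β 0 β y (32 * Real.pi ^ 4) (fun u => mrR M β u - 1) (by fun_prop) le_rfl hβ h (by positivity)
      (fun u h0 h1 => mrR_lt M hM hβ hβ1 h0 h1)
    have h2 := mr_weighted M hM β β y y (32 * Real.pi ^ 4) (fun u => mrR M β u) (by fun_prop) hβ h le_rfl (by positivity)
      (fun u h0 h1 => mrR_gt M hM hβ (h1.trans hy1) h0)
    rw [← hsub] at h1
    rw [← intervalIntegral.integral_add_adjacent_intervals (b := β)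
      (Continuous.intervalIntegrable (by fun_prop) _ _) (Continuous.intervalIntegrable (by fun_prop) _ _)]
    rw [e]
    calc _ = |((∫ u in (0:ℝ)..β, 2 * u * mrR M β u) - β ^ 2) + ∫ u in β..y, 2 * u * mrR M β u| := by congr 1; ring
      _ ≤ _ := (abs_add_le _ _).trans (by linarith)

lemma mrA_bound (M : ℕ) (hM : 1 ≤ M) {β : ℝ} (hβ : 0 ≤ β) (hβ1 : β ≤ 1) (x) :
    |mrA M β x| ≤ 8 / M ^ 3 * (4 / (1 + |(mrE x : ℝ)|)) := by
  have hM' : (0:ℝ) < M := by exact_mod_cast hM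
  have hG := mrGam_lower M hM
  have hG0 : 0 < mrGam M := lt_of_lt_of_le (by positivity) hG
  have key : |∫ s in (-β)..β, Real.cos ((mrE x : ℝ) * s)| ≤ 4 / (1 + |(mrE x : ℝ)|) := by
    by_cases he : mrE x = 0
    · rw [he]
      simp
      rw [abs_of_nonneg (by linarith)]; linarith
    · have he1 : (1:ℝ) ≤ |(mrE x : ℝ)| := by
        have := Int.one_le_abs he
        exact_mod_cast this
      have he0 : (mrE x : ℝ) ≠ 0 := by exact_mod_cast he
      rw [intervalIntegral.integral_comp_mul_left (fun s => Real.cos s) he0, integral_cos, smul_eq_mul, abs_mul, abs_inv]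
      have : |Real.sin ((mrE x : ℝ) * β) - Real.sin ((mrE x : ℝ) * -β)| ≤ 2 := by
        have a1 := abs_le.mp (Real.abs_sin_le_one ((mrE x : ℝ) * β))
        have a2 := abs_le.mp (Real.abs_sin_le_one ((mrE x : ℝ) * -β))
        rw [abs_le]; constructor <;> linarith [a1.1, a1.2, a2.1, a2.2]
      calc _ ≤ |(mrE x : ℝ)|⁻¹ * 2 := by gcongr
        _ ≤ _ := by
          rw [inv_mul_eq_div, div_le_div_iff₀ (by linarith) (by linarith)]; linarith
  rw [mrA, abs_div, abs_of_pos hG0]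
  calc _ ≤ 4 / (1 + |(mrE x : ℝ)|) / ((M:ℝ)^3 / 8) := by gcongr
    _ = _ := by field_simp

lemma mr_harm (M : ℕ) (hM : 1 ≤ M) : ∑ k ∈ Finset.Icc (-(2 * M : ℤ)) (2 * M), (4 / (1 + |(k : ℝ)|)) ≤ 24 * (1 + Real.log M) := by
  have hsub : Finset.Icc (-(2 * M : ℤ)) (2 * M) ⊆ (Finset.range (2*M+1)).image (fun i : ℕ => (i:ℤ)) ∪ (Finset.range (2*M+1)).image (fun i : ℕ => -(i:ℤ)) := by
    intro k hk
    rw [Finset.mem_Icc] at hk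
    simp only [mem_union, mem_image, mem_range]
    rcases le_total 0 k with h | h
    · left; exact ⟨k.toNat, by omega, by omega⟩
    · right; exact ⟨(-k).toNat, by omega, by omega⟩
  have hpos : ∀ k : ℤ, 0 ≤ 4 / (1 + |(k : ℝ)|) := fun k => by positivity
  have hinj1 : ∑ k ∈ (Finset.range (2*M+1)).image (fun i : ℕ => (i:ℤ)), (4 / (1 + |(k : ℝ)|)) = ∑ i ∈ range (2*M+1), 4 / (1 + (i:ℝ)) := by
    rw [sum_image (fun a _ b _ h => by simpa using h)]
    simp
  have hinj2 : ∑ k ∈ (Finset.range (2*M+1)).image (fun i : ℕ => -(i:ℤ)), (4 / (1 + |(k : ℝ)|)) = ∑ i ∈ range (2*M+1), 4 / (1 + (i:ℝ)) := by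
    rw [sum_image (fun a _ b _ h => by simpa using h)]
    simp
  have hh : ∑ i ∈ range (2*M+1), 4 / (1 + (i:ℝ)) = 4 * (harmonic (2*M+1) : ℝ) := by
    rw [harmonic]; push_cast; rw [mul_sum]
    refine sum_congr rfl (fun i _ => ?_)
    rw [add_comm]; rfl
  have hl := harmonic_le_one_add_log (2*M+1)
  have hlog : Real.log ((2*M+1 : ℕ):ℝ) ≤ 2 + Real.log M := by
    have hM' : (1:ℝ) ≤ M := by exact_mod_cast hM
    calc Real.log ((2*M+1 : ℕ):ℝ) ≤ Real.log (3 * M) := by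
          apply Real.log_le_log (by positivity); push_cast; linarith
      _ = Real.log 3 + Real.log M := Real.log_mul (by norm_num) (by positivity)
      _ ≤ _ := by linarith [Real.log_le_sub_one_of_pos (show (0:ℝ) < 3 by norm_num)]
  have hlM : 0 ≤ Real.log M := Real.log_natCast_nonneg M
  calc _ ≤ ∑ k ∈ (Finset.range (2*M+1)).image (fun i : ℕ => (i:ℤ)) ∪ (Finset.range (2*M+1)).image (fun i : ℕ => -(i:ℤ)), (4 / (1 + |(k : ℝ)|)) :=
        sum_le_sum_of_subset_of_nonneg hsub (fun k _ _ => hpos k)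
    _ ≤ 2 * (4 * (harmonic (2*M+1) : ℝ)) := by
        have := sum_union_inter (s₁ := (Finset.range (2*M+1)).image (fun i : ℕ => (i:ℤ))) (s₂ := (Finset.range (2*M+1)).image (fun i : ℕ => -(i:ℤ))) (f := fun k : ℤ => 4 / (1 + |(k : ℝ)|))
        rw [hinj1, hinj2, hh] at this
        have h0 : 0 ≤ ∑ k ∈ (Finset.range (2*M+1)).image (fun i : ℕ => (i:ℤ)) ∩ (Finset.range (2*M+1)).image (fun i : ℕ => -(i:ℤ)), (4 / (1 + |(k : ℝ)|)) := sum_nonneg (fun k _ => hpos k)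
        linarith
    _ ≤ _ := by linarith

lemma mrA_sum (M : ℕ) (hM : 1 ≤ M) {β : ℝ} (hβ : 0 ≤ β) (hβ1 : β ≤ 1) :
    ∑ x ∈ mrT M, |mrA M β x| ≤ 192 * (1 + Real.log M) := by
  have hM' : (0:ℝ) < M := by exact_mod_cast hM
  calc ∑ x ∈ mrT M, |mrA M β x| ≤ ∑ x ∈ mrT M, 8 / (M:ℝ) ^ 3 * (4 / (1 + |(mrE x : ℝ)|)) :=
        sum_le_sum (fun x _ => mrA_bound M hM hβ hβ1 x)
    _ = 8 / (M:ℝ)^3 * ∑ x ∈ mrT M, (4 / (1 + |(mrE x : ℝ)|)) := by rw [mul_sum]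
    _ ≤ 8 / (M:ℝ)^3 * (M ^ 3 * (24 * (1 + Real.log M))) := by
        gcongr
        rw [mrT, sum_product]
        have : ∀ p ∈ range M ×ˢ range M, ∑ q ∈ range M ×ˢ range M, (4 / (1 + |(mrE (p, q) : ℝ)|)) ≤ M * (24 * (1 + Real.log M)) := by
          intro p hp
          rw [sum_product]
          calc _ ≤ ∑ c ∈ range M, (24 * (1 + Real.log M)) := by
                refine sum_le_sum (fun c hc => ?_)
                refine le_trans ?_ (mr_harm M hM)
                rw [← sum_image (s := range M) (g := fun d => mrE (p, (c, d))) (f := fun k : ℤ => 4 / (1 + |(k : ℝ)|))]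
                · apply sum_le_sum_of_subset_of_nonneg
                  · intro k hk
                    simp only [mem_image, mem_range, mem_product, mrE] at hk hp hc
                    obtain ⟨d, hd, rfl⟩ := hk
                    rw [Finset.mem_Icc]; omega
                  · intro k _ _; positivity
                · intro d _ d' _ h
                  simp only [mrE] at h; omega
            _ = _ := by simp
        calc _ ≤ ∑ p ∈ range M ×ˢ range M, (M:ℝ) * (24 * (1 + Real.log M)) := sum_le_sum this
          _ = _ := by simp; ring
    _ = _ := by field_simp; ring
end MRU4

end PartU4

section PartU5

section MRU5
open MeasureTheory Finset ProbabilityTheory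

lemma mr_lip_center (g : ℕ → ℝ) (B l : ℝ) (hl : 0 ≤ l) (hg : ∀ k, |g (k+1) - g k| ≤ B) :
    ∃ c, ∀ k : ℕ, |g k - c| ≤ B * |(k:ℝ) - l| := by
  have hB : 0 ≤ B := (abs_nonneg _).trans (hg 0)
  have hl2 : ∀ i j : ℕ, |g (i + j) - g i| ≤ B * j := by
    intro i j
    induction j with
    | zero => simp
    | succ j ih =>
      have := hg (i + j)
      calc |g (i + (j+1)) - g i| = |(g (i + j + 1) - g (i+j)) + (g (i + j) - g i)| := by congr 1; rw [← add_assoc]; ring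
        _ ≤ B + B * j := (abs_add_le _ _).trans (by linarith)
        _ = _ := by push_cast; ring
  obtain ⟨k0, hk0, hk1⟩ : ∃ k0 : ℕ, (k0:ℝ) ≤ l ∧ l ≤ k0 + 1 := ⟨⌊l⌋₊, Nat.floor_le hl, (Nat.lt_floor_add_one l).le⟩
  refine ⟨g k0 + (l - k0) * (g (k0+1) - g k0), fun k => ?_⟩
  have h0 := hg k0
  rcases le_or_gt k k0 with h | h
  · obtain ⟨j, rfl⟩ := Nat.exists_eq_add_of_le h
    have := hl2 k j
    push_cast at *
    rw [abs_of_nonpos (by linarith : (k:ℝ) - l ≤ 0)]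
    calc _ = |-(g (k + j) - g k) + -((l - (k + j)) * (g (k+j+1) - g (k+j)))| := by congr 1; ring
      _ ≤ B * j + (l - (k+j)) * B := by
        refine (abs_add_le _ _).trans ?_
        rw [abs_neg, abs_neg, abs_mul, abs_of_nonneg (by linarith : 0 ≤ l - (k+j))]
        gcongr
      _ = _ := by ring
  · obtain ⟨j, rfl⟩ := Nat.exists_eq_add_of_le (Nat.succ_le_of_lt h)
    have := hl2 (k0+1) j
    rw [Nat.succ_eq_add_one]
    have hj : (0:ℝ) ≤ j := by positivity
    have e1 : (((k0 + 1 + j : ℕ) : ℝ)) - l = k0 + 1 - l + j := by push_cast; ring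
    rw [e1, abs_of_nonneg (by linarith : 0 ≤ (k0:ℝ) + 1 - l + j)]
    calc _ = |(g (k0 + 1 + j) - g (k0+1)) + ((k0 + 1 - l) * (g (k0+1) - g k0))| := by congr 1; ring
      _ ≤ B * j + (k0 + 1 - l) * B := by
        refine (abs_add_le _ _).trans ?_
        rw [abs_mul, abs_of_nonneg (by linarith : 0 ≤ k0 + 1 - l)]
        gcongr
      _ = _ := by ring

lemma mr_toPM {l : ℝ} (hl : 0 ≤ l) (k : ℕ) :
    Real.exp (-(l.toNNReal : ℝ)) * (l.toNNReal : ℝ) ^ k / (k.factorial : ℝ) = poissonPMF l k := by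
  rw [Real.coe_toNNReal l hl]; rfl

lemma mr_pm_mean {l : ℝ} (hl : 0 ≤ l) (g : ℕ → ℝ) (e : ℝ) (h : HasSum (fun k => poissonPMF l k * g k) e) :
    ∫ k, g k ∂(poissonMeasure l.toNNReal) = e := by
  rw [integral_poissonMeasure]
  simp_rw [mr_toPM hl, smul_eq_mul]
  exact h.tsum_eq

lemma mr_pm_var {l : ℝ} (hl : 0 ≤ l) (g : ℕ → ℝ) (B : ℝ) (hg : ∀ k, |g (k+1) - g k| ≤ B) :
    MemLp g 2 (poissonMeasure l.toNNReal) ∧ Var[g; poissonMeasure l.toNNReal] ≤ B ^ 2 * l := by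
  obtain ⟨c, hc⟩ := mr_lip_center g B l hl hg
  have hsq : ∀ k, (g k - c) ^ 2 ≤ B ^ 2 * ((k:ℝ) - l) ^ 2 := by
    intro k
    have := hc k
    rw [← sq_abs (g k - c), ← sq_abs ((k:ℝ) - l), ← mul_pow]
    gcongr
  have hv := (mr_pois_var l).mul_left (B ^ 2)
  have hs : Summable (fun k => poissonPMF l k * (g k - c) ^ 2) := by
    refine Summable.of_nonneg_of_le (fun k => mul_nonneg (mr_pois_nonneg hl k) (sq_nonneg _)) (fun k => ?_) hv.summable
    have := mul_le_mul_of_nonneg_left (hsq k) (mr_pois_nonneg hl k)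
    linarith
  have hintg : Integrable (fun k => (g k - c) ^ 2) (poissonMeasure l.toNNReal) := by
    rw [integrable_poissonMeasure_iff]
    simp_rw [mr_toPM hl]
    simpa using hs
  have hm1 : MemLp (fun k => g k - c) 2 (poissonMeasure l.toNNReal) :=
    (memLp_two_iff_integrable_sq .of_discrete).mpr hintg
  have hm : MemLp g 2 (poissonMeasure l.toNNReal) := by
    have := hm1.add (memLp_const c)
    convert this using 1
    ext k; simp
  refine ⟨hm, ?_⟩
  have h1 : Var[g; poissonMeasure l.toNNReal] = Var[fun k => g k - c; poissonMeasure l.toNNReal] := by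
    rw [variance_sub_const .of_discrete]
  rw [h1]
  refine (variance_le_expectation_sq .of_discrete).trans ?_
  have h2 : ∫ k, (g k - c) ^ 2 ∂(poissonMeasure l.toNNReal) = _ := mr_pm_mean hl _ _ hs.hasSum
  change ∫ k, (g k - c) ^ 2 ∂(poissonMeasure l.toNNReal) ≤ _
  rw [h2, ← hv.tsum_eq]
  refine Summable.tsum_le_tsum (fun k => ?_) hs hv.summable
  have := mul_le_mul_of_nonneg_left (hsq k) (mr_pois_nonneg hl k)
  linarith

lemma mr_risk_upper {S : ℕ} (n : ℕ) (p : Fin S → ℝ) (hp : ∀ i, 0 ≤ p i) (Lr B : ℝ) (g : Fin S → ℕ → ℝ) (e : Fin S → ℝ)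
    (h1 : ∀ i, HasSum (fun k => poissonPMF (n * p i) k * g i k) (e i))
    (h2 : ∀ i k, |g i (k+1) - g i k| ≤ B) :
    risk n p Lr (fun x => ∑ i, g i (x i)) ≤ ENNReal.ofReal ((∑ i, e i - Lr) ^ 2 + ∑ i, B ^ 2 * (n * p i)) := by
  have hl : ∀ i, 0 ≤ (n:ℝ) * p i := fun i => mul_nonneg (by positivity) (hp i)
  set P := Measure.pi (fun i => poissonMeasure (Real.toNNReal (n * p i))) with hP
  have hsing : ∀ x : Fin S → ℕ, P {x} = ENNReal.ofReal (prodPMF n p x) := by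
    intro x
    rw [hP, Measure.pi_singleton, prodPMF, ENNReal.ofReal_prod_of_nonneg (fun i _ => mr_pois_nonneg (hl i) _)]
    refine prod_congr rfl (fun i _ => ?_)
    rw [poissonMeasure_singleton, mr_toPM (hl i)]
  have hmem : ∀ i, MemLp (g i) 2 (poissonMeasure (Real.toNNReal (n * p i))) := fun i => (mr_pm_var (hl i) (g i) B (h2 i)).1
  have hvar : Var[∑ i, fun ω : Fin S → ℕ => g i (ω i); P] = ∑ i, Var[g i; poissonMeasure (Real.toNNReal (n * p i))] :=
    variance_sum_pi hmem
  have hfun : (∑ i, fun ω : Fin S → ℕ => g i (ω i)) = fun ω => ∑ i, g i (ω i) := by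
    ext ω; simp
  rw [hfun] at hvar
  have hY : MemLp (fun ω : Fin S → ℕ => ∑ i, g i (ω i)) 2 P :=
    memLp_finsetSum _ (fun i _ => (hmem i).comp_measurePreserving (measurePreserving_eval _ i))
  have hE : ∫ ω, ∑ i, g i (ω i) ∂P = ∑ i, e i := by
    rw [integral_finsetSum]
    · refine sum_congr rfl (fun i _ => ?_)
      rw [hP, integral_comp_eval (μ := fun i => poissonMeasure (Real.toNNReal (n * p i))) (f := g i) .of_discrete]
      exact mr_pm_mean (hl i) _ _ (h1 i)
    · intro i _
      exact ((hmem i).comp_measurePreserving (measurePreserving_eval (fun i => poissonMeasure (Real.toNNReal (n * p i))) i)).integrable (by norm_num)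
  have hYL : MemLp (fun ω : Fin S → ℕ => ∑ i, g i (ω i) - Lr) 2 P := hY.sub (memLp_const _)
  have hrisk : risk n p Lr (fun x => ∑ i, g i (x i)) = ENNReal.ofReal (∫ ω, (∑ i, g i (ω i) - Lr) ^ 2 ∂P) := by
    rw [ofReal_integral_eq_lintegral_ofReal hYL.integrable_sq (Filter.Eventually.of_forall (fun ω => sq_nonneg _)), lintegral_countable', risk]
    refine tsum_congr (fun x => ?_)
    rw [hsing, mul_comm, ENNReal.ofReal_mul (sq_nonneg _)]
  rw [hrisk]
  apply ENNReal.ofReal_le_ofReal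
  have hv2 := variance_eq_sub hYL
  have hv3 : Var[fun ω : Fin S → ℕ => ∑ i, g i (ω i) - Lr; P] = Var[fun ω : Fin S → ℕ => ∑ i, g i (ω i); P] := by
    rw [variance_sub_const .of_discrete]
  have hE2 : ∫ ω, (∑ i, g i (ω i) - Lr) ∂P = ∑ i, e i - Lr := by
    rw [integral_sub (hY.integrable (by norm_num)) (integrable_const _), hE]
    simp
  rw [hv3, hvar, hE2] at hv2
  have hle : ∑ i, Var[g i; poissonMeasure (Real.toNNReal (n * p i))] ≤ ∑ i, B ^ 2 * (n * p i) :=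
    sum_le_sum (fun i _ => (mr_pm_var (hl i) (g i) B (h2 i)).2)
  have : ∫ ω, (∑ i, g i (ω i) - Lr) ^ 2 ∂P = ∫ ω, ((fun ω : Fin S → ℕ => ∑ i, g i (ω i) - Lr) ^ 2) ω ∂P := rfl
  rw [this]
  linarith
end MRU5

end PartU5

section PartU6

section MRU6
open MeasureTheory Finset

noncomputable def mrEst (n M : ℕ) (m : ℝ) (k : ℕ) : ℝ :=
  m + k - 2 * ∑ x ∈ mrT M, mrA M (√(m / n)) x * mrg ((mrE x : ℝ) / √n) k

noncomputable def mrB (n M : ℕ) : ℝ := 1 + 2 * (192 * (1 + Real.log M) * Real.exp (2 * M ^ 2 / n))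

lemma mrEst_inc (n M : ℕ) (hn : 1 ≤ n) (hM : 1 ≤ M) {m : ℝ} (hm : 0 ≤ m) (hmn : m ≤ n) (k : ℕ) :
    |mrEst n M m (k+1) - mrEst n M m k| ≤ mrB n M := by
  have hn' : (0:ℝ) < n := by exact_mod_cast hn
  have hβ1 : √(m / n) ≤ 1 := by
    rw [Real.sqrt_le_one, div_le_one hn']; exact hmn
  have h1 : mrEst n M m (k+1) - mrEst n M m k = 1 - 2 * ∑ x ∈ mrT M, mrA M (√(m / n)) x * mrG ((mrE x : ℝ) / √n) k := by
    unfold mrEst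
    simp_rw [mrg_succ, mul_add, sum_add_distrib]
    push_cast; ring
  rw [h1]
  refine (abs_sub _ _).trans ?_
  rw [abs_one, abs_mul, abs_two, mrB]
  gcongr
  refine (abs_sum_le_sum_abs _ _).trans ?_
  refine le_trans ?_ (mul_le_mul_of_nonneg_right (mrA_sum M hM (Real.sqrt_nonneg _) hβ1) (Real.exp_nonneg _))
  rw [sum_mul]
  refine sum_le_sum (fun x hx => ?_)
  rw [abs_mul]
  gcongr
  refine (mrG_bound _ _).trans ?_
  apply Real.exp_le_exp.mpr
  have he := mrE_bound hx
  rw [div_pow, Real.sq_sqrt hn'.le]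
  have : (mrE x : ℝ) ^ 2 ≤ (2 * M) ^ 2 := by
    rw [← sq_abs]; gcongr
  calc (mrE x : ℝ) ^ 2 / n / 2 ≤ (2 * M) ^ 2 / n / 2 := by gcongr
    _ = _ := by ring

lemma mrEst_mean (n M : ℕ) (hn : 1 ≤ n) (hM : 1 ≤ M) {m : ℝ} (hm : 0 ≤ m) (hmn : m ≤ n) {l : ℝ} (hl : 0 ≤ l) (hln : l ≤ n) :
    ∃ e, HasSum (fun k => poissonPMF l k * mrEst n M m k) e ∧ |e - (|l - m|)| ≤ 256 * Real.pi ^ 5 * √(n * l) / M := by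
  have hn' : (0:ℝ) < n := by exact_mod_cast hn
  have hsn : 0 < √(n:ℝ) := Real.sqrt_pos.mpr hn'
  have hβ1 : √(m / n) ≤ 1 := by
    rw [Real.sqrt_le_one, div_le_one hn']; exact hmn
  have hy1 : √(l / n) ≤ 1 := by
    rw [Real.sqrt_le_one, div_le_one hn']; exact hln
  set β := √(m / n) with hβ
  set y := √(l / n) with hy
  have hβ2 : (n:ℝ) * β ^ 2 = m := by rw [hβ, Real.sq_sqrt (by positivity)]; field_simp
  have hy2 : (n:ℝ) * y ^ 2 = l := by rw [hy, Real.sq_sqrt (by positivity)]; field_simp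
  have hy0 : 0 ≤ y := Real.sqrt_nonneg _
  have hβ0 : 0 ≤ β := Real.sqrt_nonneg _
  have hyl : √n * y = √l := by
    rw [hy, Real.sqrt_div' _ hn'.le]; field_simp
  have hmean : ∀ θ : ℝ, HasSum (fun k => poissonPMF l k * mrg (θ / √n) k) (n * ∫ v in (0:ℝ)..y, 2 * v * Real.cos (θ * v)) := by
    intro θ
    have h := mrg_mean (θ / √n) (√l) (Real.sqrt_nonneg _)
    rw [Real.sq_sqrt hl] at h
    convert h using 1
    have h2 := intervalIntegral.mul_integral_comp_mul_left (a := 0) (b := y) (f := fun u => 2 * u * Real.cos (θ / √n * u)) (c := √n)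
    rw [mul_zero, hyl] at h2
    rw [← h2]
    have e : ∀ v, 2 * (√n * v) * Real.cos (θ / √n * (√n * v)) = √n * (2 * v * Real.cos (θ * v)) := by
      intro v
      have : θ / √n * (√n * v) = θ * v := by field_simp
      rw [this]; ring
    simp_rw [e]
    rw [intervalIntegral.integral_const_mul, ← mul_assoc, Real.mul_self_sqrt hn'.le]
  have hI : ∑ x ∈ mrT M, mrA M β x * (n * ∫ v in (0:ℝ)..y, 2 * v * Real.cos ((mrE x : ℝ) * v)) = n * ∫ v in (0:ℝ)..y, 2 * v * mrR M β v := by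
    unfold mrR
    have : ∀ v : ℝ, 2 * v * ∑ x ∈ mrT M, mrA M β x * Real.cos ((mrE x : ℝ) * v) = ∑ x ∈ mrT M, mrA M β x * (2 * v * Real.cos ((mrE x : ℝ) * v)) := by
      intro v; rw [mul_sum]; refine sum_congr rfl (fun x _ => ?_); ring
    simp_rw [this]
    rw [intervalIntegral.integral_finsetSum, mul_sum]
    · refine sum_congr rfl (fun x _ => ?_)
      rw [intervalIntegral.integral_const_mul]; ring
    · intro x _
      apply Continuous.intervalIntegrable; fun_prop
  refine ⟨m + l - 2 * (n * ∫ v in (0:ℝ)..y, 2 * v * mrR M β v), ?_, ?_⟩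
  · have h1 := ((mr_pois_sum l).mul_right m).add (mr_pois_mean l)
    have h2 : HasSum (fun k => ∑ x ∈ mrT M, mrA M β x * (poissonPMF l k * mrg ((mrE x : ℝ) / √n) k)) (∑ x ∈ mrT M, mrA M β x * (n * ∫ v in (0:ℝ)..y, 2 * v * Real.cos ((mrE x : ℝ) * v))) :=
      hasSum_sum (fun x _ => (hmean (mrE x)).mul_left _)
    rw [hI] at h2
    have h3 := h1.sub (h2.mul_left 2)
    rw [one_mul] at h3
    have hfun : (fun k => poissonPMF l k * mrEst n M m k) = fun b =>
        poissonPMF l b * m + poissonPMF l b * (b:ℝ) - 2 * ∑ x ∈ mrT M, mrA M β x * (poissonPMF l b * mrg ((mrE x : ℝ) / √n) b) := by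
      funext k
      unfold mrEst
      rw [← hβ, mul_sub, mul_add, mul_left_comm _ (2:ℝ), mul_sum]
      congr 2
      refine sum_congr rfl (fun x _ => ?_)
      ring
    rw [hfun]; exact h3
  · have hstep := mr_step_int M hM hβ0 hβ1 hy0 hy1
    have habs : |l - m| = m + l - 2 * (n * (min y β) ^ 2) := by
      rcases le_total y β with h | h
      · rw [min_eq_left h, hy2, abs_of_nonpos]
        · ring
        · have : (n:ℝ) * y ^ 2 ≤ n * β ^ 2 := by gcongr
          linarith
      · rw [min_eq_right h, hβ2, abs_of_nonneg]
        · ring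
        · have : (n:ℝ) * β ^ 2 ≤ n * y ^ 2 := by gcongr
          linarith
    rw [habs]
    have e1 : m + l - 2 * (n * ∫ v in (0:ℝ)..y, 2 * v * mrR M β v) - (m + l - 2 * (n * (min y β) ^ 2)) = -(2 * n * ((∫ v in (0:ℝ)..y, 2 * v * mrR M β v) - (min y β) ^ 2)) := by ring
    rw [e1, abs_neg, abs_mul, abs_of_nonneg (by positivity : 0 ≤ 2 * (n:ℝ))]
    have e2 : √(n * l) = n * y := by
      rw [Real.sqrt_mul hn'.le, ← hyl, ← mul_assoc, Real.mul_self_sqrt hn'.le]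
    rw [e2]
    calc _ ≤ 2 * (n:ℝ) * (128 * Real.pi ^ 5 * y / M) := by gcongr
      _ = _ := by ring

lemma mr_dist_le_one {S : ℕ} {p : Fin S → ℝ} (hp : IsDist p) (i : Fin S) : p i ≤ 1 := by
  rw [← hp.2]; exact single_le_sum (fun j _ => hp.1 j) (mem_univ i)

lemma mr_sum_sqrt {S : ℕ} {p : Fin S → ℝ} (hp : IsDist p) : ∑ i, √(p i) ≤ √S := by
  apply Real.le_sqrt_of_sq_le
  have := sq_sum_le_card_mul_sum_sq (s := (univ : Finset (Fin S))) (f := fun i => √(p i))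
  refine this.trans (le_of_eq ?_)
  simp only [Real.sq_sqrt (hp.1 _), hp.2]
  simp

lemma mr_upper_nM {S : ℕ} (n M : ℕ) (hn : 1 ≤ n) (hM : 1 ≤ M) (q : Fin S → ℝ) (hq : IsDist q) :
    ∃ est : (Fin S → ℕ) → ℝ, ∀ p, IsDist p → risk n p (L1dist p q) est ≤
      ENNReal.ofReal ((256 * Real.pi ^ 5) ^ 2 * S / M ^ 2 + mrB n M ^ 2 / n) := by
  have hn' : (0:ℝ) < n := by exact_mod_cast hn
  have hM' : (0:ℝ) < M := by exact_mod_cast hM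
  refine ⟨fun x => ∑ i, mrEst n M (n * q i) (x i) / n, fun p hp => ?_⟩
  have hr : ∀ {p : Fin S → ℝ}, IsDist p → ∀ i, 0 ≤ n * p i ∧ n * p i ≤ n := by
    intro p hp i
    refine ⟨mul_nonneg hn'.le (hp.1 i), ?_⟩
    have := mul_le_mul_of_nonneg_left (mr_dist_le_one hp i) hn'.le
    linarith
  choose e he1 he2 using fun i => mrEst_mean n M hn hM (hr hq i).1 (hr hq i).2 (hr hp i).1 (hr hp i).2
  refine (mr_risk_upper n p hp.1 (L1dist p q) (mrB n M / n) (fun i k => mrEst n M (n * q i) k / n) (fun i => e i / n) ?_ ?_).trans ?_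
  · intro i
    have := (he1 i).div_const (n:ℝ)
    simp only [mul_div_assoc] at this
    exact this
  · intro i k
    rw [← sub_div, abs_div, abs_of_pos hn']
    gcongr
    exact mrEst_inc n M hn hM (hr hq i).1 (hr hq i).2 k
  · apply ENNReal.ofReal_le_ofReal
    have hb : |∑ i, e i / n - L1dist p q| ≤ 256 * Real.pi ^ 5 * √S / M := by
      rw [L1dist, ← sum_sub_distrib]
      refine (abs_sum_le_sum_abs _ _).trans ?_
      calc ∑ i, |e i / n - (|p i - q i|)| ≤ ∑ i, 256 * Real.pi ^ 5 / M * √(p i) := by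
            refine sum_le_sum (fun i _ => ?_)
            have h := he2 i
            have e1 : |n * p i - n * q i| = n * |p i - q i| := by
              rw [← mul_sub, abs_mul, abs_of_pos hn']
            have e2 : √(n * (n * p i)) = n * √(p i) := by
              rw [← mul_assoc, Real.sqrt_mul (by positivity), Real.sqrt_mul_self hn'.le]
            rw [e1, e2] at h
            have e3 : e i / n - |p i - q i| = (e i - n * |p i - q i|) / n := by field_simp
            rw [e3, abs_div, abs_of_pos hn', div_le_iff₀ hn']
            refine h.trans (le_of_eq ?_); ring
        _ = 256 * Real.pi ^ 5 / M * ∑ i, √(p i) := by rw [mul_sum]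
        _ ≤ 256 * Real.pi ^ 5 / M * √S := by gcongr; exact mr_sum_sqrt hp
        _ = _ := by ring
    have hb2 : (∑ i, e i / n - L1dist p q) ^ 2 ≤ (256 * Real.pi ^ 5) ^ 2 * S / M ^ 2 := by
      rw [← sq_abs]
      calc _ ≤ (256 * Real.pi ^ 5 * √S / M) ^ 2 := by gcongr
        _ = _ := by rw [div_pow, mul_pow _ (√(S:ℝ)), Real.sq_sqrt (by positivity)]
    have hv : ∑ i, (mrB n M / n) ^ 2 * (n * p i) = mrB n M ^ 2 / n := by
      rw [← mul_sum, ← mul_sum, hp.2]; field_simp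
    rw [hv]; linarith

lemma mr_upper (A : ℝ) (hA : 1 ≤ A) : ∃ C : ℝ, 0 < C ∧ ∃ N₀ : ℕ, ∀ S n : ℕ, N₀ ≤ n → (n:ℝ) ≤ (S:ℝ) ^ A →
    ∀ q : Fin S → ℝ, IsDist q → ∃ est : (Fin S → ℕ) → ℝ, ∀ p, IsDist p → risk n p (L1dist p q) est ≤
      ENNReal.ofReal (C * S / (n * Real.log n)) := by
  have hA0 : 0 < A := by linarith
  refine ⟨(256 * Real.pi ^ 5) ^ 2 * (32 * A) + 769 ^ 2 * (6 * A) ^ 3, by positivity, max 3 ⌈8 * A⌉₊, ?_⟩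
  intro S n hn hS q hq
  have hn3 : 3 ≤ n := (le_max_left _ _).trans hn
  have hn3' : (3:ℝ) ≤ n := by exact_mod_cast hn3
  have hn8 : 8 * A ≤ n := (Nat.le_ceil _).trans (by exact_mod_cast (le_max_right _ _).trans hn)
  have hn' : (0:ℝ) < n := by linarith
  have hL1 : 1 ≤ Real.log n := by
    rw [Real.le_log_iff_exp_le hn']
    exact Real.exp_one_lt_d9.le.trans (by linarith)
  set L := Real.log n with hL
  have hLn : L ≤ n := (Real.log_le_sub_one_of_pos hn').trans (by linarith)
  set z := √(n * L / (8 * A)) with hz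
  have hz2 : z ^ 2 = n * L / (8 * A) := Real.sq_sqrt (by positivity)
  have hz1 : 1 ≤ z := by
    rw [hz, Real.one_le_sqrt, le_div_iff₀ (by positivity)]
    nlinarith
  have hM1 : 1 ≤ ⌊z⌋₊ := Nat.le_floor (by simpa using hz1)
  set M := ⌊z⌋₊ with hMdef
  have hMz : (M:ℝ) ≤ z := Nat.floor_le (by linarith)
  have hzM : z < M + 1 := Nat.lt_floor_add_one z
  have hM' : (1:ℝ) ≤ M := by exact_mod_cast hM1
  have hM2 : (M:ℝ) ^ 2 ≤ n * L / (8 * A) := by rw [← hz2]; gcongr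
  have hM3 : n * L / (32 * A) ≤ (M:ℝ) ^ 2 := by
    have : z / 2 ≤ M := by linarith
    calc n * L / (32 * A) = (z / 2) ^ 2 := by rw [div_pow, hz2]; field_simp; norm_num
      _ ≤ _ := by gcongr
  obtain ⟨est, hest⟩ := mr_upper_nM n M (by omega) hM1 q hq
  refine ⟨est, fun p hp => (hest p hp).trans (ENNReal.ofReal_le_ofReal ?_)⟩
  have hlogM : Real.log M ≤ L := by
    rw [hL]
    apply Real.log_le_log (by linarith)
    have : (M:ℝ) ^ 2 ≤ n ^ 2 := by
      refine hM2.trans ?_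
      rw [div_le_iff₀ (by positivity)]
      nlinarith
    exact (abs_le_of_sq_le_sq' this hn'.le).2
  set w := (n:ℝ) ^ (1 / (4 * A)) with hw
  have hw1 : 1 ≤ w := Real.one_le_rpow (by linarith) (by positivity)
  have hexp : Real.exp (2 * M ^ 2 / n) ≤ w := by
    rw [hw, Real.rpow_def_of_pos hn', ← hL]
    apply Real.exp_le_exp.mpr
    rw [div_le_iff₀ hn']
    calc 2 * (M:ℝ) ^ 2 ≤ 2 * (n * L / (8 * A)) := by gcongr
      _ = _ := by field_simp; norm_num
  have hB : mrB n M ≤ 769 * L * w := by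
    have h1 : 192 * (1 + Real.log M) * Real.exp (2 * M ^ 2 / n) ≤ 192 * (1 + L) * w := by gcongr
    have h2 : 1 ≤ L * w := one_le_mul_of_one_le_of_one_le hL1 hw1
    have h3 : w ≤ L * w := by nlinarith
    unfold mrB
    nlinarith
  have hB0 : 0 ≤ mrB n M := by
    unfold mrB
    have : 0 ≤ Real.log M := Real.log_natCast_nonneg M
    positivity
  have hL3 : L ^ 3 ≤ (6 * A) ^ 3 * (n:ℝ) ^ (1 / (2 * A)) := by
    have h := Real.log_le_rpow_div (x := n) hn'.le (ε := 1 / (6 * A)) (by positivity)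
    rw [← hL] at h
    have e : ((n:ℝ) ^ (1 / (6 * A))) ^ 3 = (n:ℝ) ^ (1 / (2 * A)) := by
      rw [← Real.rpow_natCast, ← Real.rpow_mul hn'.le]
      congr 1; field_simp; norm_num
    rw [← e, ← mul_pow]
    gcongr
    refine h.trans (le_of_eq ?_)
    field_simp
  have hSS : (n:ℝ) ^ (1 / A) ≤ S := by
    calc (n:ℝ) ^ (1 / A) ≤ ((S:ℝ) ^ A) ^ (1 / A) := by gcongr
      _ = S := by rw [← Real.rpow_mul (by positivity)]; field_simp; simp
  have hww : w ^ 2 = (n:ℝ) ^ (1 / (2 * A)) := by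
    rw [hw, ← Real.rpow_natCast, ← Real.rpow_mul hn'.le]; congr 1; field_simp; norm_num
  have hBB : mrB n M ^ 2 * L ≤ 769 ^ 2 * (6 * A) ^ 3 * S := by
    calc mrB n M ^ 2 * L ≤ (769 * L * w) ^ 2 * L := by gcongr
      _ = 769 ^ 2 * L ^ 3 * w ^ 2 := by ring
      _ ≤ 769 ^ 2 * ((6 * A) ^ 3 * (n:ℝ) ^ (1 / (2 * A))) * (n:ℝ) ^ (1 / (2 * A)) := by rw [hww]; gcongr
      _ = 769 ^ 2 * (6 * A) ^ 3 * (n:ℝ) ^ (1 / A) := by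
        have : (n:ℝ) ^ (1 / A) = (n:ℝ) ^ (1 / (2 * A)) * (n:ℝ) ^ (1 / (2 * A)) := by
          rw [← Real.rpow_add hn']; congr 1; field_simp; norm_num
        rw [this]; ring
      _ ≤ _ := by gcongr
  have t1 : (256 * Real.pi ^ 5) ^ 2 * S / (M:ℝ) ^ 2 ≤ (256 * Real.pi ^ 5) ^ 2 * (32 * A) * S / (n * L) := by
    calc _ ≤ (256 * Real.pi ^ 5) ^ 2 * S / (n * L / (32 * A)) := by gcongr
      _ = _ := by field_simp
  have t2 : mrB n M ^ 2 / n ≤ 769 ^ 2 * (6 * A) ^ 3 * S / (n * L) := by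
    rw [div_le_div_iff₀ hn' (by positivity)]
    calc mrB n M ^ 2 * (n * L) = (mrB n M ^ 2 * L) * n := by ring
      _ ≤ _ := by gcongr
  calc _ ≤ _ := add_le_add t1 t2
    _ = _ := by ring
end MRU6

end PartU6

section PartL1

section MRL1
open MeasureTheory Finset

lemma mr_pois_shift {m0 : ℝ} (h0 : 0 < m0) (x : ℝ) (y : ℕ) :
    poissonPMF (m0 + x) y = poissonPMF m0 y * (Real.exp (-x) * (1 + x / m0) ^ y) := by
  unfold poissonPMF
  have : m0 + x = m0 * (1 + x / m0) := by field_simp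
  have e : (m0 + x) ^ y = m0 ^ y * (1 + x / m0) ^ y := by rw [← mul_pow, ← this]
  rw [e, neg_add, Real.exp_add]; ring

/-- chi-square bound for signed mixtures of Poisson laws -/
lemma mr_chi2 {ι : Type} [Fintype ι] (s x : ι → ℝ) {m0 : ℝ} (h0 : 0 < m0) (K : Finset ℕ) :
    (∑ y ∈ K, |∑ k, s k * poissonPMF (m0 + x k) y|) ^ 2 ≤ ∑ k, ∑ k', s k * s k' * Real.exp (x k * x k' / m0) := by
  set h : ℕ → ℝ := fun y => ∑ k, s k * (Real.exp (-x k) * (1 + x k / m0) ^ y) with hh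
  have e1 : ∀ y, ∑ k, s k * poissonPMF (m0 + x k) y = poissonPMF m0 y * h y := by
    intro y
    rw [hh, mul_sum]
    refine sum_congr rfl (fun k _ => ?_)
    rw [mr_pois_shift h0]; ring
  have hp : ∀ y, 0 ≤ poissonPMF m0 y := mr_pois_nonneg h0.le
  have hsum : HasSum (fun y => poissonPMF m0 y * h y ^ 2) (∑ k, ∑ k', s k * s k' * Real.exp (x k * x k' / m0)) := by
    have h1 : HasSum (fun y => ∑ k, ∑ k', s k * s k' * Real.exp (-x k) * Real.exp (-x k') * (poissonPMF m0 y * ((1 + x k / m0) * (1 + x k' / m0)) ^ y))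
        (∑ k, ∑ k', s k * s k' * Real.exp (-x k) * Real.exp (-x k') * Real.exp (m0 * ((1 + x k / m0) * (1 + x k' / m0) - 1))) :=
      hasSum_sum (fun k _ => hasSum_sum (fun k' _ => (mr_pois_gen _ _).mul_left _))
    have e2 : (fun y => ∑ k, ∑ k', s k * s k' * Real.exp (-x k) * Real.exp (-x k') * (poissonPMF m0 y * ((1 + x k / m0) * (1 + x k' / m0)) ^ y)) = fun y => poissonPMF m0 y * h y ^ 2 := by
      funext y
      rw [hh, sq, sum_mul_sum, mul_sum]
      refine sum_congr rfl (fun k _ => ?_)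
      rw [mul_sum]
      refine sum_congr rfl (fun k' _ => ?_)
      rw [mul_pow]; ring
    have e3 : (∑ k, ∑ k', s k * s k' * Real.exp (-x k) * Real.exp (-x k') * Real.exp (m0 * ((1 + x k / m0) * (1 + x k' / m0) - 1))) = ∑ k, ∑ k', s k * s k' * Real.exp (x k * x k' / m0) := by
      refine sum_congr rfl (fun k _ => sum_congr rfl (fun k' _ => ?_))
      rw [mul_assoc, mul_assoc, ← Real.exp_add, ← Real.exp_add]
      congr 2; field_simp; ring
    rw [e2, e3] at h1
    exact h1
  have hK : ∑ y ∈ K, poissonPMF m0 y ≤ 1 := sum_le_hasSum K (fun y _ => hp y) (mr_pois_sum m0)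
  have hK2 := sum_le_hasSum K (fun y _ => mul_nonneg (hp y) (sq_nonneg (h y))) hsum
  have hcs := sum_mul_sq_le_sq_mul_sq K (fun y => √(poissonPMF m0 y)) (fun y => √(poissonPMF m0 y) * |h y|)
  have e4 : ∑ y ∈ K, |∑ k, s k * poissonPMF (m0 + x k) y| = ∑ y ∈ K, √(poissonPMF m0 y) * (√(poissonPMF m0 y) * |h y|) := by
    refine sum_congr rfl (fun y _ => ?_)
    rw [e1, abs_mul, abs_of_nonneg (hp y), ← mul_assoc, Real.mul_self_sqrt (hp y)]
  have e5 : ∑ y ∈ K, √(poissonPMF m0 y) ^ 2 = ∑ y ∈ K, poissonPMF m0 y :=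
    sum_congr rfl (fun y _ => Real.sq_sqrt (hp y))
  have e6 : ∑ y ∈ K, (√(poissonPMF m0 y) * |h y|) ^ 2 = ∑ y ∈ K, poissonPMF m0 y * h y ^ 2 :=
    sum_congr rfl (fun y _ => by rw [mul_pow, Real.sq_sqrt (hp y), sq_abs])
  rw [e4]
  refine hcs.trans ?_
  rw [e5, e6]
  have h7 : 0 ≤ ∑ y ∈ K, poissonPMF m0 y * h y ^ 2 := sum_nonneg (fun y _ => mul_nonneg (hp y) (sq_nonneg (h y)))
  nlinarith

lemma mr_tv_pois {a b : ℝ} (hb : 0 < b) (K : Finset ℕ) :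
    (∑ y ∈ K, |poissonPMF a y - poissonPMF b y|) ^ 2 ≤ Real.exp ((a - b) ^ 2 / b) - 1 := by
  have h := mr_chi2 (ι := Fin 2) (![1, -1]) (![a - b, 0]) hb K
  simp [Fin.sum_univ_two] at h
  simp only [← sub_eq_add_neg] at h
  rw [sq (a - b)]
  linarith

lemma mr_moment_chi {ι : Type} [Fintype ι] (s x : ι → ℝ) {m0 R : ℝ} (h0 : 0 < m0) (hR : 0 ≤ R) (D : ℕ)
    (hx : ∀ k, |x k| ≤ R) (hs : ∑ k, |s k| ≤ 2) (hm : ∀ l ≤ D, ∑ k, s k * x k ^ l = 0) (K : Finset ℕ) :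
    (∑ y ∈ K, |∑ k, s k * poissonPMF (m0 + x k) y|) ^ 2 ≤ 4 * Real.exp (Real.exp 1 * (R ^ 2 / m0) - D) := by
  refine (mr_chi2 s x h0 K).trans ?_
  have hexp : ∀ z : ℝ, HasSum (fun l : ℕ => z ^ l / (l.factorial : ℝ)) (Real.exp z) := by
    intro z
    have := NormedSpace.expSeries_div_hasSum_exp z
    rwa [← Real.exp_eq_exp_ℝ] at this
  have h1 : HasSum (fun l : ℕ => ∑ k, ∑ k', s k * s k' * ((x k * x k' / m0) ^ l / (l.factorial : ℝ))) (∑ k, ∑ k', s k * s k' * Real.exp (x k * x k' / m0)) :=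
    hasSum_sum (fun k _ => hasSum_sum (fun k' _ => (hexp _).mul_left _))
  have h2 : HasSum (fun l : ℕ => 4 * Real.exp (-D) * ((Real.exp 1 * (R ^ 2 / m0)) ^ l / (l.factorial : ℝ))) (4 * Real.exp (-D) * Real.exp (Real.exp 1 * (R ^ 2 / m0))) :=
    (hexp _).mul_left _
  have e : 4 * Real.exp (Real.exp 1 * (R ^ 2 / m0) - D) = 4 * Real.exp (-D) * Real.exp (Real.exp 1 * (R ^ 2 / m0)) := by
    rw [mul_assoc, ← Real.exp_add]; congr 2; ring
  rw [e]
  refine hasSum_le (fun l => ?_) h1 h2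
  have e2 : ∑ k, ∑ k', s k * s k' * ((x k * x k' / m0) ^ l / (l.factorial : ℝ)) = (∑ k, s k * x k ^ l) ^ 2 / (m0 ^ l * (l.factorial : ℝ)) := by
    rw [sq, sum_mul_sum, sum_div]
    refine sum_congr rfl (fun k _ => ?_)
    rw [sum_div]
    refine sum_congr rfl (fun k' _ => ?_)
    rw [div_pow, mul_pow]; field_simp
  rw [e2]
  rcases le_or_gt l D with hl | hl
  · rw [hm l hl]; simp; positivity
  · have hb : |∑ k, s k * x k ^ l| ≤ 2 * R ^ l := by
      calc _ ≤ ∑ k, |s k * x k ^ l| := abs_sum_le_sum_abs _ _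
        _ ≤ ∑ k, |s k| * R ^ l := by
            refine sum_le_sum (fun k _ => ?_)
            rw [abs_mul, abs_pow]
            gcongr; exact hx k
        _ = (∑ k, |s k|) * R ^ l := by rw [sum_mul]
        _ ≤ _ := by gcongr
    have hb2 : (∑ k, s k * x k ^ l) ^ 2 ≤ 4 * (R ^ 2) ^ l := by
      rw [← sq_abs]
      calc _ ≤ (2 * R ^ l) ^ 2 := by gcongr
        _ = _ := by ring
    have h3 : 1 ≤ Real.exp (-D) * Real.exp 1 ^ l := by
      rw [← Real.exp_nat_mul, ← Real.exp_add]
      apply Real.one_le_exp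
      have : (D:ℝ) ≤ l := by exact_mod_cast hl.le
      linarith
    calc _ ≤ 4 * (R ^ 2) ^ l / (m0 ^ l * (l.factorial : ℝ)) := by gcongr
      _ ≤ (4 * (R ^ 2) ^ l / (m0 ^ l * (l.factorial : ℝ))) * (Real.exp (-D) * Real.exp 1 ^ l) := le_mul_of_one_le_right (by positivity) h3
      _ = _ := by rw [mul_pow, div_pow]; field_simp
end MRL1

end PartL1

section PartL2

section MRL2
open MeasureTheory Finset

lemma mr_alt_tel (h : ℕ → ℝ) (n : ℕ) :
    ∑ j ∈ range n, (-1:ℝ) ^ j * (h j + h (j+1)) = h 0 - (-1) ^ n * h n := by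
  induction n with
  | zero => simp
  | succ n ih => rw [sum_range_succ, ih, pow_succ]; ring

lemma mr_alt (N : ℕ) (hN : 1 ≤ N) (d : ℤ) (hd : |d| < N) (c : ℝ) :
    ∑ j ∈ range (2 * N), (-1:ℝ) ^ j * Real.cos (d * (j * (Real.pi / N)) + c) = 0 := by
  have hN' : (0:ℝ) < N := by exact_mod_cast hN
  have hp := Real.pi_pos
  set τ := Real.pi / N with hτ
  have hτN : N * τ = Real.pi := by rw [hτ]; field_simp
  have hcos : 0 < Real.cos (d * τ / 2) := by
    apply Real.cos_pos_of_mem_Ioo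
    have : |(d:ℝ) * τ / 2| < Real.pi / 2 := by
      rw [abs_div, abs_mul, abs_two, abs_of_pos (by positivity : 0 < τ)]
      have : |(d:ℝ)| < N := by exact_mod_cast hd
      have : |(d:ℝ)| * τ < N * τ := by gcongr
      linarith
    exact abs_lt.mp this
  have h1 := mr_alt_tel (fun j => Real.cos (d * ((j - 1/2) * τ) + c)) (2 * N)
  have h2 : ∑ j ∈ range (2 * N), (-1:ℝ) ^ j * (Real.cos (d * (((j:ℕ) - 1/2) * τ) + c) + Real.cos (d * (((j + 1 : ℕ) - 1/2) * τ) + c))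
      = (∑ j ∈ range (2 * N), (-1:ℝ) ^ j * Real.cos (d * (j * τ) + c)) * (2 * Real.cos (d * τ / 2)) := by
    rw [sum_mul]
    refine sum_congr rfl (fun j _ => ?_)
    have e1 : (d:ℝ) * (((j:ℕ) - 1/2) * τ) + c = (d * (j * τ) + c) - d * τ / 2 := by ring
    have e2 : (d:ℝ) * (((j + 1 : ℕ) - 1/2) * τ) + c = (d * (j * τ) + c) + d * τ / 2 := by push_cast; ring
    rw [e1, e2, Real.cos_sub (d * (j * τ) + c) (d * τ / 2), Real.cos_add (d * (j * τ) + c) (d * τ / 2)]; ring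
  have h3 : Real.cos (d * (((2 * N : ℕ) - 1/2) * τ) + c) = Real.cos (d * (((0 : ℕ) - 1/2) * τ) + c) := by
    have : (d:ℝ) * (((2 * N : ℕ) - 1/2) * τ) + c = (d * (((0 : ℕ) - 1/2) * τ) + c) + d * (2 * Real.pi) := by
      push_cast; rw [← hτN]; ring
    rw [this, Real.cos_add_int_mul_two_pi]
  rw [h2, h3] at h1
  simp only [even_two.mul_right N, Even.neg_one_pow] at h1
  have : (∑ j ∈ range (2 * N), (-1:ℝ) ^ j * Real.cos (d * (j * τ) + c)) * (2 * Real.cos (d * τ / 2)) = 0 := by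
    rw [h1]; ring
  rcases mul_eq_zero.mp this with h | h
  · exact h
  · linarith

lemma mr_alt_pow (N : ℕ) (hN : 1 ≤ N) (α : ℝ) (l : ℕ) : ∀ (d : ℤ), |d| + l < N → ∀ c : ℝ,
    ∑ j ∈ range (2 * N), (-1:ℝ) ^ j * (Real.cos (d * (j * (Real.pi / N)) + c) * Real.cos (α + j * (Real.pi / N)) ^ l) = 0 := by
  induction l with
  | zero => intro d hd c; simpa using mr_alt N hN d (by simpa using hd) c
  | succ l ih =>
    intro d hd c
    push_cast at hd
    have a1 := ih (d + 1) (by have := abs_add_le d 1; simp at this; omega) (c + α)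
    have a2 := ih (d - 1) (by have := abs_sub d 1; simp at this; omega) (c - α)
    have : ∑ j ∈ range (2 * N), (-1:ℝ) ^ j * (Real.cos (d * (j * (Real.pi / N)) + c) * Real.cos (α + j * (Real.pi / N)) ^ (l+1)) =
      1/2 * (∑ j ∈ range (2 * N), (-1:ℝ) ^ j * (Real.cos ((d + 1 : ℤ) * (j * (Real.pi / N)) + (c + α)) * Real.cos (α + j * (Real.pi / N)) ^ l)) +
      1/2 * (∑ j ∈ range (2 * N), (-1:ℝ) ^ j * (Real.cos ((d - 1 : ℤ) * (j * (Real.pi / N)) + (c - α)) * Real.cos (α + j * (Real.pi / N)) ^ l)) := by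
      rw [mul_sum, mul_sum, ← sum_add_distrib]
      refine sum_congr rfl (fun j _ => ?_)
      have e1 : ((d + 1 : ℤ):ℝ) * (j * (Real.pi / N)) + (c + α) = (d * (j * (Real.pi / N)) + c) + (α + j * (Real.pi / N)) := by push_cast; ring
      have e2 : ((d - 1 : ℤ):ℝ) * (j * (Real.pi / N)) + (c - α) = (d * (j * (Real.pi / N)) + c) - (α + j * (Real.pi / N)) := by push_cast; ring
      rw [e1, e2, Real.cos_add (d * (j * (Real.pi / N)) + c), Real.cos_sub (d * (j * (Real.pi / N)) + c), pow_succ]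
      ring
    rw [this, a1, a2]; ring

noncomputable def mrTau (D : ℕ) : ℝ := Real.pi / ((51 * D : ℕ) : ℝ)
noncomputable def mrK (D j : ℕ) : ℝ := mrD (25 * D) (j * mrTau D) ^ 2 / ((25 * D : ℕ) : ℝ) ^ 4
noncomputable def mrf (D : ℕ) (α : ℝ) (j : ℕ) : ℝ := |Real.cos (α + j * mrTau D) - Real.cos α|

lemma mrK_nonneg (D j : ℕ) : 0 ≤ mrK D j := by unfold mrK; positivity

lemma mrK_alt (D : ℕ) (hD : 1 ≤ D) (α : ℝ) (l : ℕ) (hl : l ≤ D) :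
    ∑ j ∈ range (2 * (51 * D)), (-1:ℝ) ^ j * (mrK D j * Real.cos (α + j * mrTau D) ^ l) = 0 := by
  unfold mrK
  simp_rw [mrJ_sum]
  have : ∀ j : ℕ, (-1:ℝ) ^ j * ((∑ x ∈ mrT (25 * D), Real.cos ((mrE x : ℝ) * (j * mrTau D))) / ((25 * D : ℕ):ℝ) ^ 4 * Real.cos (α + j * mrTau D) ^ l)
    = ∑ x ∈ mrT (25 * D), (1 / ((25 * D : ℕ):ℝ) ^ 4) * ((-1:ℝ) ^ j * (Real.cos ((mrE x : ℝ) * (j * mrTau D) + 0) * Real.cos (α + j * mrTau D) ^ l)) := by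
    intro j
    rw [sum_div, sum_mul, mul_sum]
    refine sum_congr rfl (fun x _ => ?_)
    rw [add_zero]; ring
  simp_rw [this]
  rw [sum_comm]
  refine sum_eq_zero (fun x hx => ?_)
  rw [← mul_sum]
  have h := mr_alt_pow (51 * D) (by omega) α l (mrE x) (by
    simp only [mrT, mem_product, mem_range] at hx
    have : |mrE x| ≤ 50 * (D:ℤ) - 2 := by
      unfold mrE; rw [abs_le]; omega
    push_cast; omega) 0
  unfold mrTau
  rw [h, mul_zero]

lemma mr_pair (N : ℕ) (hN : 1 ≤ N) (a b : ℕ → ℝ) (B0 : ℝ) (h0 : a 0 ≤ B0)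
    (h : ∀ j, 1 ≤ j → j < N → a j + a (2 * N - j) ≤ b j) (hNN : a N ≤ b N) :
    ∑ j ∈ range (2 * N), a j ≤ B0 + ∑ j ∈ Ico 1 (N+1), b j := by
  have h1 : ∑ j ∈ range (2 * N), a j = a 0 + a N + ∑ j ∈ Ico 1 N, (a j + a (2 * N - j)) := by
    rw [sum_add_distrib]
    have e : ∑ j ∈ Ico 1 N, a (2 * N - j) = ∑ j ∈ Ico (N+1) (2*N), a j := by
      refine sum_nbij' (fun j => 2 * N - j) (fun j => 2 * N - j) ?_ ?_ ?_ ?_ ?_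
      · intro j hj; rw [mem_Ico] at *; omega
      · intro j hj; rw [mem_Ico] at *; omega
      · intro j hj; rw [mem_Ico] at *; omega
      · intro j hj; rw [mem_Ico] at *; omega
      · intro j hj; rfl
    rw [e, range_eq_Ico, ← sum_Ico_consecutive a (Nat.zero_le 1) (by omega : 1 ≤ 2 * N),
      ← sum_Ico_consecutive a hN (by omega : N ≤ 2 * N), ← sum_Ico_consecutive a (by omega : N ≤ N+1) (by omega : N + 1 ≤ 2 * N)]
    simp
    ring
  rw [h1, sum_Ico_succ_top hN]
  have : ∑ j ∈ Ico 1 N, (a j + a (2 * N - j)) ≤ ∑ j ∈ Ico 1 N, b j :=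
    sum_le_sum (fun j hj => h j (mem_Ico.mp hj).1 (mem_Ico.mp hj).2)
  linarith

lemma mr_sum_inv_sq (N : ℕ) : ∑ j ∈ Ico 1 (N+1), 1 / (j:ℝ) ^ 2 ≤ 2 := by
  have : ∀ N : ℕ, 1 ≤ N → ∑ j ∈ Ico 1 (N+1), 1 / (j:ℝ) ^ 2 ≤ (2:ℝ) - 1 / (N:ℝ) := by
    intro N hN
    induction N, hN using Nat.le_induction with
    | base => norm_num
    | succ N hN ih =>
      rw [sum_Ico_succ_top (by omega)]
      have hN' : (0:ℝ) < N := by exact_mod_cast hN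
      have : 1 / ((N + 1 : ℕ):ℝ) ^ 2 ≤ 1 / N - 1 / ((N + 1 : ℕ):ℝ) := by
        push_cast
        rw [div_sub_div _ _ (by positivity) (by positivity), div_le_div_iff₀ (by positivity) (by positivity)]
        nlinarith
      linarith
  rcases Nat.eq_zero_or_pos N with h | h
  · subst h; simp
  · have := this N h
    have h2 : (0:ℝ) ≤ 1 / N := by positivity
    linarith

lemma mr_sum_even (N : ℕ) :
    ∑ j ∈ Ico 5 (N+1), (if Even j then 1 / (j:ℝ)^3 + 1 / (200 * (j:ℝ)^2) else 0) ≤ 1/96 + 1/1600 := by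
  have key : ∀ N : ℕ, 3 ≤ N → ∑ j ∈ Ico 5 (2*N), (if Even j then 1 / (j:ℝ)^3 + 1 / (200 * (j:ℝ)^2) else 0)
      ≤ 1/96 + 1/1600 - (1 / (4 * ((2*N:ℝ) - 2) * (2*N)) + 1 / (400 * ((2*N:ℝ) - 2))) := by
    intro N hN
    induction N, hN using Nat.le_induction with
    | base => 
      rw [sum_Ico_succ_top (by norm_num)]; norm_num
    | succ N hN ih =>
      rw [show 2 * (N + 1) = 2 * N + 1 + 1 by ring, sum_Ico_succ_top (by omega), sum_Ico_succ_top (by omega),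
        if_pos (even_two_mul N), if_neg (by simp)]
      have hN' : (3:ℝ) ≤ N := by exact_mod_cast hN
      push_cast
      obtain ⟨t, ht, ht0⟩ : ∃ t : ℝ, (N:ℝ) = t + 1 ∧ 2 ≤ t := ⟨N - 1, by ring, by linarith⟩
      rw [ht] at ih ⊢
      have a1 : 1 / (2 * (t+1))^3 ≤ 1 / (4 * (2 * (t+1) - 2) * (2 * (t+1))) - 1 / (4 * (2 * (t+1+1) - 2) * (2 * (t+1+1))) := by
        have e1 : 4 * (2 * (t+1) - 2) * (2 * (t+1)) = 16 * (t * (t+1)) := by ring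
        have e2 : 4 * (2 * (t+1+1) - 2) * (2 * (t+1+1)) = 16 * ((t+1) * (t+2)) := by ring
        have e3 : 1 / (16 * (t * (t+1))) - 1 / (16 * ((t+1) * (t+2))) = 1 / (8 * (t * (t+1) * (t+2))) := by
          field_simp; ring
        rw [e1, e2, e3]
        apply one_div_le_one_div_of_le (by positivity)
        nlinarith
      have a2 : 1 / (200 * (2 * (t+1))^2) ≤ 1 / (400 * (2 * (t+1) - 2)) - 1 / (400 * (2 * (t+1+1) - 2)) := by
        have e1 : 400 * (2 * (t+1) - 2) = 800 * t := by ring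
        have e2 : 400 * (2 * (t+1+1) - 2) = 800 * (t+1) := by ring
        have e3 : 1 / (800 * t) - 1 / (800 * (t+1)) = 1 / (800 * (t * (t+1))) := by
          field_simp; ring
        rw [e1, e2, e3]
        apply one_div_le_one_div_of_le (by positivity)
        nlinarith
      linarith
  have h1 := key (N + 3) (by omega)
  have h2 : ∑ j ∈ Ico 5 (N+1), (if Even j then 1 / (j:ℝ)^3 + 1 / (200 * (j:ℝ)^2) else 0) ≤ ∑ j ∈ Ico 5 (2*(N+3)), (if Even j then 1 / (j:ℝ)^3 + 1 / (200 * (j:ℝ)^2) else 0) := by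
    apply sum_le_sum_of_subset_of_nonneg
    · apply Ico_subset_Ico le_rfl; omega
    · intro j _ _; split_ifs <;> positivity
  have h3 : 0 ≤ (1 / (4 * ((2*(N+3:ℕ):ℝ) - 2) * (2*(N+3:ℕ))) + 1 / (400 * ((2*(N+3:ℕ):ℝ) - 2))) := by
    have : 0 ≤ (2*(N+3:ℕ):ℝ) - 2 := by push_cast; linarith [(Nat.cast_nonneg N : (0:ℝ) ≤ N)]
    positivity
  linarith
end MRL2

end PartL2

section PartL3

section MRL3
open MeasureTheory Finset

lemma mrTau_pos (D : ℕ) (hD : 1 ≤ D) : 0 < mrTau D := by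
  have : (0:ℝ) < ((51 * D : ℕ):ℝ) := by exact_mod_cast (by omega : 0 < 51 * D)
  unfold mrTau; have := Real.pi_pos; positivity

lemma mrTau_mul (D : ℕ) (hD : 1 ≤ D) : ((51 * D : ℕ):ℝ) * mrTau D = Real.pi := by
  have : (0:ℝ) < ((51 * D : ℕ):ℝ) := by exact_mod_cast (by omega : 0 < 51 * D)
  unfold mrTau; field_simp

lemma mrTau_small (D : ℕ) (hD : 1 ≤ D) : mrTau D ≤ 0.0617 := by
  have h := mrTau_mul D hD
  have h0 := mrTau_pos D hD
  have h1 : (51:ℝ) ≤ ((51 * D : ℕ):ℝ) := by exact_mod_cast (by omega : 51 ≤ 51 * D)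
  have h2 := Real.pi_lt_d4
  have : 51 * mrTau D ≤ ((51 * D : ℕ):ℝ) * mrTau D := by gcongr
  linarith

lemma mrD_refl (M : ℕ) (t : ℝ) : mrD M (2 * Real.pi - t) = mrD M t := by
  unfold mrD mrDc mrDs
  have e1 : ∀ a : ℕ, Real.cos (a * (2 * Real.pi - t)) = Real.cos (a * t) := by
    intro a
    rw [show (a:ℝ) * (2 * Real.pi - t) = a * (2 * Real.pi) - a * t by ring, Real.cos_nat_mul_two_pi_sub]
  have e2 : ∀ a : ℕ, Real.sin (a * (2 * Real.pi - t)) = - Real.sin (a * t) := by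
    intro a
    rw [show (a:ℝ) * (2 * Real.pi - t) = a * (2 * Real.pi) - a * t by ring, Real.sin_nat_mul_two_pi_sub]
  simp_rw [e1, e2, sum_neg_distrib, neg_sq]

lemma mrTau_refl (D : ℕ) (hD : 1 ≤ D) (j : ℕ) (hj : j ≤ 2 * (51 * D)) :
    ((2 * (51 * D) - j : ℕ):ℝ) * mrTau D = 2 * Real.pi - j * mrTau D := by
  rw [Nat.cast_sub hj, ← mrTau_mul D hD]; push_cast; ring

lemma mrK_symm (D : ℕ) (hD : 1 ≤ D) (j : ℕ) (hj : j ≤ 2 * (51 * D)) : mrK D (2 * (51 * D) - j) = mrK D j := by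
  unfold mrK
  rw [mrTau_refl D hD j hj, mrD_refl]

lemma mrf_symm (D : ℕ) (hD : 1 ≤ D) (α : ℝ) (j : ℕ) (hj : j ≤ 2 * (51 * D)) :
    mrf D α (2 * (51 * D) - j) = |Real.cos (α - j * mrTau D) - Real.cos α| := by
  unfold mrf
  rw [mrTau_refl D hD j hj]
  rw [show α + (2 * Real.pi - j * mrTau D) = (α - j * mrTau D) + 2 * Real.pi by ring, Real.cos_add_two_pi]

lemma mrK_zero (D : ℕ) (hD : 1 ≤ D) : mrK D 0 = 1 := by
  unfold mrK mrD mrDc mrDs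
  have : (0:ℝ) < D := by exact_mod_cast hD
  simp
  field_simp

lemma mrK_le (D : ℕ) (hD : 1 ≤ D) (j : ℕ) (h1 : 1 ≤ j) (h2 : j ≤ 51 * D) : mrK D j ≤ (51/25:ℝ) ^ 4 / (j:ℝ)^4 := by
  have hj : (1:ℝ) ≤ j := by exact_mod_cast h1
  have hDp : (1:ℝ) ≤ D := by exact_mod_cast hD
  have h0 := mrTau_pos D hD
  have hle : (j:ℝ) * mrTau D ≤ Real.pi := by
    rw [← mrTau_mul D hD]; gcongr; 
  have hb := mrD_bound (25 * D) (by positivity : 0 < (j:ℝ) * mrTau D) hle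
  have e : Real.pi / (j * mrTau D) = 51 * D / j := by
    rw [← mrTau_mul D hD]; push_cast; field_simp
  rw [e] at hb
  unfold mrK
  calc mrD (25 * D) (j * mrTau D) ^ 2 / ((25 * D : ℕ):ℝ)^4 ≤ ((51 * D / j : ℝ)^2)^2 / ((25 * D : ℕ):ℝ)^4 := by
        have := mrD_nonneg (25 * D) (j * mrTau D)
        gcongr
    _ = _ := by push_cast; field_simp

lemma mr_sin_mul (j : ℕ) (t : ℝ) : |Real.sin (j * t)| ≤ j * |Real.sin t| := by
  induction j with
  | zero => simp
  | succ j ih =>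
    push_cast
    rw [add_mul, one_mul, Real.sin_add]
    have h1 := abs_add_le (Real.sin (j * t) * Real.cos t) (Real.cos (j * t) * Real.sin t)
    rw [abs_mul, abs_mul] at h1
    have h2 : |Real.sin (j * t)| * |Real.cos t| ≤ |Real.sin (j * t)| := mul_le_of_le_one_right (abs_nonneg _) (Real.abs_cos_le_one t)
    have h3 : |Real.cos (j * t)| * |Real.sin t| ≤ |Real.sin t| := mul_le_of_le_one_left (abs_nonneg _) (Real.abs_cos_le_one _)
    linarith

lemma mr_cosdiff (α t : ℝ) (hα : 0 ≤ Real.sin α) :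
    |Real.cos (α + t) - Real.cos α| ≤ Real.sin α * |Real.sin t| + t^2/2 := by
  have e : Real.cos (α + t) - Real.cos α = -(Real.cos α * (1 - Real.cos t) + Real.sin α * Real.sin t) := by
    rw [Real.cos_add]; ring
  rw [e, abs_neg]
  have h1 := abs_add_le (Real.cos α * (1 - Real.cos t)) (Real.sin α * Real.sin t)
  rw [abs_mul, abs_mul, abs_of_nonneg hα, abs_of_nonneg (by linarith [Real.cos_le_one t] : 0 ≤ 1 - Real.cos t)] at h1
  have h2 : |Real.cos α| * (1 - Real.cos t) ≤ 1 - Real.cos t :=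
    mul_le_of_le_one_left (by linarith [Real.cos_le_one t]) (Real.abs_cos_le_one α)
  have h3 := Real.one_sub_sq_div_two_le_cos (x := t)
  linarith

set_option maxHeartbeats 2000000 in
lemma mrK_one (D : ℕ) (hD : 1 ≤ D) : 0.65 ≤ mrK D 1 ∧ mrK D 2 ≤ 0.268 * mrK D 1 ∧ mrK D 4 ≤ 0.0001 := by
  have h0 := mrTau_pos D hD
  have hs := mrTau_small D hD
  have hm := mrTau_mul D hD
  have hDp : (1:ℝ) ≤ D := by exact_mod_cast hD
  have hp1 := Real.pi_gt_d4
  have hp2 := Real.pi_lt_d4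
  set τ := mrTau D with hτ
  push_cast at hm
  have hMp : (0:ℝ) < ((25 * D : ℕ):ℝ) := by push_cast; positivity
  set x := 25 * Real.pi / 102 with hx
  have hx0 : 0 < x := by positivity
  have hx1 : x ≤ 0.77002 := by rw [hx]; linarith
  have hMx : ((25 * D : ℕ):ℝ) * τ / 2 = x := by push_cast; rw [hx, ← hm]; ring
  have c1 := mrD_closed (25 * D) τ
  have c2 := mrD_closed (25 * D) (2 * τ)
  have c4 := mrD_closed (25 * D) (4 * τ)
  rw [hMx] at c1
  have e2 : ((25 * D : ℕ):ℝ) * (2 * τ) / 2 = 2 * x := by rw [← hMx]; ring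
  have e4 : ((25 * D : ℕ):ℝ) * (4 * τ) / 2 = 4 * x := by rw [← hMx]; ring
  rw [e2] at c2
  rw [e4] at c4
  have d1 := mrD_nonneg (25 * D) τ
  have d2 := mrD_nonneg (25 * D) (2 * τ)
  have d4 := mrD_nonneg (25 * D) (4 * τ)
  have M1 := mrD_le (25 * D) τ
  have hsin0 : 0 < Real.sin (τ/2) := Real.sin_pos_of_pos_of_lt_pi (by positivity) (by linarith)
  have hsin1 : Real.sin (τ/2) ≤ τ/2 := Real.sin_le (by positivity)
  unfold mrK
  rw [← hτ]
  push_cast only [Nat.cast_one, Nat.cast_ofNat]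
  rw [one_mul]
  set M := ((25 * D : ℕ):ℝ) with hM
  refine ⟨?_, ?_, ?_⟩
  · have hsx := Real.sin_gt_sub_cube hx0
    have hsx2 : 0.9 * x ≤ Real.sin x := by nlinarith [mul_pos hx0 hx0]
    have a1 : (0.9 * x)^2 ≤ mrD (25 * D) τ * (τ/2)^2 := by
      calc (0.9 * x)^2 ≤ Real.sin x ^ 2 := by gcongr
        _ = mrD (25 * D) τ * Real.sin (τ/2)^2 := c1.symm
        _ ≤ _ := by gcongr
    have a2 : 0.81 * M^2 ≤ mrD (25 * D) τ := by
      rw [← hMx] at a1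
      have : 0 < (τ/2)^2 := by positivity
      have : (0.81 * M^2) * (τ/2)^2 ≤ mrD (25 * D) τ * (τ/2)^2 := by
        refine le_trans ?_ a1
        have : 0 ≤ M^2 * τ^2 := by positivity
        nlinarith
      exact le_of_mul_le_mul_right this (by positivity)
    rw [le_div_iff₀ (by positivity)]
    calc 0.65 * M^4 ≤ (0.81 * M^2)^2 := by nlinarith [pow_pos hMp 4]
      _ ≤ _ := by gcongr
  · rw [show 2 * τ / 2 = τ by ring] at c2
    rw [Real.sin_two_mul, show Real.sin τ = 2 * Real.sin (τ/2) * Real.cos (τ/2) by rw [← Real.sin_two_mul]; ring_nf] at c2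
    have a1 : mrD (25 * D) (2 * τ) * Real.cos (τ/2)^2 = mrD (25 * D) τ * Real.cos x ^ 2 := by
      have : Real.sin (τ/2)^2 * (mrD (25 * D) (2 * τ) * Real.cos (τ/2)^2) = Real.sin (τ/2)^2 * (mrD (25 * D) τ * Real.cos x ^ 2) := by
        linear_combination (1/4) * c2 - Real.cos x ^ 2 * c1
      exact mul_left_cancel₀ (by positivity) this
    have a2 : 0.999 ≤ Real.cos (τ/2)^2 := by
      rw [Real.cos_sq']
      have : Real.sin (τ/2)^2 ≤ (0.0309)^2 := by gcongr; linarith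
      linarith
    have a3 : Real.cos x ^ 2 ≤ 0.5155 := by
      rw [Real.cos_sq]
      have : Real.cos (2 * x) = Real.sin (Real.pi / 102) := by
        rw [← Real.cos_pi_div_two_sub]; congr 1; rw [hx]; ring
      rw [this]
      have := Real.sin_le (by positivity : 0 ≤ Real.pi / 102)
      linarith
    have a4 : mrD (25 * D) (2 * τ) ≤ 0.5166 * mrD (25 * D) τ := by nlinarith
    rw [← mul_div_assoc]
    gcongr
    nlinarith
  · have a1 : Real.sin (4 * x)^2 ≤ 0.0617 ^ 2 := by
      have : Real.sin (4 * x) = Real.sin (Real.pi / 51) := by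
        rw [← Real.sin_pi_sub]; congr 1; rw [hx]; ring
      rw [this]
      have h1 := Real.sin_le (by positivity : 0 ≤ Real.pi / 51)
      have h2 : 0 ≤ Real.sin (Real.pi / 51) := Real.sin_nonneg_of_nonneg_of_le_pi (by positivity) (by linarith)
      gcongr; linarith
    rw [show 4 * τ / 2 = 2 * τ by ring] at c4
    have a2 := Real.mul_le_sin (by positivity : 0 ≤ 2 * τ) (by linarith)
    have a3 : 4 / (51 * D) ≤ Real.sin (2 * τ) := by
      refine le_trans (le_of_eq ?_) a2
      rw [← hm]; field_simp; norm_num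
    have a4 : mrD (25 * D) (4 * τ) * (4 / (51 * D))^2 ≤ 0.0617^2 := by
      calc _ ≤ mrD (25 * D) (4 * τ) * Real.sin (2 * τ)^2 := by gcongr
        _ ≤ _ := by rw [c4]; exact a1
    have a5 : mrD (25 * D) (4 * τ) ≤ 0.01 * M^2 := by
      have : mrD (25 * D) (4 * τ) * (4 / (51 * D))^2 * (51 * D / 4)^2 = mrD (25 * D) (4 * τ) := by field_simp
      rw [← this]
      calc _ ≤ 0.0617^2 * (51 * D / 4 : ℝ)^2 := by gcongr
        _ ≤ _ := by rw [hM]; push_cast; nlinarith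
    rw [div_le_iff₀ (by positivity)]
    calc _ ≤ (0.01 * M^2)^2 := by gcongr
      _ ≤ _ := by nlinarith [pow_pos hMp 4]
end MRL3

end PartL3

section PartL4

section MRL4
open MeasureTheory Finset

lemma mrf_bound (D : ℕ) (hD : 1 ≤ D) (α : ℝ) (hα : 0 ≤ Real.sin α) (j : ℕ) (hj : j ≤ 51 * D) :
    mrf D α j ≤ Real.sin α * (j * Real.sin (mrTau D)) + j^2 * mrTau D ^ 2 / 2 ∧
    mrf D α (2 * (51 * D) - j) ≤ Real.sin α * (j * Real.sin (mrTau D)) + j^2 * mrTau D ^ 2 / 2 := by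
  have h0 := mrTau_pos D hD
  have hs := mrTau_small D hD
  have hsp : 0 ≤ Real.sin (mrTau D) := Real.sin_nonneg_of_nonneg_of_le_pi h0.le (by linarith [Real.pi_gt_d4])
  have h1 := mr_sin_mul j (mrTau D)
  rw [abs_of_nonneg hsp] at h1
  constructor
  · have h2 := mr_cosdiff α (j * mrTau D) hα
    rw [mul_pow] at h2
    unfold mrf
    refine h2.trans ?_
    gcongr
  · rw [mrf_symm D hD α j (by omega)]
    have h2 := mr_cosdiff α (-(j * mrTau D)) hα
    rw [Real.sin_neg, abs_neg, neg_sq, mul_pow, ← sub_eq_add_neg] at h2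
    refine h2.trans ?_
    gcongr

lemma mrf_one (D : ℕ) (hD : 1 ≤ D) (α : ℝ) (hα : 0 ≤ Real.sin α) :
    2 * Real.sin α * Real.sin (mrTau D) ≤ mrf D α 1 + mrf D α (2 * (51 * D) - 1) := by
  rw [mrf_symm D hD α 1 (by omega)]
  unfold mrf
  push_cast
  rw [one_mul]
  have h1 := neg_abs_le (Real.cos (α + mrTau D) - Real.cos α)
  have h2 := le_abs_self (Real.cos (α - mrTau D) - Real.cos α)
  have : Real.cos (α - mrTau D) - Real.cos (α + mrTau D) = 2 * Real.sin α * Real.sin (mrTau D) := by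
    rw [Real.cos_sub, Real.cos_add]; ring
  linarith

lemma mr_neg_pow_refl (N j : ℕ) (hj : j ≤ 2 * N) : (-1:ℝ) ^ (2 * N - j) = (-1) ^ j := by
  have h : (-1:ℝ) ^ (2 * N - j) * (-1) ^ j = 1 := by
    rw [← pow_add, Nat.sub_add_cancel hj]; simp
  rcases neg_one_pow_eq_or ℝ j with h' | h' <;> rw [h'] at h ⊢ <;> linarith

lemma mr_sig (D : ℕ) (hD : 1 ≤ D) (α : ℝ) (hα : 200 * mrTau D ≤ Real.sin α) :
    ∑ j ∈ range (2 * (51 * D)), (-1:ℝ) ^ j * (mrK D j * mrf D α j) ≤ -(0.1 * (2 * Real.sin α * Real.sin (mrTau D))) := by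
  have h0 := mrTau_pos D hD
  have hs := mrTau_small D hD
  have hα0 : 0 ≤ Real.sin α := by linarith
  have hpi := Real.pi_gt_d4
  have hpi2 := Real.pi_lt_d4
  have hst : (2 / Real.pi) * mrTau D ≤ Real.sin (mrTau D) := Real.mul_le_sin h0.le (by linarith)
  have hst2 : 0.6 * mrTau D ≤ Real.sin (mrTau D) := by
    refine le_trans ?_ hst
    gcongr
    rw [le_div_iff₀ Real.pi_pos]; linarith
  set τ := mrTau D with hτ
  set A := 2 * Real.sin α * Real.sin τ with hA
  have hA1 : 200 * τ^2 ≤ A := by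
    have : (200 * τ) * (0.6 * τ) ≤ Real.sin α * Real.sin τ := by gcongr
    nlinarith [sq_nonneg τ]
  have hA0 : 0 ≤ A := le_trans (by positivity) hA1
  obtain ⟨k1, k2, k4⟩ := mrK_one D hD
  have hfb : ∀ j ≤ 51 * D, mrf D α j ≤ A / 2 * (j + (j:ℝ)^2/200) ∧ mrf D α (2 * (51 * D) - j) ≤ A / 2 * (j + (j:ℝ)^2/200) := by
    intro j hj
    obtain ⟨b1, b2⟩ := mrf_bound D hD α hα0 j hj
    have : Real.sin α * (j * Real.sin (mrTau D)) + j^2 * mrTau D ^ 2 / 2 ≤ A / 2 * (j + (j:ℝ)^2/200) := by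
      have : (j:ℝ)^2 * (200 * τ^2) ≤ j^2 * A := by gcongr
      rw [← hτ]
      have e : Real.sin α * (j * Real.sin τ) = A / 2 * j := by rw [hA]; ring
      rw [e]; linarith
    exact ⟨b1.trans this, b2.trans this⟩
  have hpow : ∀ j, j ≤ 2 * (51 * D) → (-1:ℝ)^(2 * (51 * D) - j) = (-1)^j := fun j hj => mr_neg_pow_refl _ j hj
  set b : ℕ → ℝ := fun j => if j = 1 then -(mrK D 1 * A) else if Even j then A * (mrK D j * (j + (j:ℝ)^2/200)) else 0 with hb
  have hmain := mr_pair (51 * D) (by omega) (fun j => (-1:ℝ) ^ j * (mrK D j * mrf D α j)) b 0 (by simp [mrf])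
    (by
      intro j hj1 hj2
      rw [hpow j (by omega), mrK_symm D hD j (by omega)]
      simp only [hb]
      have kn := mrK_nonneg D j
      have fn1 : 0 ≤ mrf D α j := abs_nonneg _
      have fn2 : 0 ≤ mrf D α (2 * (51 * D) - j) := abs_nonneg _
      obtain ⟨b1, b2⟩ := hfb j (by omega)
      split_ifs with h1 h2
      · subst h1
        have := mrf_one D hD α hα0
        have := mul_le_mul_of_nonneg_left this kn
        rw [← hτ, ← hA] at this
        linarith
      · rw [h2.neg_one_pow]
        have := mul_le_mul_of_nonneg_left (add_le_add b1 b2) kn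
        linarith
      · rw [(Nat.not_even_iff_odd.mp h2).neg_one_pow]
        have : 0 ≤ mrK D j * mrf D α j + mrK D j * mrf D α (2 * (51 * D) - j) := by positivity
        linarith)
    (by
      simp only [hb]
      rw [if_neg (by omega)]
      have kn := mrK_nonneg D (51 * D)
      have fn1 : 0 ≤ mrf D α (51 * D) := abs_nonneg _
      obtain ⟨b1, b2⟩ := hfb (51 * D) le_rfl
      split_ifs with h2
      · rw [h2.neg_one_pow]
        have := mul_le_mul_of_nonneg_left b1 kn
        have h3 : 0 ≤ mrK D (51 * D) * (A / 2 * (((51 * D : ℕ):ℝ) + ((51 * D : ℕ):ℝ)^2/200)) := by positivity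
        linarith
      · rw [(Nat.not_even_iff_odd.mp h2).neg_one_pow]
        have : 0 ≤ mrK D (51 * D) * mrf D α (51 * D) := by positivity
        linarith)
  refine hmain.trans ?_
  rw [zero_add, sum_eq_sum_Ico_succ_bot (by omega), sum_eq_sum_Ico_succ_bot (by omega), sum_eq_sum_Ico_succ_bot (by omega), sum_eq_sum_Ico_succ_bot (by omega)]
  have v1 : b 1 = -(mrK D 1 * A) := by simp [hb]
  have v2 : b (1+1) = A * (mrK D 2 * 2.02) := by simp [hb]; left; norm_num
  have v3 : b (1+1+1) = 0 := by simp [hb]; intro h; exact absurd h (by decide)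
  have v4 : b (1+1+1+1) = A * (mrK D 4 * 4.08) := by
    simp only [hb]; norm_num
  rw [v1, v2, v3, v4]
  have v5 : ∑ j ∈ Ico (1+1+1+1+1) (51 * D + 1), b j ≤ A * (51/25)^4 * (1/96 + 1/1600) := by
    have := mr_sum_even (51 * D)
    calc ∑ j ∈ Ico (1+1+1+1+1) (51 * D + 1), b j ≤ ∑ j ∈ Ico 5 (51 * D + 1), A * (51/25)^4 * (if Even j then 1 / (j:ℝ)^3 + 1 / (200 * (j:ℝ)^2) else 0) := by
          apply sum_le_sum
          intro j hj
          rw [mem_Ico] at hj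
          simp only [hb]
          rw [if_neg (by omega)]
          split_ifs
          · have hk := mrK_le D hD j (by omega) (by omega)
            have hj : (0:ℝ) < j := by exact_mod_cast (by omega : 0 < j)
            calc A * (mrK D j * (j + (j:ℝ)^2/200)) ≤ A * ((51/25:ℝ) ^ 4 / (j:ℝ)^4 * (j + (j:ℝ)^2/200)) := by gcongr
              _ = _ := by field_simp
          · simp
      _ ≤ _ := by rw [← mul_sum]; gcongr
  have q1 : A * (mrK D 2 * 2.02) ≤ A * (0.268 * mrK D 1 * 2.02) := by gcongr
  have q2 : A * (mrK D 4 * 4.08) ≤ A * (0.0001 * 4.08) := by gcongr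
  have q3 : A * 0.65 ≤ A * mrK D 1 := by gcongr
  norm_num at v5
  nlinarith

lemma mr_sumK (D : ℕ) (hD : 1 ≤ D) : 1 ≤ ∑ j ∈ range (2 * (51 * D)), mrK D j ∧ ∑ j ∈ range (2 * (51 * D)), mrK D j ≤ 73 := by
  constructor
  · rw [← mrK_zero D hD]
    exact single_le_sum (f := fun j => mrK D j) (fun j _ => mrK_nonneg D j) (mem_range.mpr (by omega))
  · have hk : ∀ j : ℕ, 1 ≤ j → j ≤ 51 * D → mrK D j ≤ 18 * (1 / (j:ℝ)^2) := by
      intro j h1 h2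
      have hj : (1:ℝ) ≤ j := by exact_mod_cast h1
      have := mrK_le D hD j h1 h2
      refine this.trans ?_
      rw [mul_one_div, div_le_div_iff₀ (by positivity) (by positivity)]
      have : (j:ℝ)^2 ≤ j^4 := pow_le_pow_right₀ hj (by norm_num)
      nlinarith
    have := mr_pair (51 * D) (by omega) (mrK D) (fun j => 36 * (1 / (j:ℝ)^2)) 1 (mrK_zero D hD).le
      (by intro j h1 h2; rw [mrK_symm D hD j (by omega)]; linarith [hk j h1 h2.le])
      (by have := hk (51 * D) (by omega) le_rfl
          have h3 : 0 ≤ (1 / ((51 * D : ℕ):ℝ)^2) := by positivity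
          linarith)
    rw [← mul_sum] at this
    linarith [mr_sum_inv_sq (51 * D)]

lemma mr_sumKf (D : ℕ) (hD : 1 ≤ D) (α : ℝ) (hα : 0 ≤ Real.sin α) :
    ∑ j ∈ range (2 * (51 * D)), mrK D j * mrf D α j ≤ 72 * (Real.sin α * mrTau D + mrTau D ^ 2) ∧
    ∑ j ∈ range (2 * (51 * D)), mrK D j * mrf D α j ^ 2 ≤ 144 * (Real.sin α ^ 2 * mrTau D ^ 2 + mrTau D ^ 3) := by
  have h0 := mrTau_pos D hD
  have hs := mrTau_small D hD
  have hst : Real.sin (mrTau D) ≤ mrTau D := Real.sin_le h0.le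
  have hk : ∀ j : ℕ, 1 ≤ j → j ≤ 51 * D → mrK D j ≤ 18 * (1 / (j:ℝ)^4) := by
    intro j h1 h2
    have hj : (1:ℝ) ≤ j := by exact_mod_cast h1
    refine (mrK_le D hD j h1 h2).trans ?_
    rw [mul_one_div, div_le_div_iff₀ (by positivity) (by positivity)]
    have : (0:ℝ) ≤ j^4 := by positivity
    nlinarith
  set τ := mrTau D with hτ
  have hf : ∀ j : ℕ, j ≤ 51 * D → mrf D α j ≤ Real.sin α * (j * τ) + (j:ℝ)^2 * τ^2/2 ∧ mrf D α (2 * (51 * D) - j) ≤ Real.sin α * (j * τ) + (j:ℝ)^2 * τ^2/2 := by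
    intro j hj
    obtain ⟨b1, b2⟩ := mrf_bound D hD α hα j hj
    have : Real.sin α * (j * Real.sin τ) + (j:ℝ)^2 * τ ^ 2 / 2 ≤ Real.sin α * (j * τ) + (j:ℝ)^2 * τ^2/2 := by gcongr
    exact ⟨b1.trans this, b2.trans this⟩
  have hf0 : ∀ j, 0 ≤ mrf D α j := fun j => abs_nonneg _
  have hz : mrf D α 0 = 0 := by simp [mrf]
  have g1 : ∀ j x : ℕ, 1 ≤ j → j ≤ 51 * D → mrf D α x ≤ Real.sin α * (j * τ) + (j:ℝ)^2 * τ^2/2 →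
      mrK D j * mrf D α x ≤ (18 * (Real.sin α * τ + τ^2/2)) * (1 / (j:ℝ)^2) := by
    intro j x h1 h2 h3
    have hj : (1:ℝ) ≤ j := by exact_mod_cast h1
    calc mrK D j * mrf D α x ≤ 18 * (1 / (j:ℝ)^4) * (Real.sin α * (j^2 * τ) + (j:ℝ)^2 * τ^2/2) := by
          gcongr
          · exact hf0 x
          · exact hk j h1 h2
          · refine h3.trans ?_
            gcongr
            nlinarith
      _ = _ := by field_simp
  have g2 : ∀ j x : ℕ, 1 ≤ j → j ≤ 51 * D → mrf D α x ≤ Real.sin α * (j * τ) + (j:ℝ)^2 * τ^2/2 →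
      mrK D j * mrf D α x ^ 2 ≤ 36 * (Real.sin α ^ 2 * τ^2) * (1 / (j:ℝ)^2) + 9 * τ^4 := by
    intro j x h1 h2 h3
    have hj : (1:ℝ) ≤ j := by exact_mod_cast h1
    calc mrK D j * mrf D α x ^ 2 ≤ 18 * (1 / (j:ℝ)^4) * (2 * (Real.sin α * (j * τ))^2 + 2 * ((j:ℝ)^2 * τ^2/2)^2) := by
          gcongr
          · exact hk j h1 h2
          · have := hf0 x
            calc mrf D α x ^ 2 ≤ (Real.sin α * (j * τ) + (j:ℝ)^2 * τ^2/2)^2 := by gcongr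
              _ ≤ _ := by nlinarith [sq_nonneg (Real.sin α * (j * τ) - (j:ℝ)^2 * τ^2/2)]
      _ = _ := by field_simp; ring
  constructor
  · have := mr_pair (51 * D) (by omega) (fun j => mrK D j * mrf D α j) (fun j => (36 * (Real.sin α * τ + τ^2/2)) * (1 / (j:ℝ)^2)) 0 (by simp [hz])
      (by intro j h1 h2
          rw [mrK_symm D hD j (by omega)]
          linarith [g1 j j h1 h2.le (hf j h2.le).1, g1 j _ h1 h2.le (hf j h2.le).2])
      (by have := g1 (51 * D) (51 * D) (by omega) le_rfl (hf _ le_rfl).1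
          have h3 : 0 ≤ (18 * (Real.sin α * τ + τ^2/2)) * (1 / ((51 * D : ℕ):ℝ)^2) := by positivity
          linarith)
    rw [← mul_sum, zero_add] at this
    have h4 : 36 * (Real.sin α * τ + τ^2/2) * ∑ j ∈ Ico 1 (51 * D + 1), 1 / (j:ℝ)^2 ≤ 36 * (Real.sin α * τ + τ^2/2) * 2 := by
      gcongr; exact mr_sum_inv_sq _
    nlinarith [sq_nonneg τ]
  · have := mr_pair (51 * D) (by omega) (fun j => mrK D j * mrf D α j ^ 2) (fun j => 72 * (Real.sin α ^ 2 * τ^2) * (1 / (j:ℝ)^2) + 18 * τ^4) 0 (by simp [hz])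
      (by intro j h1 h2
          rw [mrK_symm D hD j (by omega)]
          linarith [g2 j j h1 h2.le (hf j h2.le).1, g2 j _ h1 h2.le (hf j h2.le).2])
      (by have := g2 (51 * D) (51 * D) (by omega) le_rfl (hf _ le_rfl).1
          have h3 : 0 ≤ 36 * (Real.sin α ^ 2 * τ^2) * (1 / ((51 * D : ℕ):ℝ)^2) + 9 * τ^4 := by positivity
          linarith)
    rw [sum_add_distrib, ← mul_sum, zero_add, sum_const, Nat.card_Ico, nsmul_eq_mul] at this
    have h4 : 72 * (Real.sin α ^ 2 * τ^2) * ∑ j ∈ Ico 1 (51 * D + 1), 1 / (j:ℝ)^2 ≤ 72 * (Real.sin α ^ 2 * τ^2) * 2 := by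
      gcongr; exact mr_sum_inv_sq _
    have h5 : ((51 * D + 1 - 1 : ℕ):ℝ) * (18 * τ^4) = Real.pi * 18 * τ^3 := by
      rw [Nat.add_sub_cancel, ← mrTau_mul D hD]; ring
    rw [h5] at this
    have h6 : Real.pi * 18 * τ^3 ≤ 144 * τ^3 := by
      gcongr; linarith [Real.pi_lt_d4]
    linarith
end MRL4

end PartL4

section PartL5

section MRL5
open MeasureTheory Finset

lemma mr_trig (D : ℕ) (hD : 1 ≤ D) (α : ℝ) (hα : 200 * mrTau D ≤ Real.sin α) :
    ∃ (m : ℕ) (w : Bool → Fin m → ℝ) (y : Fin m → ℝ), (∀ b k, 0 ≤ w b k) ∧ (∀ k, |y k| ≤ 1) ∧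
      (∀ b, ∑ k, w b k = 1) ∧ (∀ l ≤ D, ∑ k, (w true k - w false k) * y k ^ l = 0) ∧
      Real.sin α * mrTau D / 1000 ≤ ∑ k, (w true k - w false k) * |y k - Real.cos α| ∧
      (∀ b, ∑ k, w b k * |y k - Real.cos α| ≤ 144 * (Real.sin α * mrTau D + mrTau D ^ 2)) ∧
      (∀ b, ∑ k, w b k * (y k - Real.cos α)^2 ≤ 288 * (Real.sin α ^ 2 * mrTau D ^ 2 + mrTau D ^ 3)) := by
  have h0 := mrTau_pos D hD
  have hs := mrTau_small D hD
  have hα0 : 0 ≤ Real.sin α := by linarith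
  obtain ⟨z1, z2⟩ := mr_sumK D hD
  set Z := ∑ j ∈ range (2 * (51 * D)), mrK D j with hZ
  have hZ0 : 0 < Z := by linarith
  obtain ⟨f1, f2⟩ := mr_sumKf D hD α hα0
  have hsg : ∀ j : ℕ, (-1:ℝ)^j ≤ 1 ∧ -1 ≤ (-1:ℝ)^j := by
    intro j
    rcases neg_one_pow_eq_or ℝ j with h | h <;> rw [h] <;> norm_num
  set W : Bool → ℕ → ℝ := fun b j => (mrK D j + (if b then -1 else 1) * ((-1)^j * mrK D j)) / Z with hW
  have hWn : ∀ b j, 0 ≤ W b j := by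
    intro b j
    have := hsg j
    have hk := mrK_nonneg D j
    simp only [hW]
    apply div_nonneg _ hZ0.le
    cases b <;> simp <;> nlinarith
  have hWle : ∀ b j, W b j ≤ 2 * mrK D j := by
    intro b j
    have := hsg j
    have hk := mrK_nonneg D j
    simp only [hW]
    rw [div_le_iff₀ hZ0]
    have : 2 * mrK D j * 1 ≤ 2 * mrK D j * Z := by gcongr
    refine le_trans ?_ this
    cases b <;> simp <;> nlinarith
  have hWd : ∀ j, W true j - W false j = -(2 / Z) * ((-1)^j * mrK D j) := by
    intro j
    simp only [hW]; simp; field_simp; ring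
  have halt0 : ∑ j ∈ range (2 * (51 * D)), (-1:ℝ)^j * mrK D j = 0 := by
    have := mrK_alt D hD α 0 (Nat.zero_le _)
    simpa using this
  refine ⟨2 * (51 * D), fun b k => W b k, fun k => Real.cos (α + (k:ℕ) * mrTau D), fun b k => hWn b k, fun k => Real.abs_cos_le_one _, ?_, ?_, ?_, ?_, ?_⟩
  · intro b
    rw [Fin.sum_univ_eq_sum_range (fun j => W b j)]
    simp only [hW]
    rw [← sum_div, sum_add_distrib, ← mul_sum, halt0, mul_zero, add_zero, ← hZ, div_self hZ0.ne']
  · intro l hl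
    rw [Fin.sum_univ_eq_sum_range (fun j => (W true j - W false j) * Real.cos (α + (j:ℕ) * mrTau D) ^ l)]
    simp_rw [hWd]
    have := mrK_alt D hD α l hl
    simp_rw [mul_assoc]
    rw [← mul_sum, this, mul_zero]
  · rw [Fin.sum_univ_eq_sum_range (fun j => (W true j - W false j) * |Real.cos (α + (j:ℕ) * mrTau D) - Real.cos α|)]
    simp_rw [hWd]
    have h1 := mr_sig D hD α hα
    unfold mrf at h1
    simp_rw [mul_assoc]
    rw [← mul_sum]
    have hst : (2 / Real.pi) * mrTau D ≤ Real.sin (mrTau D) := Real.mul_le_sin h0.le (by linarith [Real.pi_gt_d4])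
    have hst2 : 0.6 * mrTau D ≤ Real.sin (mrTau D) := by
      refine le_trans ?_ hst
      gcongr
      rw [le_div_iff₀ Real.pi_pos]; linarith [Real.pi_lt_d4]
    have h2 : 0.1 * (2 * Real.sin α * (0.6 * mrTau D)) ≤ 0.1 * (2 * Real.sin α * Real.sin (mrTau D)) := by gcongr
    have h3 : 2 / 73 ≤ 2 / Z := by gcongr
    set X := ∑ j ∈ range (2 * (51 * D)), (-1:ℝ) ^ j * (mrK D j * |Real.cos (α + j * mrTau D) - Real.cos α|)
    have h4 : 0.12 * (Real.sin α * mrTau D) ≤ -X := by linarith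
    have h5 : 2 / 73 * (0.12 * (Real.sin α * mrTau D)) ≤ 2 / Z * (-X) := by gcongr
    have h6 : 0 ≤ Real.sin α * mrTau D := by positivity
    linarith
  · intro b
    rw [Fin.sum_univ_eq_sum_range (fun j => W b j * |Real.cos (α + (j:ℕ) * mrTau D) - Real.cos α|)]
    calc _ ≤ ∑ j ∈ range (2 * (51 * D)), 2 * (mrK D j * mrf D α j) := by
          apply sum_le_sum
          intro j _
          rw [← mul_assoc]
          unfold mrf
          gcongr
          exact hWle b j
      _ ≤ _ := by rw [← mul_sum]; linarith
  · intro b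
    rw [Fin.sum_univ_eq_sum_range (fun j => W b j * (Real.cos (α + (j:ℕ) * mrTau D) - Real.cos α)^2)]
    calc _ ≤ ∑ j ∈ range (2 * (51 * D)), 2 * (mrK D j * mrf D α j ^ 2) := by
          apply sum_le_sum
          intro j _
          rw [← mul_assoc]
          unfold mrf
          rw [sq_abs]
          gcongr
          exact hWle b j
      _ ≤ _ := by rw [← mul_sum]; linarith
end MRL5

end PartL5

section PartL6

section MRL6
open MeasureTheory Finset

/-- the pair of priors in one coordinate, on the scale of Poisson means -/
structure MRPrior (ε c L μ : ℝ) (m : ℕ) (w : Bool → Fin m → ℝ) (lam : Fin m → ℝ) : Prop where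
  wn : ∀ b k, 0 ≤ w b k
  ln : ∀ k, 0 ≤ lam k
  ws : ∀ b, ∑ k, w b k = 1
  m1 : ∑ k, w true k * lam k = ∑ k, w false k * lam k
  a1 : ∀ b, ∑ k, w b k * |lam k - μ| ≤ μ / 2
  a2 : ∀ b, ∑ k, w b k * (lam k - μ)^2 ≤ ε * μ
  sep : c * Real.sqrt (μ / L) ≤ ∑ k, w true k * |lam k - μ| - ∑ k, w false k * |lam k - μ|
  tv : ∀ K : Finset ℕ, ∑ y ∈ K, |∑ k, w true k * poissonPMF (lam k) y - ∑ k, w false k * poissonPMF (lam k) y| ≤ Real.exp (-3 * L)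

set_option maxHeartbeats 4000000 in
lemma mr_prior_core {C g ε L μ μ0 R α : ℝ} (hC : 13 ≤ C) (hg : 0 < g) (hCg : 100 ≤ C * g) (hε : 0 < ε) (hCε : 3 ≤ C * ε)
    (hL : 1 ≤ L) (hμ : g^2 ≤ μ * L) (h0 : 0 < μ0) (hR : 0 < R) (hRμ : R ≤ μ0) (hμe : μ = μ0 - R * Real.cos α)
    (hRL : R^2/μ0 = L/2) (hs1 : μ * L / 4 ≤ (R * Real.sin α)^2) (hs2 : (R * Real.sin α)^2 ≤ μ * L) (hR2 : R^2 ≤ L^2/4 + (R * Real.sin α)^2)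
    (hsin : 12.5 / (C * L) ≤ Real.sin α) :
    ∃ m w lam, MRPrior ε (1 / (68000 * C)) L μ m w lam := by
  have hL0 : 0 < L := by linarith
  have hC0 : 0 < C := by linarith
  have hμ0 : 0 < μ := by
    by_contra h; push Not at h; nlinarith [pow_pos hg 2]
  have hu : 13 ≤ C * L := by nlinarith
  set D := ⌈C * L⌉₊ with hDd
  have hD1 : C * L ≤ D := Nat.le_ceil _
  have hD2 : (D:ℝ) ≤ C * L + 1 := (Nat.ceil_lt_add_one (by linarith)).le
  have hD : 1 ≤ D := by
    have : (1:ℝ) ≤ D := by linarith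
    exact_mod_cast this
  have ht0 := mrTau_pos D hD
  have htm := mrTau_mul D hD
  have hts := mrTau_small D hD
  set τ := mrTau D with hτ
  push_cast at htm
  have hp1 := Real.pi_gt_d4
  have hp2 := Real.pi_lt_d4
  have hA : C * L * τ ≤ 1/16 := by nlinarith
  have hB : 1/34 ≤ C * L * τ := by nlinarith
  have hLτ : L * τ ≤ 1 / (16 * C) := by rw [le_div_iff₀ (by positivity)]; nlinarith
  have hs0 : 0 < Real.sin α := lt_of_lt_of_le (by positivity) hsin
  have hα : 200 * τ ≤ Real.sin α := by
    refine le_trans ?_ hsin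
    rw [le_div_iff₀ (by positivity)]
    nlinarith
  set s := R * Real.sin α with hsd
  have hsp : 0 < s := by positivity
  set r := Real.sqrt (μ / L) with hr
  have hr2 : r^2 = μ / L := Real.sq_sqrt (by positivity)
  have hr2' : r^2 * L = μ := by rw [hr2]; field_simp
  have hr0 : 0 ≤ r := Real.sqrt_nonneg _
  have hrL : (r * L)^2 = μ * L := by rw [mul_pow, hr2]; field_simp
  have hsr : s ≤ r * L := by
    apply le_of_sq_le_sq _ (by positivity)
    rw [hrL]; exact hs2
  have hsr2 : r * L / 2 ≤ s := by
    apply le_of_sq_le_sq _ hsp.le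
    rw [div_pow, hrL]; linarith
  have hrg : r * g ≤ μ := by
    apply le_of_sq_le_sq _ hμ0.le
    have : (r * g)^2 = μ / L * g^2 := by rw [mul_pow, hr2]
    rw [this, div_mul_eq_mul_div, div_le_iff₀ hL0]
    nlinarith
  have hsτ : s * τ ≤ μ / 1600 := by
    calc s * τ ≤ r * L * τ := by gcongr
      _ = r * (L * τ) := by ring
      _ ≤ r * (1 / (16 * C)) := by gcongr
      _ ≤ μ / 1600 := by
        rw [mul_one_div, div_le_div_iff₀ (by positivity) (by positivity)]
        nlinarith
  have hLg : 1 / L ≤ μ / g^2 := by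
    rw [div_le_div_iff₀ hL0 (by positivity)]; linarith
  have hCg2 : 10000 ≤ (C * g)^2 := by nlinarith
  have hLτ2 : L * τ^2 ≤ μ / 2560000 := by
    calc L * τ^2 = (L * τ)^2 * (1 / L) := by field_simp
      _ ≤ (1 / (16 * C))^2 * (μ / g^2) := by gcongr
      _ = μ / (256 * (C * g)^2) := by field_simp; norm_num
      _ ≤ μ / 2560000 := by gcongr; linarith
  have hRs : R ≤ L / 2 + s := by
    apply le_of_sq_le_sq _ (by positivity)
    nlinarith
  obtain ⟨m, w, y, w0, y1, ws, wm, wsep, wa1, wa2⟩ := mr_trig D hD α hα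
  rw [← hτ] at wsep wa1 wa2
  have elam : ∀ k, μ0 - R * y k - μ = -R * (y k - Real.cos α) := by intro k; rw [hμe]; ring
  have eabs : ∀ k, |μ0 - R * y k - μ| = R * |y k - Real.cos α| := by
    intro k; rw [elam, abs_mul, abs_neg, abs_of_pos hR]
  refine ⟨m, w, fun k => μ0 - R * y k, ?_⟩
  have hwm1 : ∑ k, (w true k - w false k) * y k = 0 := by simpa using wm 1 (by omega)
  have hws0 : ∑ k, (w true k - w false k) = 0 := by
    rw [sum_sub_distrib, ws, ws]; ring
  constructor
  · exact w0
  · intro k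
    have := (abs_le.mp (y1 k)).2
    nlinarith
  · exact ws
  · rw [← sub_eq_zero, ← sum_sub_distrib]
    have : ∀ k, w true k * (μ0 - R * y k) - w false k * (μ0 - R * y k) = μ0 * (w true k - w false k) - R * ((w true k - w false k) * y k) := by intro k; ring
    simp_rw [this]
    rw [sum_sub_distrib, ← mul_sum, ← mul_sum, hwm1, hws0]; ring
  · intro b
    simp_rw [eabs]
    have : ∀ k, w b k * (R * |y k - Real.cos α|) = R * (w b k * |y k - Real.cos α|) := by intro k; ring
    simp_rw [this]
    rw [← mul_sum]
    have h1 : R * τ^2 ≤ (L / 2 + s) * τ^2 := by gcongr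
    have h2 : s * τ^2 ≤ s * τ := by
      have : τ^2 ≤ τ := by nlinarith
      gcongr
    calc R * ∑ k, w b k * |y k - Real.cos α| ≤ R * (144 * (Real.sin α * τ + τ^2)) := by gcongr; exact wa1 b
      _ = 144 * (s * τ + R * τ^2) := by rw [hsd]; ring
      _ ≤ μ / 2 := by nlinarith
  · intro b
    simp_rw [elam]
    have : ∀ k, w b k * (-R * (y k - Real.cos α))^2 = R^2 * (w b k * (y k - Real.cos α)^2) := by intro k; ring
    simp_rw [this]
    rw [← mul_sum]
    have h3 : s^2 * τ^3 ≤ s^2 * τ^2 := by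
      have : τ^3 ≤ τ^2 := by nlinarith [pow_pos ht0 2]
      gcongr
    have h4 : R^2 * τ^3 ≤ (L^2/4 + s^2) * τ^3 := by gcongr
    have h5 : s^2 * τ^2 ≤ μ / (256 * C) := by
      calc s^2 * τ^2 ≤ (μ * L) * τ^2 := by gcongr
        _ = μ * (L * τ) * (L * τ) * (1/L) := by field_simp
        _ ≤ μ * (1 / (16 * C)) * (1 / (16 * 1)) * (1 / 1) := by
            gcongr
            exact hLτ.trans (by gcongr; linarith)
        _ = _ := by field_simp; norm_num
    have h6 : L^2 * τ^3 ≤ μ / (4096 * C) := by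
      calc L^2 * τ^3 = (L * τ)^3 * (1 / L) := by field_simp
        _ ≤ (1 / (16 * C))^3 * (μ / g^2) := by gcongr
        _ = μ / (4096 * C * (C * g)^2) := by field_simp; norm_num
        _ ≤ μ / (4096 * C) := div_le_div_of_nonneg_left hμ0.le (by positivity) (le_mul_of_one_le_right (by positivity) (by linarith))
    have h7 : μ / C ≤ ε * μ / 3 := by
      rw [div_le_div_iff₀ hC0 (by norm_num)]; nlinarith
    have h8 : μ / (256 * C) = μ / C / 256 := by field_simp
    have h9 : μ / (4096 * C) = μ / C / 4096 := by field_simp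
    rw [h8] at h5; rw [h9] at h6
    have hpos : 0 < μ / C := by positivity
    calc R^2 * ∑ k, w b k * (y k - Real.cos α)^2 ≤ R^2 * (288 * (Real.sin α ^2 * τ^2 + τ^3)) := by gcongr; exact wa2 b
      _ = 288 * (s^2 * τ^2 + R^2 * τ^3) := by rw [hsd]; ring
      _ ≤ ε * μ := by linarith
  · simp_rw [eabs]
    rw [← sum_sub_distrib]
    have : ∀ k, w true k * (R * |y k - Real.cos α|) - w false k * (R * |y k - Real.cos α|) = R * ((w true k - w false k) * |y k - Real.cos α|) := by intro k; ring
    simp_rw [this]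
    rw [← mul_sum]
    calc 1 / (68000 * C) * r ≤ s * τ / 1000 := by
          have : r / 68 ≤ C * s * τ := by
            calc r / 68 = (r / 2) * (1/34) := by ring
              _ ≤ (r / 2) * (C * L * τ) := by gcongr
              _ = (r * L / 2) * C * τ := by ring
              _ ≤ s * C * τ := by gcongr
              _ = _ := by ring
          rw [div_mul_eq_mul_div, div_le_div_iff₀ (by positivity) (by positivity)]
          nlinarith
      _ = R * (Real.sin α * τ / 1000) := by rw [hsd]; ring
      _ ≤ _ := by gcongr
  · intro K
    have hx : ∀ k, |-(R * y k)| ≤ R := by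
      intro k; rw [abs_neg, abs_mul, abs_of_pos hR]
      exact mul_le_of_le_one_right hR.le (y1 k)
    have hsum : ∑ k, |w true k - w false k| ≤ 2 := by
      calc ∑ k, |w true k - w false k| ≤ ∑ k, (w true k + w false k) := by
            apply sum_le_sum; intro k _
            rw [abs_le]; constructor <;> linarith [w0 true k, w0 false k]
        _ = 2 := by rw [sum_add_distrib, ws, ws]; norm_num
    have hm := mr_moment_chi (fun k => w true k - w false k) (fun k => -(R * y k)) h0 hR.le D hx hsum
      (by intro l hl
          have : ∀ k, (w true k - w false k) * (-(R * y k))^l = (-R)^l * ((w true k - w false k) * y k ^ l) := by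
            intro k; rw [← neg_mul, mul_pow]; ring
          simp_rw [this]
          rw [← mul_sum, wm l hl, mul_zero]) K
    have e : ∀ y', ∑ k, w true k * poissonPMF (μ0 - R * y k) y' - ∑ k, w false k * poissonPMF (μ0 - R * y k) y' = ∑ k, (w true k - w false k) * poissonPMF (μ0 + -(R * y k)) y' := by
      intro y'
      rw [← sum_sub_distrib]
      apply sum_congr rfl; intro k _
      rw [← sub_eq_add_neg]; ring
    simp_rw [e]
    apply le_of_sq_le_sq _ (Real.exp_pos _).le
    refine hm.trans ?_
    rw [hRL, ← Real.exp_nat_mul]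
    have h4 : (4:ℝ) ≤ Real.exp 2 := by
      have := Real.add_one_le_exp (1:ℝ)
      rw [show (2:ℝ) = 1 + 1 by norm_num, Real.exp_add]; nlinarith
    calc 4 * Real.exp (Real.exp 1 * (L/2) - D) ≤ Real.exp 2 * Real.exp (Real.exp 1 * (L/2) - D) := by gcongr
      _ = Real.exp (2 + (Real.exp 1 * (L/2) - D)) := by rw [← Real.exp_add]
      _ ≤ _ := by
        apply Real.exp_le_exp.mpr
        have := Real.exp_one_lt_d9
        push_cast
        nlinarith

lemma mr_prior (κ ε : ℝ) (hκ : 0 < κ) (hε : 0 < ε) : ∃ c : ℝ, 0 < c ∧ ∀ L μ : ℝ, 1 ≤ L → κ / L ≤ μ →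
    ∃ m w lam, MRPrior ε c L μ m w lam := by
  set g := Real.sqrt κ with hg
  have hg0 : 0 < g := Real.sqrt_pos.mpr hκ
  have hg2 : g^2 = κ := Real.sq_sqrt hκ.le
  set C := 13 + 100 / g + 3 / ε with hC
  have i1 : 0 < 100 / g := by positivity
  have i2 : 0 < 3 / ε := by positivity
  have hC13 : 13 ≤ C := by linarith
  have hCg : 100 ≤ C * g := by
    have : 100 / g * g = 100 := by field_simp
    nlinarith
  have hCε : 3 ≤ C * ε := by
    have : 3 / ε * ε = 3 := by field_simp
    nlinarith
  refine ⟨1 / (68000 * C), by positivity, fun L μ hL hμ => ?_⟩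
  have hL0 : 0 < L := by linarith
  have hμL : κ ≤ μ * L := by rwa [div_le_iff₀ hL0] at hμ
  have hμ0 : 0 < μ := lt_of_lt_of_le (by positivity) hμ
  have hμL' : g^2 ≤ μ * L := by rw [hg2]; exact hμL
  rcases le_or_gt μ (L/2) with h | h
  · set α := Real.arccos (1 - 2 * μ / L) with hα
    have q : 2 * μ / L ≤ 1 := by rw [div_le_one hL0]; linarith
    have q0 : 0 < 2 * μ / L := by positivity
    have hcos : Real.cos α = 1 - 2 * μ / L := Real.cos_arccos (by linarith) (by linarith)
    have hsin0 : 0 ≤ Real.sin α := Real.sin_nonneg_of_nonneg_of_le_pi (Real.arccos_nonneg _) (Real.arccos_le_pi _)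
    have hsin2 : Real.sin α ^ 2 = 4 * (μ / L) * (1 - μ / L) := by
      rw [Real.sin_sq, hcos]; ring
    have hs : (L / 2 * Real.sin α)^2 = μ * L * (1 - μ / L) := by
      rw [mul_pow, hsin2]; field_simp; ring
    have hd : μ / L ≤ 1/2 := by
      have : 2 * μ / L = 2 * (μ / L) := by ring
      linarith
    have hd0 : 0 < μ / L := by positivity
    have hp : 0 < μ * L := by positivity
    refine mr_prior_core (μ0 := L/2) (R := L/2) (α := α) hC13 hg0 hCg hε hCε hL hμL' (by positivity) (by positivity) le_rfl ?_ ?_ ?_ ?_ ?_ ?_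
    · rw [hcos]; field_simp; ring
    · field_simp
    · rw [hs]; nlinarith
    · rw [hs]; nlinarith
    · rw [hs]; nlinarith [mul_nonneg hp.le (by linarith : 0 ≤ 1 - μ / L)]
    · apply le_of_sq_le_sq _ hsin0
      rw [hsin2]
      calc (12.5 / (C * L))^2 ≤ (g / L)^2 := by
            gcongr ?_ ^ 2
            rw [div_le_div_iff₀ (by positivity) hL0]
            nlinarith
        _ = κ / L / L := by rw [div_pow, hg2]; field_simp
        _ ≤ μ / L := by gcongr
        _ ≤ 4 * (μ / L) * (1 - μ / L) := by nlinarith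
  · set R := Real.sqrt (μ * L / 2) with hR
    have hR2 : R^2 = μ * L / 2 := Real.sq_sqrt (by positivity)
    have hR0 : 0 < R := Real.sqrt_pos.mpr (by positivity)
    have hp : 0 < μ * L := by positivity
    refine mr_prior_core (μ0 := μ) (R := R) (α := Real.pi / 2) hC13 hg0 hCg hε hCε hL hμL' hμ0 hR0 ?_ ?_ ?_ ?_ ?_ ?_ ?_
    · apply le_of_sq_le_sq _ hμ0.le
      rw [hR2]; nlinarith
    · simp
    · rw [hR2]; field_simp
    · rw [Real.sin_pi_div_two, mul_one, hR2]; linarith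
    · rw [Real.sin_pi_div_two, mul_one, hR2]; linarith
    · rw [Real.sin_pi_div_two, mul_one]; nlinarith
    · rw [Real.sin_pi_div_two, div_le_one (by positivity)]; nlinarith
end MRL6

end PartL6

section PartL7

section MRL7
open Finset

/-- the sum of a product over a box factorizes -/
lemma mr_box {ι α : Type} [Fintype ι] [DecidableEq ι] (t : Finset α) (h : ι → α → ℝ) :
    ∑ x ∈ Fintype.piFinset (fun _ : ι => t), ∏ i, h i (x i) = ∏ i, ∑ a ∈ t, h i a :=
  (Finset.prod_univ_sum (fun _ => t) h).symm

lemma mr_prod_L1 {ι α : Type} [Fintype ι] [DecidableEq ι] (t : Finset α) (f g : ι → α → ℝ)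
    (hf0 : ∀ i a, 0 ≤ f i a) (hg0 : ∀ i a, 0 ≤ g i a) (hf : ∀ i, ∑ a ∈ t, f i a ≤ 1) (hg : ∀ i, ∑ a ∈ t, g i a ≤ 1) :
    ∑ x ∈ Fintype.piFinset (fun _ : ι => t), |∏ i, f i (x i) - ∏ i, g i (x i)| ≤ ∑ i, ∑ a ∈ t, |f i a - g i a| := by
  have key : ∀ s : Finset ι, ∑ x ∈ Fintype.piFinset (fun _ : ι => t), |∏ i, (if i ∈ s then f i else g i) (x i) - ∏ i, g i (x i)| ≤ ∑ i ∈ s, ∑ a ∈ t, |f i a - g i a| := by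
    intro s
    induction s using Finset.induction_on with
    | empty => simp
    | insert a s ha ih =>
      rw [sum_insert ha]
      set H : ι → α → ℝ := fun i => if i ∈ s then f i else g i with hH
      have hH0 : ∀ i x, 0 ≤ H i x := by
        intro i x; simp only [hH]; split_ifs; exacts [hf0 i x, hg0 i x]
      have hH1 : ∀ i, ∑ x ∈ t, H i x ≤ 1 := by
        intro i; simp only [hH]; split_ifs; exacts [hf i, hg i]
      set H' : ι → α → ℝ := fun i => if i ∈ insert a s then f i else g i with hH'
      have hHa : H a = g a := by simp [hH, ha]
      have hH'a : H' a = f a := by simp [hH']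
      have hne : ∀ i, i ≠ a → H' i = H i := by
        intro i hi; simp [hH, hH', hi]
      have hstep : ∑ x ∈ Fintype.piFinset (fun _ : ι => t), |∏ i, H' i (x i) - ∏ i, H i (x i)| ≤ ∑ y ∈ t, |f a y - g a y| := by
        set h : ι → α → ℝ := fun i => if i = a then (fun y => |f a y - g a y|) else H i with hh
        have e : ∀ x : ι → α, |∏ i, H' i (x i) - ∏ i, H i (x i)| = ∏ i, h i (x i) := by
          intro x
          rw [← mul_prod_erase univ _ (mem_univ a), ← mul_prod_erase univ (fun i => H i (x i)) (mem_univ a), ← mul_prod_erase univ (fun i => h i (x i)) (mem_univ a)]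
          have e1 : ∏ i ∈ univ.erase a, H' i (x i) = ∏ i ∈ univ.erase a, H i (x i) :=
            prod_congr rfl (fun i hi => by rw [hne i (ne_of_mem_erase hi)])
          have e2 : ∏ i ∈ univ.erase a, h i (x i) = ∏ i ∈ univ.erase a, H i (x i) :=
            prod_congr rfl (fun i hi => by simp only [hh]; rw [if_neg (ne_of_mem_erase hi)])
          rw [e1, e2, ← sub_mul, abs_mul, abs_of_nonneg (prod_nonneg (fun i _ => hH0 i (x i))), hHa, hH'a]
          simp [hh]
        rw [sum_congr rfl (fun x _ => e x), mr_box, ← mul_prod_erase univ _ (mem_univ a)]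
        have e3 : ∏ i ∈ univ.erase a, ∑ y ∈ t, h i y ≤ 1 := by
          apply prod_le_one
          · intro i hi; simp only [hh]; rw [if_neg (ne_of_mem_erase hi)]; exact sum_nonneg (fun y _ => hH0 i y)
          · intro i hi; simp only [hh]; rw [if_neg (ne_of_mem_erase hi)]; exact hH1 i
        have e4 : ∑ y ∈ t, h a y = ∑ y ∈ t, |f a y - g a y| := by simp [hh]
        rw [e4]
        exact mul_le_of_le_one_right (sum_nonneg (fun y _ => abs_nonneg _)) e3
      calc _ ≤ ∑ x ∈ Fintype.piFinset (fun _ : ι => t), (|∏ i, H' i (x i) - ∏ i, H i (x i)| + |∏ i, H i (x i) - ∏ i, g i (x i)|) :=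
            sum_le_sum (fun x _ => abs_sub_le _ _ _)
        _ ≤ _ := by rw [sum_add_distrib]; exact add_le_add hstep ih
  have := key univ
  simpa using this

/-- variance of a sum of independent centered variables -/
lemma mr_cheb {N m : ℕ} (w z : Fin m → ℝ) (hw : ∑ a, w a = 1) (hz : ∑ a, w a * z a = 0) :
    ∑ k : Fin N → Fin m, (∏ i, w (k i)) * (∑ i, z (k i)) ^ 2 = N * ∑ a, w a * z a ^ 2 := by
  have e : ∀ k : Fin N → Fin m, (∏ i, w (k i)) * (∑ i, z (k i)) ^ 2 = ∑ i, ∑ i', ∏ j, (w (k j) * ((if j = i then z (k j) else 1) * (if j = i' then z (k j) else 1))) := by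
    intro k
    rw [sq, sum_mul_sum, mul_sum]
    apply sum_congr rfl; intro i _
    rw [mul_sum]
    apply sum_congr rfl; intro i' _
    rw [prod_mul_distrib, prod_mul_distrib]
    simp
  simp_rw [e]
  rw [sum_comm]
  simp_rw [sum_comm (s := (univ : Finset (Fin N → Fin m)))]
  have e2 : ∀ i i' : Fin N, ∑ k : Fin N → Fin m, ∏ j, (w (k j) * ((if j = i then z (k j) else 1) * (if j = i' then z (k j) else 1))) = if i = i' then ∑ a, w a * z a ^ 2 else 0 := by
    intro i i'
    have := mr_box (univ : Finset (Fin m)) (fun (j : Fin N) a => w a * ((if j = i then z a else 1) * (if j = i' then z a else 1)))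
    rw [Fintype.piFinset_univ] at this
    rw [this]
    split_ifs with h
    · subst h
      rw [prod_eq_single i]
      · simp [sq]
      · intro j _ hj; simp [hj, hw]
      · simp
    · apply prod_eq_zero (mem_univ i)
      simp [h, hz]
  simp_rw [e2]
  simp

lemma mr_markov {N m : ℕ} (w z : Fin m → ℝ) (hw0 : ∀ a, 0 ≤ w a) (hw : ∑ a, w a = 1) (hz : ∑ a, w a * z a = 0) {s : ℝ} (hs : 0 < s) :
    ∑ k : Fin N → Fin m with s < |∑ i, z (k i)|, ∏ i, w (k i) ≤ N * (∑ a, w a * z a ^ 2) / s^2 := by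
  rw [le_div_iff₀ (by positivity), ← mr_cheb w z hw hz, sum_mul]
  calc _ ≤ ∑ k : Fin N → Fin m with s < |∑ i, z (k i)|, (∏ i, w (k i)) * (∑ i, z (k i)) ^ 2 := by
        apply sum_le_sum
        intro k hk
        rw [mem_filter] at hk
        have := prod_nonneg (fun i (_ : i ∈ univ) => hw0 (k i))
        rw [← sq_abs (∑ i, z (k i))]
        have := hk.2.le
        gcongr
    _ ≤ _ := by
        apply sum_le_sum_of_subset_of_nonneg (filter_subset _ _)
        intro k _ _
        have := prod_nonneg (fun i (_ : i ∈ univ) => hw0 (k i))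
        positivity

lemma mr_bayes {κ X : Type} [Fintype κ] (F : Finset X) (W : Bool → κ → ℝ) (P Q : κ → X → ℝ) (A : X → Prop) [DecidablePred A]
    (G : Bool → κ → Prop) [∀ b, DecidablePred (G b)]
    (hW0 : ∀ b k, 0 ≤ W b k) (hW1 : ∀ b, ∑ k, W b k = 1) (hQ0 : ∀ k x, 0 ≤ Q k x) (hQ1 : ∀ k, ∑ x ∈ F, Q k x ≤ 1)
    (hG : ∀ b, ∑ k with ¬ G b k, W b k ≤ 1/20)
    (hP0 : ∀ k, G false k → ∑ x ∈ F with A x, P k x ≤ 1/10) (hP1 : ∀ k, G true k → ∑ x ∈ F with ¬ A x, P k x ≤ 1/10)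
    (hPQ : ∀ b k, G b k → ∑ x ∈ F, |P k x - Q k x| ≤ 1/10)
    (hu : ∑ x ∈ F, |∑ k, W true k * Q k x - ∑ k, W false k * Q k x| ≤ 1/10)
    (hF : 9/10 ≤ ∑ x ∈ F, ∑ k, W false k * Q k x) : False := by
  classical
  have main : ∀ (b : Bool) (B : X → Prop) (_ : DecidablePred B), (∀ k, G b k → ∑ x ∈ F with B x, P k x ≤ 1/10) →
      ∑ x ∈ F with B x, ∑ k, W b k * Q k x ≤ 1/4 := by
    intro b B _ hB
    rw [sum_comm]
    simp_rw [← mul_sum]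
    have hle : ∀ k, ∑ x ∈ F with B x, Q k x ≤ 1 := fun k =>
      (sum_le_sum_of_subset_of_nonneg (filter_subset _ _) (fun x _ _ => hQ0 k x)).trans (hQ1 k)
    have hgood : ∀ k, G b k → ∑ x ∈ F with B x, Q k x ≤ 1/5 := by
      intro k hk
      have h1 : ∑ x ∈ F with B x, (Q k x - P k x) ≤ ∑ x ∈ F, |P k x - Q k x| := by
        calc _ ≤ ∑ x ∈ F with B x, |P k x - Q k x| := sum_le_sum (fun x _ => by rw [abs_sub_comm]; exact le_abs_self _)
          _ ≤ _ := sum_le_sum_of_subset_of_nonneg (filter_subset _ _) (fun x _ _ => abs_nonneg _)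
      rw [sum_sub_distrib] at h1
      linarith [hPQ b k hk, hB k hk]
    rw [← sum_filter_add_sum_filter_not univ (fun k => G b k)]
    have h1 : ∑ k with G b k, W b k * ∑ x ∈ F with B x, Q k x ≤ ∑ k with G b k, W b k * (1/5) := by
      apply sum_le_sum; intro k hk
      rw [mem_filter] at hk
      exact mul_le_mul_of_nonneg_left (hgood k hk.2) (hW0 b k)
    have h2 : ∑ k with ¬ G b k, W b k * ∑ x ∈ F with B x, Q k x ≤ ∑ k with ¬ G b k, W b k := by
      apply sum_le_sum; intro k _
      exact mul_le_of_le_one_right (hW0 b k) (hle k)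
    have h3 : ∑ k with G b k, W b k * (1/5) ≤ 1/5 := by
      rw [← sum_mul]
      have : ∑ k with G b k, W b k ≤ 1 := by
        rw [← hW1 b]; exact sum_le_sum_of_subset_of_nonneg (filter_subset _ _) (fun x _ _ => hW0 b x)
      linarith
    linarith [hG b]
  have m0 := main false A inferInstance hP0
  have m1 := main true (fun x => ¬ A x) inferInstance hP1
  have hd : ∑ x ∈ F with ¬ A x, (∑ k, W false k * Q k x - ∑ k, W true k * Q k x) ≤ 1/10 := by
    refine le_trans ?_ hu
    calc _ ≤ ∑ x ∈ F with ¬ A x, |∑ k, W true k * Q k x - ∑ k, W false k * Q k x| := sum_le_sum (fun x _ => by rw [abs_sub_comm]; exact le_abs_self _)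
      _ ≤ _ := sum_le_sum_of_subset_of_nonneg (filter_subset _ _) (fun x _ _ => abs_nonneg _)
  rw [sum_sub_distrib] at hd
  rw [← sum_filter_add_sum_filter_not F A] at hF
  linarith
end MRL7

end PartL7

section PartL8

section MRL8
open Finset

lemma mr_risk_fin {S : ℕ} (n : ℕ) (p : Fin S → ℝ) (L ρ : ℝ) (hρ : 0 ≤ ρ) (est : (Fin S → ℕ) → ℝ) (hp : ∀ x, 0 ≤ prodPMF n p x)
    (h : risk n p L est < ENNReal.ofReal ρ) (F : Finset (Fin S → ℕ)) :
    ∑ x ∈ F, prodPMF n p x * (est x - L)^2 ≤ ρ := by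
  unfold risk at h
  have h1 := (ENNReal.sum_le_tsum F).trans h.le
  rw [← ENNReal.ofReal_sum_of_nonneg (fun x _ => mul_nonneg (hp x) (sq_nonneg _))] at h1
  exact (ENNReal.ofReal_le_ofReal_iff hρ).mp h1

lemma mr_event {X : Type} (F : Finset X) (B : X → Prop) [DecidablePred B] (P e : X → ℝ) {ρ δ L : ℝ} (hδ : 0 < δ) (hρ : 10 * ρ ≤ δ^2)
    (hP : ∀ x, 0 ≤ P x) (h : ∑ x ∈ F, P x * (e x - L)^2 ≤ ρ) (hB : ∀ x, B x → δ ≤ |e x - L|) :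
    ∑ x ∈ F with B x, P x ≤ 1/10 := by
  have h1 : ∑ x ∈ F with B x, P x * δ^2 ≤ ρ := by
    refine le_trans ?_ h
    calc _ ≤ ∑ x ∈ F with B x, P x * (e x - L)^2 := by
          apply sum_le_sum; intro x hx
          rw [mem_filter] at hx
          have := hB x hx.2
          have := hP x
          rw [← sq_abs (e x - L)]
          gcongr
      _ ≤ _ := sum_le_sum_of_subset_of_nonneg (filter_subset _ _) (fun x _ _ => mul_nonneg (hP x) (sq_nonneg _))
  rw [← sum_mul] at h1
  have h2 : 0 < δ^2 := by positivity
  by_contra hc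
  push Not at hc
  nlinarith

lemma mr_var_le {m : ℕ} (w z : Fin m → ℝ) (hw : ∑ a, w a = 1) (c : ℝ) :
    ∑ a, w a * (z a - ∑ a', w a' * z a')^2 ≤ ∑ a, w a * (z a - c)^2 := by
  set e := ∑ a', w a' * z a' with he
  have h1 : ∀ d, ∑ a, w a * (z a - d)^2 = ∑ a, w a * z a ^2 - 2 * d * e + d^2 := by
    intro d
    have : ∀ a, w a * (z a - d)^2 = w a * z a^2 - 2 * d * (w a * z a) + d^2 * w a := by intro a; ring
    simp_rw [this]
    rw [sum_add_distrib, sum_sub_distrib, ← mul_sum, ← mul_sum, hw, ← he, mul_one]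
  rw [h1, h1]
  nlinarith [sq_nonneg (e - c)]

lemma mr_pois_part {l : ℝ} (hl : 0 ≤ l) (K : Finset ℕ) : ∑ y ∈ K, poissonPMF l y ≤ 1 :=
  sum_le_hasSum K (fun y _ => mr_pois_nonneg hl y) (mr_pois_sum l)

lemma mr_mix_hasSum {m : ℕ} (w lam : Fin m → ℝ) (hw : ∑ a, w a = 1) :
    HasSum (fun y => ∑ a, w a * poissonPMF (lam a) y) 1 := by
  have h := hasSum_sum (f := fun a y => w a * poissonPMF (lam a) y) (a := fun a => w a * 1) (s := univ)
    (fun a _ => (mr_pois_sum (lam a)).mul_left (w a))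
  simpa [hw] using h

/-- partial mixture product -/
lemma mr_mix_prod {N m : ℕ} (w lam : Fin m → ℝ) (b : ℝ) (x : Fin (N+1) → ℕ) :
    ∑ k : Fin N → Fin m, (∏ i, w (k i)) * ∏ i, poissonPMF ((Fin.cons b (fun i => lam (k i)) : Fin (N+1) → ℝ) i) (x i)
      = ∏ i, (Fin.cons (poissonPMF b) (fun _ y => ∑ a, w a * poissonPMF (lam a) y) : Fin (N+1) → ℕ → ℝ) i (x i) := by
  rw [Fin.prod_univ_succ]
  simp only [Fin.cons_zero, Fin.cons_succ]
  have h := mr_box (univ : Finset (Fin m)) (fun (i : Fin N) a => w a * poissonPMF (lam a) (x i.succ))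
  rw [Fintype.piFinset_univ] at h
  rw [← h, mul_sum]
  apply sum_congr rfl
  intro k _
  rw [Fin.prod_univ_succ]
  simp only [Fin.cons_zero, Fin.cons_succ]
  rw [prod_mul_distrib]; ring

lemma mr_box_large {N : ℕ} (h : Fin N → ℕ → ℝ) (hs : ∀ i, HasSum (h i) 1) :
    ∃ K : ℕ, 9/10 ≤ ∏ i, ∑ y ∈ range K, h i y := by
  have h1 : Filter.Tendsto (fun K : ℕ => ∏ i, ∑ y ∈ range K, h i y) Filter.atTop (nhds (∏ _i : Fin N, (1:ℝ))) :=
    tendsto_finsetProd _ (fun i _ => (hs i).tendsto_sum_nat)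
  rw [prod_const_one] at h1
  exact ((h1.eventually (lt_mem_nhds (by norm_num : (9/10:ℝ) < 1))).exists).imp (fun K hK => hK.le)

set_option maxHeartbeats 2000000 in
lemma mr_lower_core {N n m : ℕ} {c L μ : ℝ} (hN : 1 ≤ N) (hn : 1 ≤ n) (hL : 0 < L) (hc : 0 < c) (hμ : μ = n / (2 * N))
    {w : Bool → Fin m → ℝ} {lam : Fin m → ℝ} (pr : MRPrior (1/100000) c L μ m w lam)
    (hbig : 0.06 * L ≤ c^2 * N) (hsmall : N * Real.exp (-3 * L) ≤ 1/10) (est : (Fin (N+1) → ℕ) → ℝ) :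
    ∃ p : Fin (N+1) → ℝ, IsDist p ∧ ENNReal.ofReal (c^2 * N / (320 * n * L)) ≤
      risk n p (L1dist p (Fin.cons (1/2) (fun _ => 1 / (2 * (N:ℝ))))) est := by
  classical
  obtain ⟨wn, ln, ws, m1, a1, a2, sep, tv⟩ := pr
  by_contra hcon
  push Not at hcon
  have hNr : (1:ℝ) ≤ N := by exact_mod_cast hN
  have hnr : (1:ℝ) ≤ n := by exact_mod_cast hn
  have hμ0 : 0 < μ := by rw [hμ]; positivity
  have hNμ : N * μ = n / 2 := by rw [hμ]; field_simp
  set E : Bool → ℝ := fun b => ∑ k, w b k * |lam k - μ| with hE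
  set lh : ℝ := ∑ k, w false k * lam k with hlh
  have hlb : ∀ b, ∑ k, w b k * lam k = lh := by intro b; cases b; · rfl
                                                · exact m1
  have hlμ : |lh - μ| ≤ μ / 2 := by
    have : lh - μ = ∑ k, w false k * (lam k - μ) := by
      simp_rw [mul_sub]; rw [sum_sub_distrib, ← sum_mul, ws, one_mul]
    rw [this]
    refine (abs_sum_le_sum_abs _ _).trans (le_trans (le_of_eq ?_) (a1 false))
    apply sum_congr rfl; intro k _
    rw [abs_mul, abs_of_nonneg (wn false k)]
  set s := Real.sqrt (n / 2500) with hs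
  have hs2 : s^2 = n / 2500 := Real.sq_sqrt (by positivity)
  have hs0 : 0 < s := Real.sqrt_pos.mpr (by positivity)
  have hsn : s ≤ n / 4 := by
    apply le_of_sq_le_sq _ (by positivity)
    rw [hs2]; nlinarith
  set bb : ℝ := n - N * lh with hbb
  have hbb4 : (n:ℝ) / 4 ≤ bb := by
    have := (abs_le.mp hlμ).2
    have h2 : (N:ℝ) * lh ≤ N * (3/2 * μ) := by gcongr; linarith
    rw [hbb]; linarith
  have hbb0 : 0 < bb := by linarith
  set Δ := N * (E true - E false) with hΔ
  have hsep0 : 0 ≤ E true - E false := le_trans (by positivity) sep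
  have hΔ2 : c^2 * N * n / (2 * L) ≤ Δ^2 := by
    have e : (N * (c * Real.sqrt (μ / L)))^2 = c^2 * N * n / (2 * L) := by
      rw [mul_pow, mul_pow, Real.sq_sqrt (by positivity), hμ]; field_simp
    rw [← e, hΔ]
    gcongr
  have hΔ0 : 0 ≤ Δ := by rw [hΔ]; positivity
  have h8s : 8 * s ≤ Δ := by
    apply le_of_sq_le_sq _ hΔ0
    refine le_trans ?_ hΔ2
    rw [mul_pow, hs2, le_div_iff₀ (by positivity)]
    nlinarith
  have hΔp : 0 < Δ := by linarith
  set δ := Δ / (4 * n) with hδ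
  have hδ0 : 0 < δ := by positivity
  set ρ := c^2 * N / (320 * n * L) with hρ
  have hρ0 : 0 ≤ ρ := by positivity
  have hρδ : 10 * ρ ≤ δ^2 := by
    have e : 10 * ρ = (c^2 * N * n / (2 * L)) / (4 * n)^2 := by rw [hρ]; field_simp; norm_num
    rw [e, hδ, div_pow]
    gcongr
  set T : ℝ := (N * (E true + E false) / 2 + N * |lh - μ|) / n with hT
  set lamc : (Fin N → Fin m) → Fin (N+1) → ℝ := fun k => Fin.cons (n - ∑ i, lam (k i)) (fun i => lam (k i)) with hlamc
  set lamq : (Fin N → Fin m) → Fin (N+1) → ℝ := fun k => Fin.cons bb (fun i => lam (k i)) with hlamq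
  set p : (Fin N → Fin m) → Fin (N+1) → ℝ := fun k i => lamc k i / n with hp
  set G : Bool → (Fin N → Fin m) → Prop := fun b k => |∑ i, (lam (k i) - lh)| ≤ s ∧ |∑ i, (|lam (k i) - μ| - E b)| ≤ s with hG
  set W : Bool → (Fin N → Fin m) → ℝ := fun b k => ∏ i, w b (k i) with hW
  have hsumc : ∀ k : Fin N → Fin m, ∑ i, (lam (k i) - lh) = ∑ i, lam (k i) - N * lh := by
    intro k; rw [sum_sub_distrib]; simp
  have hW0 : ∀ b k, 0 ≤ W b k := fun b k => prod_nonneg (fun i _ => wn b (k i))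
  have hc0 : ∀ k : Fin N → Fin m, ∀ b, G b k → 0 ≤ n - ∑ i, lam (k i) := by
    intro k b hk
    have h1 := (abs_le.mp hk.1).2
    rw [hsumc] at h1
    linarith
  have hlc0 : ∀ k : Fin N → Fin m, ∀ b, G b k → ∀ i, 0 ≤ lamc k i := by
    intro k b hk i
    refine Fin.cases ?_ (fun i => ?_) i
    · exact hc0 k b hk
    · exact ln (k i)
  have hlq0 : ∀ k : Fin N → Fin m, ∀ i, 0 ≤ lamq k i := by
    intro k i
    refine Fin.cases ?_ (fun i => ?_) i
    · exact hbb0.le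
    · exact ln (k i)
  have hpd : ∀ k : Fin N → Fin m, ∀ b, G b k → IsDist (p k) := by
    intro k b hk
    constructor
    · intro i; exact div_nonneg (hlc0 k b hk i) (by positivity)
    · simp only [hp]
      rw [← sum_div, Fin.sum_univ_succ]
      simp only [hlamc, Fin.cons_zero, Fin.cons_succ]
      rw [sub_add_cancel]; field_simp
  have hprod : ∀ k : Fin N → Fin m, ∀ x, prodPMF n (p k) x = ∏ i, poissonPMF (lamc k i) (x i) := by
    intro k x
    unfold prodPMF
    apply prod_congr rfl; intro i _
    simp only [hp]
    congr 1; field_simp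
  have hL1 : ∀ k : Fin N → Fin m, L1dist (p k) (Fin.cons (1/2) (fun _ => 1 / (2 * (N:ℝ)))) = (∑ i, |lam (k i) - μ| + |∑ i, (lam (k i) - lh) + N * (lh - μ)|) / n := by
    intro k
    unfold L1dist
    rw [Fin.sum_univ_succ]
    simp only [hp, hlamc, Fin.cons_zero, Fin.cons_succ]
    have e1 : ((n:ℝ) - ∑ i, lam (k i)) / n - 1/2 = -((∑ i, (lam (k i) - lh) + N * (lh - μ)) / n) := by
      rw [hsumc, mul_sub, hNμ]; field_simp; ring
    have e2 : ∀ i : Fin N, |lam (k i) / n - 1 / (2 * (N:ℝ))| = |lam (k i) - μ| / n := by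
      intro i
      have : lam (k i) / n - 1 / (2 * (N:ℝ)) = (lam (k i) - μ) / n := by rw [hμ]; field_simp
      rw [this, abs_div, abs_of_pos (by linarith : (0:ℝ) < n)]
    simp_rw [e2]
    rw [e1, abs_neg, abs_div, abs_of_pos (by linarith : (0:ℝ) < n), ← sum_div]; ring
  have hdev : ∀ k : Fin N → Fin m, ∀ b, G b k → |(∑ i, |lam (k i) - μ| + |∑ i, (lam (k i) - lh) + N * (lh - μ)|) - (N * E b + N * |lh - μ|)| ≤ 2 * s := by
    intro k b hk
    obtain ⟨h1, h2⟩ := hk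
    rw [sum_sub_distrib, sum_const, card_univ, Fintype.card_fin, nsmul_eq_mul] at h2
    have h3 : |(|∑ i, (lam (k i) - lh) + N * (lh - μ)| - |N * (lh - μ)|)| ≤ s := by
      refine (abs_abs_sub_abs_le_abs_sub _ _).trans ?_
      rwa [add_sub_cancel_right]
    rw [abs_mul, abs_of_nonneg (by positivity : (0:ℝ) ≤ N)] at h3
    rw [abs_le] at *
    constructor <;> linarith [h2.1, h2.2, h3.1, h3.2]
  -- the box
  set Fb : Bool → Fin (N+1) → ℕ → ℝ := fun b => Fin.cons (poissonPMF bb) (fun _ y => ∑ a, w b a * poissonPMF (lam a) y) with hFb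
  have hFbs : ∀ b i, HasSum (Fb b i) 1 := by
    intro b i
    refine Fin.cases ?_ (fun i => ?_) i
    · exact mr_pois_sum bb
    · exact mr_mix_hasSum (w b) lam (ws b)
  have hFb0 : ∀ b i y, 0 ≤ Fb b i y := by
    intro b i y
    refine Fin.cases ?_ (fun i => ?_) i
    · exact mr_pois_nonneg hbb0.le y
    · have : 0 ≤ ∑ a, w b a * poissonPMF (lam a) y := sum_nonneg (fun a _ => mul_nonneg (wn b a) (mr_pois_nonneg (ln a) y))
      exact this
  obtain ⟨K, hK⟩ := mr_box_large (Fb false) (hFbs false)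
  have hmix : ∀ (b : Bool) (x : Fin (N+1) → ℕ), ∑ k, W b k * ∏ i, poissonPMF (lamq k i) (x i) = ∏ i, Fb b i (x i) := by
    intro b x
    exact mr_mix_prod (w b) lam bb x
  refine mr_bayes (Fintype.piFinset (fun _ : Fin (N+1) => range K)) W (fun k => prodPMF n (p k)) (fun k x => ∏ i, poissonPMF (lamq k i) (x i))
    (fun x => T ≤ est x) G hW0 ?_ ?_ ?_ ?_ ?_ ?_ ?_ ?_ ?_
  · intro b
    have h := mr_box (univ : Finset (Fin m)) (fun (_ : Fin N) a => w b a)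
    rw [Fintype.piFinset_univ] at h
    simp only [hW]
    rw [h]; simp [ws]
  · intro k x
    exact prod_nonneg (fun i _ => mr_pois_nonneg (hlq0 k i) _)
  · intro k
    rw [mr_box (range K) (fun i => poissonPMF (lamq k i))]
    exact prod_le_one (fun i _ => sum_nonneg (fun y _ => mr_pois_nonneg (hlq0 k i) y)) (fun i _ => mr_pois_part (hlq0 k i) _)
  · intro b
    have z1 : ∑ a, w b a * (lam a - lh) = 0 := by
      simp_rw [mul_sub]; rw [sum_sub_distrib, ← sum_mul, ws, one_mul, hlb, sub_self]
    have z2 : ∑ a, w b a * (|lam a - μ| - E b) = 0 := by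
      simp_rw [mul_sub]; rw [sum_sub_distrib, ← sum_mul, ws, one_mul, sub_self]
    have k1 := mr_markov (N := N) (w b) (fun a => lam a - lh) (wn b) (ws b) z1 hs0
    have k2 := mr_markov (N := N) (w b) (fun a => |lam a - μ| - E b) (wn b) (ws b) z2 hs0
    have v1 : ∑ a, w b a * (lam a - lh)^2 ≤ 1/100000 * μ := by
      have := mr_var_le (w b) lam (ws b) μ
      rw [hlb] at this
      exact this.trans (a2 b)
    have v2 : ∑ a, w b a * (|lam a - μ| - E b)^2 ≤ 1/100000 * μ := by
      have := mr_var_le (w b) (fun a => |lam a - μ|) (ws b) 0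
      simp only [sub_zero, sq_abs] at this
      exact this.trans (a2 b)
    have q : ∀ v, v ≤ 1/100000 * μ → N * v / s^2 ≤ 1/80 := by
      intro v hv
      rw [hs2, div_le_iff₀ (by positivity)]
      have : N * v ≤ N * (1/100000 * μ) := by gcongr
      linarith
    have k1' := k1.trans (q _ v1)
    have k2' := k2.trans (q _ v2)
    have hsub : (univ.filter (fun k => ¬ G b k)) ⊆ (univ.filter (fun k : Fin N → Fin m => s < |∑ i, (lam (k i) - lh)|)) ∪ (univ.filter (fun k : Fin N → Fin m => s < |∑ i, (|lam (k i) - μ| - E b)|)) := by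
      intro k hk
      simp only [hG, mem_filter, mem_univ, true_and, mem_union, not_and_or, not_le] at hk ⊢
      exact hk
    have k3 : ∑ k with ¬ G b k, W b k ≤ ∑ k : Fin N → Fin m with s < |∑ i, (lam (k i) - lh)|, W b k + ∑ k : Fin N → Fin m with s < |∑ i, (|lam (k i) - μ| - E b)|, W b k := by
      rw [← sum_union_inter]
      have : 0 ≤ ∑ k ∈ (univ.filter (fun k : Fin N → Fin m => s < |∑ i, (lam (k i) - lh)|)) ∩ (univ.filter (fun k : Fin N → Fin m => s < |∑ i, (|lam (k i) - μ| - E b)|)), W b k := sum_nonneg (fun k _ => hW0 b k)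
      have h2 := sum_le_sum_of_subset_of_nonneg hsub (fun k _ _ => hW0 b k)
      linarith
    simp only [hW] at k3 ⊢
    linarith
  · intro k hk
    have hnn : ∀ x, 0 ≤ prodPMF n (p k) x := by
      intro x; rw [hprod]; exact prod_nonneg (fun i _ => mr_pois_nonneg (hlc0 k _ hk i) _)
    have hr := mr_risk_fin n (p k) _ ρ hρ0 est hnn (hcon (p k) (hpd k _ hk)) (Fintype.piFinset (fun _ : Fin (N+1) => range K))
    refine mr_event _ _ _ est hδ0 hρδ hnn hr (fun x hx => ?_)
    refine le_trans ?_ (le_abs_self _)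
    have hd := (abs_le.mp (hdev k _ hk)).2
    rw [hL1]
    have : (∑ i, |lam (k i) - μ| + |∑ i, (lam (k i) - lh) + N * (lh - μ)|) / n ≤ T - δ := by
      have e : T - δ = (N * (E true + E false) / 2 + N * |lh - μ| - Δ / 4) / n := by rw [hT, hδ]; field_simp
      rw [e]
      gcongr
      rw [hΔ] at h8s ⊢
      linarith
    linarith
  · intro k hk
    have hnn : ∀ x, 0 ≤ prodPMF n (p k) x := by
      intro x; rw [hprod]; exact prod_nonneg (fun i _ => mr_pois_nonneg (hlc0 k _ hk i) _)
    have hr := mr_risk_fin n (p k) _ ρ hρ0 est hnn (hcon (p k) (hpd k _ hk)) (Fintype.piFinset (fun _ : Fin (N+1) => range K))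
    refine mr_event _ _ _ est hδ0 hρδ hnn hr (fun x hx => ?_)
    refine le_trans ?_ (neg_le_abs _)
    have hd := (abs_le.mp (hdev k _ hk)).1
    rw [hL1]
    have : T + δ ≤ (∑ i, |lam (k i) - μ| + |∑ i, (lam (k i) - lh) + N * (lh - μ)|) / n := by
      have e : T + δ = (N * (E true + E false) / 2 + N * |lh - μ| + Δ / 4) / n := by rw [hT, hδ]; field_simp
      rw [e]
      refine div_le_div_of_nonneg_right ?_ (by positivity)
      rw [hΔ] at h8s ⊢
      linarith
    push Not at hx
    linarith
  · intro b k hk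
    simp_rw [hprod]
    have h := mr_prod_L1 (range K) (fun i => poissonPMF (lamc k i)) (fun i => poissonPMF (lamq k i)) (fun i y => mr_pois_nonneg (hlc0 k b hk i) y) (fun i y => mr_pois_nonneg (hlq0 k i) y)
      (fun i => mr_pois_part (hlc0 k b hk i) _) (fun i => mr_pois_part (hlq0 k i) _)
    refine h.trans ?_
    rw [Fin.sum_univ_succ]
    simp only [hlamc, hlamq, Fin.cons_zero, Fin.cons_succ, sub_self, abs_zero, sum_const_zero, add_zero]
    apply le_of_sq_le_sq _ (by norm_num)
    refine (mr_tv_pois hbb0 (range K)).trans ?_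
    have hx : ((n:ℝ) - ∑ i, lam (k i) - bb)^2 / bb ≤ 0.0016 := by
      have e : (n:ℝ) - ∑ i, lam (k i) - bb = -(∑ i, (lam (k i) - lh)) := by rw [hsumc, hbb]; ring
      rw [e, neg_sq, ← sq_abs, div_le_iff₀ hbb0]
      have := hk.1
      have h2 : |∑ i, (lam (k i) - lh)|^2 ≤ s^2 := by gcongr
      rw [hs2] at h2
      linarith
    have h3 := Real.exp_le_exp.mpr hx
    have h4 := Real.add_one_le_exp (-0.0016:ℝ)
    have h5 : Real.exp 0.0016 * Real.exp (-0.0016) = 1 := by rw [← Real.exp_add]; norm_num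
    have h6 : Real.exp 0.0016 * (-0.0016 + 1) ≤ 1 := (mul_le_mul_of_nonneg_left h4 (Real.exp_pos _).le).trans h5.le
    linarith
  · simp_rw [hmix]
    have h := mr_prod_L1 (range K) (Fb true) (Fb false) (hFb0 true) (hFb0 false)
      (fun i => sum_le_hasSum _ (fun y _ => hFb0 true i y) (hFbs true i)) (fun i => sum_le_hasSum _ (fun y _ => hFb0 false i y) (hFbs false i))
    refine h.trans ?_
    rw [Fin.sum_univ_succ]
    simp only [hFb, Fin.cons_zero, Fin.cons_succ, sub_self, abs_zero, sum_const_zero, zero_add, sum_const, card_univ, Fintype.card_fin, nsmul_eq_mul]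
    refine le_trans ?_ hsmall
    gcongr
    exact tv (range K)
  · simp_rw [hmix]
    rw [mr_box (range K) (Fb false)]
    exact hK
end MRL8

end PartL8

section PartL9

section MRL9
open Finset

lemma mr_lower (A c₀ : ℝ) (hA : 1 ≤ A) (hc₀ : 0 < c₀) :
    ∃ c : ℝ, 0 < c ∧ ∃ N₀ : ℕ, ∀ S n : ℕ, 2 ≤ S → N₀ ≤ n → (n : ℝ) ≤ (S : ℝ) ^ A → c₀ * S / Real.log S ≤ n →
      ∃ q : Fin S → ℝ, IsDist q ∧ ∀ est : (Fin S → ℕ) → ℝ, ∃ p, IsDist p ∧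
        ENNReal.ofReal (c * S / (n * Real.log n)) ≤ risk n p (L1dist p q) est := by
  obtain ⟨c1, hc1, hpr⟩ := mr_prior (c₀ / 6) (1/100000) (by positivity) (by norm_num)
  set B := (0.24 * A / c1^2)^2 with hB
  have hB0 : 0 ≤ B := by positivity
  refine ⟨c1^2/640, by positivity, 3 + ⌈40 / c₀^2⌉₊ + ⌈B ^ A⌉₊ + 1, fun S n hS hn hnS hnc => ?_⟩
  obtain ⟨N, rfl⟩ : ∃ N, S = N + 1 := ⟨S - 1, by omega⟩
  have hN : 1 ≤ N := by omega
  have hNr : (1:ℝ) ≤ N := by exact_mod_cast hN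
  have hnr : (3:ℝ) + 40 / c₀^2 + B^A + 1 ≤ n := by
    have h1 : ((3 + ⌈40 / c₀^2⌉₊ + ⌈B ^ A⌉₊ + 1 : ℕ):ℝ) ≤ n := by exact_mod_cast hn
    push_cast at h1
    linarith [Nat.le_ceil (40 / c₀^2), Nat.le_ceil (B^A)]
  have hBA : 0 ≤ B^A := Real.rpow_nonneg hB0 A
  have hc2 : 0 < 40 / c₀^2 := by positivity
  have hn3 : (3:ℝ) ≤ n := by linarith
  have hn0 : (0:ℝ) < n := by linarith
  set L := Real.log n with hL
  have hL1 : 1 ≤ L := by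
    rw [hL, Real.le_log_iff_exp_le hn0]; linarith [Real.exp_one_lt_d9]
  set s : ℝ := ((N+1 : ℕ):ℝ) with hs
  have hsN : s = N + 1 := by rw [hs]; push_cast; ring
  have hs2 : 2 ≤ s := by linarith
  have hlogs : 0 < Real.log s := Real.log_pos (by linarith)
  set t := Real.sqrt s with ht
  have ht0 : 0 < t := Real.sqrt_pos.mpr (by linarith)
  have ht2 : t^2 = s := Real.sq_sqrt (by linarith)
  have hlogt : Real.log s ≤ 2 * t := by
    rw [← ht2, Real.log_pow]
    have := Real.log_le_sub_one_of_pos ht0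
    push_cast; linarith
  rw [div_le_iff₀ hlogs] at hnc
  have hct : c₀ * t ≤ 2 * n := by
    have : (c₀ * t) * t ≤ (2 * n) * t := by
      calc (c₀ * t) * t = c₀ * s := by rw [← ht2]; ring
        _ ≤ n * Real.log s := hnc
        _ ≤ n * (2 * t) := by gcongr
        _ = _ := by ring
    exact le_of_mul_le_mul_right this ht0
  have hcs : c₀^2 * s ≤ 4 * (n:ℝ)^2 := by
    rw [← ht2]
    have : (c₀ * t)^2 ≤ (2 * n)^2 := by gcongr
    linarith [this, (by ring : (c₀ * t)^2 = c₀^2 * t^2), (by ring : (2 * (n:ℝ))^2 = 4 * (n:ℝ)^2)]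
  have hcn : 40 ≤ c₀^2 * n := by
    have : 40 / c₀^2 ≤ n := by linarith
    rw [div_le_iff₀ (by positivity)] at this; linarith
  have hs10 : 10 * s ≤ (n:ℝ)^3 := by
    have h1 : c₀^2 * (10 * s) ≤ c₀^2 * (n:ℝ)^3 := by
      have : 40 * (n:ℝ)^2 ≤ c₀^2 * n * (n:ℝ)^2 := by gcongr
      linarith [(by ring : c₀^2 * n * (n:ℝ)^2 = c₀^2 * (n:ℝ)^3)]
    exact le_of_mul_le_mul_left h1 (by positivity)
  have hlog3 : Real.log s ≤ 3 * L := by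
    have : Real.log s ≤ Real.log ((n:ℝ)^3) := Real.log_le_log (by linarith) (by linarith)
    rwa [Real.log_pow] at this
  have hsB : B ≤ s := by
    by_contra h
    push Not at h
    have : s^A ≤ B^A := Real.rpow_le_rpow (by linarith) h.le (by linarith)
    linarith
  have htB : 0.24 * A / c1^2 ≤ t := by
    apply le_of_sq_le_sq _ ht0.le
    rw [ht2]; exact hsB
  have hLA : L ≤ A * Real.log s := by
    have := Real.log_le_log hn0 hnS
    rwa [Real.log_rpow (by linarith)] at this
  have hbig : 0.06 * L ≤ c1^2 * N := by
    rw [div_le_iff₀ (by positivity)] at htB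
    have h1 : A * Real.log s ≤ A * (2 * t) := by gcongr
    have h2 : 0.24 * A * t ≤ t * c1^2 * t := by gcongr
    have h3 : t * c1^2 * t = c1^2 * s := by rw [← ht2]; ring
    have h4 : c1^2 * s ≤ c1^2 * (2 * N) := by gcongr; linarith
    linarith
  have hexp : Real.exp (-3 * L) = 1 / (n:ℝ)^3 := by
    rw [show -3 * L = -(((3:ℕ):ℝ) * L) by push_cast; ring, Real.exp_neg, Real.exp_nat_mul, hL, Real.exp_log hn0, one_div]
  have hsmall : N * Real.exp (-3 * L) ≤ 1/10 := by
    rw [hexp, mul_one_div, div_le_div_iff₀ (by positivity) (by norm_num)]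
    linarith
  obtain ⟨m, w, lam, hP⟩ := hpr L (n / (2 * N)) hL1 (by
    rw [div_le_div_iff₀ (by linarith) (by positivity)]
    have h1 : (n:ℝ) * Real.log s ≤ n * (3 * L) := by gcongr
    have h2 : c₀ * N ≤ c₀ * s := by gcongr; linarith
    linarith)
  refine ⟨Fin.cons (1/2) (fun _ => 1 / (2 * (N:ℝ))), ⟨?_, ?_⟩, fun est => ?_⟩
  · intro i
    refine Fin.cases ?_ (fun i => ?_) i
    · simp
    · simp
  · rw [Fin.sum_univ_succ]
    simp only [Fin.cons_zero, Fin.cons_succ, sum_const, card_univ, Fintype.card_fin, nsmul_eq_mul]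
    field_simp; norm_num
  · obtain ⟨p, hp, hr⟩ := mr_lower_core hN (by exact_mod_cast (by linarith : (1:ℝ) ≤ n)) (by linarith) hc1 rfl hP hbig hsmall est
    refine ⟨p, hp, le_trans (ENNReal.ofReal_le_ofReal ?_) hr⟩
    have hL0 : 0 < L := by linarith
    calc c1^2/640 * s / (n * L) ≤ c1^2/640 * (2 * N) / (n * L) := by gcongr; linarith
      _ = c1^2 * N / (320 * n * L) := by field_simp; norm_num
end MRL9

end PartL9

theorem minimax_rate_knownQ (A c₀ : ℝ) (hA : 1 ≤ A) (hc₀ : 0 < c₀) :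
    ∃ c C : ℝ, ∃ N₀ : ℕ, 0 < c ∧ c ≤ C ∧
      ∀ S n : ℕ, 2 ≤ S → N₀ ≤ n → (n : ℝ) ≤ (S : ℝ) ^ A → c₀ * S / Real.log S ≤ n →
        ENNReal.ofReal (c * S / (n * Real.log n)) ≤
          (⨆ q : {q : Fin S → ℝ // IsDist q}, ⨅ est : (Fin S → ℕ) → ℝ,
            ⨆ p : {p : Fin S → ℝ // IsDist p}, risk n p.1 (L1dist p.1 q.1) est) ∧
        (⨆ q : {q : Fin S → ℝ // IsDist q}, ⨅ est : (Fin S → ℕ) → ℝ,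
            ⨆ p : {p : Fin S → ℝ // IsDist p}, risk n p.1 (L1dist p.1 q.1) est) ≤
          ENNReal.ofReal (C * S / (n * Real.log n)) := by
  obtain ⟨c, hc, N1, hlow⟩ := mr_lower A c₀ hA hc₀
  obtain ⟨C, hC, N2, hup⟩ := mr_upper A hA
  refine ⟨c, max c C, max N1 N2, hc, le_max_left _ _, fun S n hS hn hnS hnc => ⟨?_, ?_⟩⟩
  · obtain ⟨q, hq, h⟩ := hlow S n hS (le_trans (le_max_left _ _) hn) hnS hnc
    refine le_trans ?_ (le_iSup _ (⟨q, hq⟩ : {q : Fin S → ℝ // IsDist q}))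
    refine le_iInf (fun est => ?_)
    obtain ⟨p, hp, hr⟩ := h est
    exact le_trans hr (le_iSup (fun p : {p : Fin S → ℝ // IsDist p} => risk n p.1 (L1dist p.1 q) est) ⟨p, hp⟩)
  · refine iSup_le (fun q => ?_)
    obtain ⟨est, h⟩ := hup S n (le_trans (le_max_right _ _) hn) hnS q.1 q.2
    refine iInf_le_of_le est (iSup_le (fun p => ?_))
    refine (h p.1 p.2).trans (ENNReal.ofReal_le_ofReal ?_)
    have : 0 ≤ Real.log n := Real.log_natCast_nonneg n
    gcongr
    exact le_max_right _ _
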